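/- Let n ≥ 1 and let H₁, …, H_s be closed connected subgroups of the unitary group U(n) = Matrix.unitaryGroup (Fin n) ℂ such that: (i) each Hᵢ acts irreducibly on ℂⁿ, i.e. the only ℂ-subspaces W of Fin n → ℂ satisfying g·v ∈ W for all g ∈ Hᵢ and v ∈ W are W = 0 and W = ℂⁿ; and (ii) for all i ≠ j, Hᵢ and Hⱼ are not conjugate in U(n), i.e. there is no g ∈ U(n) with g Hᵢ g⁻¹ = Hⱼ. Then the dimension data of H₁, …, H_s are linearly independent: if c₁, …, c_s are real numbers such that for every m ≥ 0 and every continuous group homomorphism ρ : U(n) → GL(m, ℂ) one has Σᵢ cᵢ · dim_ℂ {v ∈ ℂᵐ : ρ(h)·v = v for all h ∈ Hᵢ} = 0, then c₁ = ⋯ = c_s = 0. -/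

import Mathlib

/-!
The proof replaces each group `Hᵢ` by its complexified Lie algebra `gᵢ` and compares Weyl
denominators, in the spirit of Larsen and Pink.

*Lie algebras.* By the closed subgroup theorem a closed connected `Hᵢ` is generated by the
exponentials of the skew-Hermitian elements of `gᵢ` (`lieC_gen`). After conjugation by a unitary
matrix the diagonal Hermitian elements of `gᵢ` form a maximal commuting space `tᵢ ⊆ ℝⁿ` of
Hermitian elements (`exists_std`). The nonzero weights of `tᵢ` on `gᵢ` form a reduced root system
(`isRootSys_roots`), and since the reflection in a root is conjugation by an element of `exp gᵢ`,
it is induced by a permutation of the `n` coordinates (`exists_perm`).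

*Dimensions of invariants.* Let `dcoef Φ x` be the coefficient of `e^x` in `∏_{α ∈ Φ} (1 - e^α)`.
The Weyl integration formula for invariants is obtained algebraically (`Rep.trace_formula`): by
the identity `dcoef_laplace`, the trace weighted by `dcoef` annihilates the image of the Casimir
operator, so only the kernel of the Casimir operator, which consists of the invariants,
contributes. It is applied to the images of idempotents in tensor powers of `ℂⁿ` that commute
with `U(n)`, twisted by powers of the determinant. Suitable combinations of permutation operators
isolate the orbit of one integral vector `m` under coordinate permutations, and a linear relation
`∑ cᵢ dim = 0` becomes `∑_σ ∑ᵢ cᵢ / dcoef Φᵢ 0 * dcoef Φᵢ (-pr_{tᵢ} (σ m)) = 0` (`Rel.sum_perm`).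

*Isolating one group.* Among the groups with `cᵢ ≠ 0` take those with `dim tᵢ` minimal, and among
these one whose sum `v` of positive roots is longest. Let `m` be a generic integral vector
projecting to `v` in `tᵢ` (`exists_generic_lift`). A nonzero term for `(j, σ)` forces
`tⱼ = σ tᵢ`, and `σ v` is up to sign a sum of positive roots of `gⱼ`. If this implies that `gᵢ`
and `gⱼ` are unitarily conjugate, then `j = i`, all the nonzero terms have the same sign, and the
term with `σ = 1` is nonzero: a contradiction (`Rel.eq_zero`).

*Conjugacy.* It remains to show that two irreducible Lie algebras with the same torus `t` and the
same sum `v` of positive roots are unitarily conjugate (`conj_of_sum_eq`). Their common roots that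
stay common under all coordinate permutations preserving `t` form a root system `Ψ` of full rank:
a simple root not orthogonal to the highest weight is a root of every irreducible Lie algebra with
torus `t` (`mem_roots_of_highest`). The reflection in a simple root outside `Ψ` swaps two simple
roots of `Ψ`, and `v` determines which simple roots of `Ψ` remain simple; hence a coordinate
permutation fixing `v` takes one set of simple roots to the other (`exists_simple_eq`). Finally,
irreducible Lie algebras with the same torus and the same simple roots are conjugate: the subspace
of `ℂⁿ × ℂⁿ` generated by the diagonal highest weight vector is the graph of an intertwining
isomorphism (`conj_of_simple_eq`).
-/

/-- For a subgroup `H` of `U(n)` and a (finite-dimensional) representation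
`ρ : U(n) →* GL(m, ℂ)`, the subspace of `ℂᵐ` of vectors fixed by `ρ(h)` for all
`h ∈ H`. -/
noncomputable def invariantSubspace {n m : ℕ} (H : Subgroup (Matrix.unitaryGroup (Fin n) ℂ))
    (ρ : Matrix.unitaryGroup (Fin n) ℂ →* Matrix.GeneralLinearGroup (Fin m) ℂ) :
    Submodule ℂ (Fin m → ℂ) where
  carrier := {v | ∀ h ∈ H, Matrix.mulVec ((ρ h : Matrix (Fin m) (Fin m) ℂ)) v = v}
  add_mem' := fun ha hb h hh => by rw [Matrix.mulVec_add, ha h hh, hb h hh]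
  zero_mem' := fun h hh => by rw [Matrix.mulVec_zero]
  smul_mem' := fun c v hv h hh => by rw [Matrix.mulVec_smul, hv h hh]

/-! ### Abstract root systems -/

namespace DimDatum
open scoped InnerProductSpace
open Finset
variable {V : Type*} [NormedAddCommGroup V] [InnerProductSpace ℝ V]

/-- The reflection of a real inner product space in the hyperplane orthogonal to `α`
(the identity if `α = 0`). -/
noncomputable def refl (α x : V) : V := x - (2 * ⟪x, α⟫_ℝ / ⟪α, α⟫_ℝ) • α

/-- The properties of the set of roots that are used: a reduced root system, with
integrality replaced by the closure property `sub_mem`. -/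
structure IsRootSys (Φ : Finset V) : Prop where
  zero_notMem : (0 : V) ∉ Φ
  neg_mem : ∀ α ∈ Φ, -α ∈ Φ
  refl_mem : ∀ α ∈ Φ, ∀ β ∈ Φ, refl α β ∈ Φ
  sub_mem : ∀ α ∈ Φ, ∀ β ∈ Φ, 0 < ⟪α, β⟫_ℝ → α ≠ β → α - β ∈ Φ
  two_notMem : ∀ α ∈ Φ, (2 : ℝ) • α ∉ Φ

/-- The vector `v` lies on no root hyperplane. -/
def Regular (Φ : Finset V) (v : V) : Prop := ∀ α ∈ Φ, ⟪v, α⟫_ℝ ≠ 0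

open Classical in
/-- Positive roots with respect to `v`. -/
noncomputable def pos (Φ : Finset V) (v : V) : Finset V := Φ.filter fun α => 0 < ⟪v, α⟫_ℝ

open Classical in
/-- Simple roots with respect to `v`: the indecomposable positive roots. -/
noncomputable def simple (Φ : Finset V) (v : V) : Finset V :=
  (pos Φ v).filter fun α => ∀ β ∈ pos Φ v, ∀ γ ∈ pos Φ v, α ≠ β + γ

lemma mem_pos {Φ : Finset V} {v α : V} : α ∈ pos Φ v ↔ α ∈ Φ ∧ 0 < ⟪v, α⟫_ℝ := by
  classical
  simp [pos]

lemma mem_simple {Φ : Finset V} {v α : V} :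
    α ∈ simple Φ v ↔ α ∈ pos Φ v ∧ ∀ β ∈ pos Φ v, ∀ γ ∈ pos Φ v, α ≠ β + γ := by
  classical
  simp [simple]

lemma inner_self_pos' {x : V} (hx : x ≠ 0) : 0 < ⟪x, x⟫_ℝ := real_inner_self_pos.2 hx

lemma refl_refl {α : V} (x : V) : refl α (refl α x) = x := by
  by_cases h : α = 0
  · simp [refl, h]
  have h1 : ⟪α, α⟫_ℝ ≠ 0 := (inner_self_pos' h).ne'
  have : 2 * ⟪refl α x, α⟫_ℝ / ⟪α, α⟫_ℝ = -(2 * ⟪x, α⟫_ℝ / ⟪α, α⟫_ℝ) := by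
    simp only [refl, inner_sub_left, inner_smul_left, RCLike.conj_to_real]
    field_simp
    ring
  rw [refl, this, refl]
  simp

lemma inner_refl_left (α x y : V) : ⟪refl α x, y⟫_ℝ = ⟪x, refl α y⟫_ℝ := by
  simp only [refl, inner_sub_left, inner_smul_left, inner_sub_right, inner_smul_right,
    RCLike.conj_to_real]
  rw [real_inner_comm α y]
  ring

lemma inner_refl_refl (α x y : V) : ⟪refl α x, refl α y⟫_ℝ = ⟪x, y⟫_ℝ := by
  rw [inner_refl_left, refl_refl]

lemma refl_add (α x y : V) : refl α (x + y) = refl α x + refl α y := by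
  simp only [refl, inner_add_left, mul_add, add_div, add_smul]
  abel

lemma refl_smul (α x : V) (r : ℝ) : refl α (r • x) = r • refl α x := by
  simp only [refl, inner_smul_left, RCLike.conj_to_real, smul_sub, smul_smul]
  congr 2
  ring

lemma refl_neg (α x : V) : refl α (-x) = - refl α x := by
  simpa using refl_smul α x (-1)

lemma refl_self {α : V} : refl α α = -α := by
  by_cases h : α = 0
  · simp [refl, h]
  have h1 : ⟪α, α⟫_ℝ ≠ 0 := (inner_self_pos' h).ne'
  rw [refl, mul_div_assoc, div_self h1, mul_one, two_smul]
  abel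

lemma refl_eq_self {α x : V} (h : ⟪x, α⟫_ℝ = 0) : refl α x = x := by
  simp [refl, h]

lemma refl_sum {ι : Type*} (α : V) (s : Finset ι) (f : ι → V) :
    refl α (∑ i ∈ s, f i) = ∑ i ∈ s, refl α (f i) := by
  classical
  induction s using Finset.induction_on with
  | empty => simp [refl]
  | insert i s hi ih => rw [sum_insert hi, sum_insert hi, refl_add, ih]

namespace IsRootSys
variable {Φ : Finset V} {v : V}

lemma ne_zero (hΦ : IsRootSys Φ) {α : V} (h : α ∈ Φ) : α ≠ 0 :=
  fun h0 => hΦ.zero_notMem (h0 ▸ h)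

/-- A ray contains at most one root. -/
lemma smul_eq_self (hΦ : IsRootSys Φ) {β : V} (hβ : β ∈ Φ) {r : ℝ} (hr : 0 < r)
    (h : r • β ∈ Φ) : r = 1 := by
  classical
  have hβ0 := hΦ.ne_zero hβ
  have hββ := inner_self_pos' hβ0
  have hinj : Function.Injective fun r : ℝ => r • β := smul_left_injective ℝ hβ0
  set S : Finset ℝ := (Φ.preimage (fun r : ℝ => r • β) hinj.injOn).filter fun r => 0 < r
    with hS
  have memS : ∀ s, s ∈ S ↔ s • β ∈ Φ ∧ 0 < s := by
    intro s; simp [hS]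
  have h1 : (1 : ℝ) ∈ S := (memS 1).2 ⟨by simpa using hβ, one_pos⟩
  have hrS : r ∈ S := (memS r).2 ⟨h, hr⟩
  set d := S.min' ⟨1, h1⟩
  have hd : d ∈ S := S.min'_mem _
  have hall : ∀ s ∈ S, s = d := by
    by_contra hcon
    push Not at hcon
    have hne : (S.erase d).Nonempty := by
      obtain ⟨s, hs, hsd⟩ := hcon
      exact ⟨s, mem_erase.2 ⟨hsd, hs⟩⟩
    set m := (S.erase d).min' hne
    have hm : m ∈ S.erase d := min'_mem _ _
    obtain ⟨hmd, hmS⟩ := mem_erase.1 hm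
    have hlt : d < m := lt_of_le_of_ne (S.min'_le _ hmS) (Ne.symm hmd)
    have hdpos := ((memS d).1 hd).2
    have hmpos := ((memS m).1 hmS).2
    have hsub : m - d ∈ S := by
      refine (memS _).2 ⟨?_, sub_pos.2 hlt⟩
      rw [sub_smul]
      refine hΦ.sub_mem _ ((memS m).1 hmS).1 _ ((memS d).1 hd).1 ?_ ?_
      · rw [inner_smul_left, inner_smul_right]
        simp only [RCLike.conj_to_real]
        positivity
      · intro h; exact hmd (hinj h)
    have : m - d = d := by
      by_contra hne'
      have := (S.erase d).min'_le _ (mem_erase.2 ⟨hne', hsub⟩)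
      change m ≤ m - d at this
      linarith
    have h2 : m = 2 * d := by linarith
    apply hΦ.two_notMem _ ((memS d).1 hd).1
    rw [smul_smul, ← h2]
    exact ((memS m).1 hmS).1
  rw [hall r hrS, hall 1 h1]

lemma neg_mem_iff (hΦ : IsRootSys Φ) {α : V} : -α ∈ Φ ↔ α ∈ Φ :=
  ⟨fun h => by simpa using hΦ.neg_mem _ h, hΦ.neg_mem α⟩

lemma pos_or_neg (hΦ : IsRootSys Φ) (hv : Regular Φ v) {α : V} (h : α ∈ Φ) :
    α ∈ pos Φ v ∨ -α ∈ pos Φ v := by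
  rcases lt_or_gt_of_ne (hv α h) with h1 | h1
  · right; exact mem_pos.2 ⟨hΦ.neg_mem _ h, by rw [inner_neg_right]; linarith⟩
  · left; exact mem_pos.2 ⟨h, h1⟩

/-- Induction on positive roots along the values of `⟪v, ·⟫`. -/
lemma pos_induction (P : V → Prop)
    (H : ∀ α ∈ pos Φ v, (∀ β ∈ pos Φ v, ⟪v, β⟫_ℝ < ⟪v, α⟫_ℝ → P β) → P α) :
    ∀ α ∈ pos Φ v, P α := by
  classical
  by_contra hcon
  push Not at hcon
  obtain ⟨α, hα, hP⟩ := hcon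
  obtain ⟨m, hm, hmin⟩ := ((pos Φ v).filter fun α => ¬ P α).exists_min_image
    (fun α => ⟪v, α⟫_ℝ) ⟨α, by simp [hα, hP]⟩
  rw [mem_filter] at hm
  apply hm.2
  apply H m hm.1
  intro β hβ hlt
  by_contra hPβ
  have := hmin β (mem_filter.2 ⟨hβ, hPβ⟩)
  linarith

lemma pos_mem_closure_simple {α : V} (hα : α ∈ pos Φ v) :
    α ∈ AddSubmonoid.closure (simple Φ v : Set V) := by
  refine pos_induction (Φ := Φ) (v := v) _ ?_ α hα
  intro α hα ih
  by_cases hs : α ∈ simple Φ v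
  · exact AddSubmonoid.subset_closure hs
  · rw [mem_simple] at hs
    push Not at hs
    obtain ⟨β, hβ, γ, hγ, rfl⟩ := hs hα
    have h1 := (mem_pos.1 hβ).2
    have h2 := (mem_pos.1 hγ).2
    refine add_mem (ih β hβ ?_) (ih γ hγ ?_) <;> rw [inner_add_right] <;> linarith

lemma simple_pos {α : V} (h : α ∈ simple Φ v) : α ∈ pos Φ v := (mem_simple.1 h).1
lemma simple_mem {α : V} (h : α ∈ simple Φ v) : α ∈ Φ := (mem_pos.1 (simple_pos h)).1

lemma simple_inner_nonpos (hΦ : IsRootSys Φ) (hv : Regular Φ v) {α β : V}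
    (hα : α ∈ simple Φ v) (hβ : β ∈ simple Φ v) (hne : α ≠ β) : ⟪α, β⟫_ℝ ≤ 0 := by
  by_contra hcon
  push Not at hcon
  have hs := hΦ.sub_mem _ (simple_mem hα) _ (simple_mem hβ) hcon hne
  rcases hΦ.pos_or_neg hv hs with h | h
  · exact (mem_simple.1 hα).2 _ h _ (simple_pos hβ) (by abel)
  · exact (mem_simple.1 hβ).2 _ h _ (simple_pos hα) (by abel)

/-- Elements of the monoid generated by the simple roots have coordinates. -/
lemma exists_coeff {D : Finset V} {x : V} (hx : x ∈ AddSubmonoid.closure (D : Set V)) :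
    ∃ c : V → ℕ, x = ∑ γ ∈ D, (c γ : ℝ) • γ := by
  classical
  induction hx using AddSubmonoid.closure_induction with
  | mem x hx =>
    refine ⟨fun γ => if γ = x then 1 else 0, ?_⟩
    rw [Finset.sum_eq_single x]
    · simp
    · intro b _ hb; simp [hb]
    · intro h; exact absurd hx h
  | zero => exact ⟨0, by simp⟩
  | add x y _ _ hx hy =>
    obtain ⟨c, rfl⟩ := hx
    obtain ⟨d, rfl⟩ := hy
    exact ⟨c + d, by simp [add_smul, sum_add_distrib]⟩

/-- The simple roots are linearly independent. -/
lemma simple_indep (hΦ : IsRootSys Φ) (hv : Regular Φ v) (c : V → ℝ)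
    (h : ∑ γ ∈ simple Φ v, c γ • γ = 0) : ∀ γ ∈ simple Φ v, c γ = 0 := by
  classical
  set Δ := simple Φ v
  set x := ∑ γ ∈ Δ, (max (c γ) 0) • γ with hx
  have hxy : x = ∑ γ ∈ Δ, (max (-c γ) 0) • γ := by
    rw [hx, ← sub_eq_zero, ← sum_sub_distrib, ← h]
    refine sum_congr rfl fun γ _ => ?_
    rw [← sub_smul]
    congr 1
    rcases le_total (c γ) 0 with h | h
    · rw [max_eq_right h, max_eq_left (by linarith)]; ring
    · rw [max_eq_left h, max_eq_right (by linarith)]; ring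
  have hx0 : x = 0 := by
    rw [← inner_self_eq_zero (𝕜 := ℝ)]
    refine le_antisymm ?_ real_inner_self_nonneg
    nth_rewrite 2 [hxy]
    rw [hx, sum_inner]
    refine sum_nonpos fun γ hγ => ?_
    rw [inner_sum]
    refine sum_nonpos fun δ hδ => ?_
    rw [inner_smul_left, inner_smul_right, RCLike.conj_to_real]
    by_cases hγδ : γ = δ
    · subst hγδ
      rcases le_total (c γ) 0 with h | h
      · rw [max_eq_right h]; simp
      · rw [max_eq_right (a := -c γ) (by linarith)]; simp
    · have := hΦ.simple_inner_nonpos hv hγ hδ hγδ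
      have h1 : 0 ≤ max (c γ) 0 := le_max_right _ _
      have h2 : 0 ≤ max (-c δ) 0 := le_max_right _ _
      have := mul_nonneg h1 h2
      nlinarith
  have key : ∀ d : V → ℝ, (∀ γ, 0 ≤ d γ) → ∑ γ ∈ Δ, d γ • γ = 0 → ∀ γ ∈ Δ, d γ = 0 := by
    intro d hd hsum
    have h1 : ∑ γ ∈ Δ, d γ * ⟪v, γ⟫_ℝ = 0 := by
      have := congrArg (fun z => ⟪v, z⟫_ℝ) hsum
      simpa [inner_sum, inner_smul_right] using this
    rw [sum_eq_zero_iff_of_nonneg] at h1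
    · intro γ hγ
      have h2 := (mem_pos.1 (simple_pos hγ)).2
      rcases mul_eq_zero.1 (h1 γ hγ) with h | h
      · exact h
      · linarith
    · intro γ hγ
      exact mul_nonneg (hd γ) (mem_pos.1 (simple_pos hγ)).2.le
  intro γ hγ
  have h1 := key _ (fun γ => le_max_right _ _) hx0 γ hγ
  have h2 := key _ (fun γ => le_max_right _ _) (hxy.symm.trans hx0) γ hγ
  have h1' := le_max_left (c γ) 0
  have h2' := le_max_left (-c γ) 0
  linarith

lemma simple_indep_eq (hΦ : IsRootSys Φ) (hv : Regular Φ v) {c d : V → ℝ}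
    (h : ∑ γ ∈ simple Φ v, c γ • γ = ∑ γ ∈ simple Φ v, d γ • γ) :
    ∀ γ ∈ simple Φ v, c γ = d γ := by
  intro γ hγ
  have := hΦ.simple_indep hv (fun γ => c γ - d γ) (by simp [sub_smul, h]) γ hγ
  linarith

/-- A simple reflection permutes the other positive roots. -/
lemma refl_pos (hΦ : IsRootSys Φ) (hv : Regular Φ v) {α β : V} (hα : α ∈ simple Φ v)
    (hβ : β ∈ pos Φ v) (hne : β ≠ α) : refl α β ∈ pos Φ v := by
  classical
  have hαΦ := simple_mem hα
  have hm := hΦ.refl_mem _ hαΦ _ (mem_pos.1 hβ).1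
  rcases hΦ.pos_or_neg hv hm with h | h
  · exact h
  exfalso
  obtain ⟨c, hc⟩ := exists_coeff (pos_mem_closure_simple hβ)
  obtain ⟨d, hd⟩ := exists_coeff (pos_mem_closure_simple h)
  set r := 2 * ⟪β, α⟫_ℝ / ⟪α, α⟫_ℝ
  have hrel : ∑ γ ∈ simple Φ v, ((c γ : ℝ) + d γ) • γ
      = ∑ γ ∈ simple Φ v, (if γ = α then r else 0) • γ := by
    simp only [add_smul, sum_add_distrib, ← hc, ← hd]
    simp only [ite_smul, zero_smul, sum_ite_eq', hα, if_true]
    simp [refl, r]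
  have hcoef := hΦ.simple_indep_eq hv hrel
  have hc0 : ∀ γ ∈ simple Φ v, γ ≠ α → c γ = 0 := by
    intro γ hγ hγα
    have := hcoef γ hγ
    simp only [hγα, if_false] at this
    have h3 : (0:ℝ) ≤ d γ := Nat.cast_nonneg _
    have h4 : (0:ℝ) ≤ c γ := Nat.cast_nonneg _
    exact_mod_cast (by linarith : (c γ : ℝ) = 0)
  have hβα : β = (c α : ℝ) • α := by
    rw [hc]
    refine sum_eq_single α (fun γ hγ hγα => by simp [hc0 γ hγ hγα]) (fun h => absurd hα h)
  have hβ0 := hΦ.ne_zero (mem_pos.1 hβ).1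
  have hcpos : (0:ℝ) < c α := by
    rcases (Nat.cast_nonneg (α := ℝ) (c α)).eq_or_lt with h | h
    · rw [← h] at hβα; simp at hβα; exact absurd hβα hβ0
    · exact h
  have := hΦ.smul_eq_self hαΦ hcpos (hβα ▸ (mem_pos.1 hβ).1)
  apply hne
  rw [hβα, this, one_smul]

/-- If `v` is the sum of the positive roots then `⟪v, α⟫ = ⟪α, α⟫` for simple `α`. -/
lemma inner_simple (hΦ : IsRootSys Φ) (hv : Regular Φ v) (hsum : v = ∑ α ∈ pos Φ v, α)
    {α : V} (hα : α ∈ simple Φ v) : ⟪v, α⟫_ℝ = ⟪α, α⟫_ℝ := by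
  classical
  have hα0 := inner_self_pos' (hΦ.ne_zero (simple_mem hα))
  have hαp := simple_pos hα
  set R := (pos Φ v).erase α
  have h1 : v = α + ∑ β ∈ R, β := by
    rw [add_sum_erase _ (fun x => x) hαp]; exact hsum
  have h2 : refl α (∑ β ∈ R, β) = ∑ β ∈ R, β := by
    rw [refl_sum]
    have hmem : ∀ β ∈ R, refl α β ∈ R := by
      intro β hβ
      obtain ⟨hne, hβp⟩ := mem_erase.1 hβ
      refine mem_erase.2 ⟨?_, hΦ.refl_pos hv hα hβp hne⟩
      intro h
      have : β = -α := by rw [← refl_refl (α := α) β, h, refl_self]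
      have h3 := (mem_pos.1 hβp).2
      have h4 := (mem_pos.1 hαp).2
      rw [this, inner_neg_right] at h3
      linarith
    exact sum_bij' (fun β _ => refl α β) (fun β _ => refl α β) hmem hmem
      (fun β _ => refl_refl β) (fun β _ => refl_refl β) (fun β _ => rfl)
  have h3 : ⟪∑ β ∈ R, β, α⟫_ℝ = 0 := by
    have := inner_refl_left α (∑ β ∈ R, β) α
    rw [h2, refl_self, inner_neg_right] at this
    linarith
  nth_rewrite 1 [h1]
  rw [inner_add_left, h3, add_zero]

/-- A positive root that is not simple has a positive inner product with some simple root. -/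
lemma exists_simple_inner_pos (hΦ : IsRootSys Φ) {α : V}
    (hα : α ∈ pos Φ v) : ∃ γ ∈ simple Φ v, 0 < ⟪α, γ⟫_ℝ := by
  by_contra hcon
  push Not at hcon
  obtain ⟨c, hc⟩ := exists_coeff (pos_mem_closure_simple hα)
  have h0 := inner_self_pos' (hΦ.ne_zero (mem_pos.1 hα).1)
  have : ⟪α, α⟫_ℝ ≤ 0 := by
    nth_rewrite 2 [hc]
    rw [inner_sum]
    refine sum_nonpos fun γ hγ => ?_
    rw [inner_smul_right]
    exact mul_nonpos_of_nonneg_of_nonpos (Nat.cast_nonneg _) (hcon γ hγ)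
  linarith

lemma sub_simple_pos (hΦ : IsRootSys Φ) (hv : Regular Φ v) {α γ : V} (hα : α ∈ pos Φ v)
    (hγ : γ ∈ simple Φ v) (hne : α ≠ γ) (h : 0 < ⟪α, γ⟫_ℝ) : α - γ ∈ pos Φ v := by
  rcases hΦ.pos_or_neg hv (hΦ.sub_mem _ (mem_pos.1 hα).1 _ (simple_mem hγ) h hne) with h | h
  · exact h
  · exact absurd (by abel) ((mem_simple.1 hγ).2 _ h _ hα)

lemma two_card_pos (hΦ : IsRootSys Φ) (hv : Regular Φ v) : 2 * (pos Φ v).card = Φ.card := by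
  classical
  have h1 : Φ = pos Φ v ∪ (pos Φ v).image (fun x => -x) := by
    ext α
    simp only [mem_union, mem_image]
    constructor
    · intro h
      rcases hΦ.pos_or_neg hv h with h | h
      · exact Or.inl h
      · exact Or.inr ⟨_, h, neg_neg _⟩
    · rintro (h | ⟨β, hβ, rfl⟩)
      · exact (mem_pos.1 h).1
      · exact hΦ.neg_mem _ (mem_pos.1 hβ).1
  have h2 : Disjoint (pos Φ v) ((pos Φ v).image (fun x => -x)) := by
    rw [disjoint_left]
    intro α h1 h2
    obtain ⟨β, hβ, rfl⟩ := mem_image.1 h2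
    have h3 := (mem_pos.1 h1).2
    have h4 := (mem_pos.1 hβ).2
    rw [inner_neg_right] at h3
    linarith
  conv_rhs => rw [h1]
  rw [card_union_of_disjoint h2, card_image_of_injective _ neg_injective]
  ring

lemma sum_eq_zero (hΦ : IsRootSys Φ) : ∑ α ∈ Φ, α = 0 := by
  have h : ∑ α ∈ Φ, α = ∑ α ∈ Φ, -α :=
    sum_bij' (fun α _ => -α) (fun α _ => -α) (fun α h => hΦ.neg_mem _ h)
      (fun α h => hΦ.neg_mem _ h) (by simp) (by simp) (by simp)
  rw [sum_neg_distrib] at h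
  have h2 : (2 : ℝ) • ∑ α ∈ Φ, α = 0 := by
    rw [two_smul]
    nth_rewrite 2 [h]
    exact add_neg_cancel _
  exact (smul_eq_zero.1 h2).resolve_left two_ne_zero

end IsRootSys
end DimDatum

/-! ### Coefficients of the Weyl denominator -/

namespace DimDatum
open scoped InnerProductSpace
open Finset
set_option linter.unusedSectionVars false
variable {V : Type*} [NormedAddCommGroup V] [InnerProductSpace ℝ V]

open Classical in
/-- The coefficient of `x` in the formal product `∏_{α ∈ S} (1 - e^α)`. -/
noncomputable def dcoef (S : Finset V) (x : V) : ℤ :=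
  ∑ A ∈ S.powerset, if ∑ α ∈ A, α = x then (-1) ^ A.card else 0

open Classical in
lemma dcoef_erase {S : Finset V} {α : V} (hα : α ∈ S) (x : V) :
    dcoef S x = dcoef (S.erase α) x - dcoef (S.erase α) (x - α) := by
  have hn : α ∉ S.erase α := by simp
  have h0 : dcoef S x = dcoef (insert α (S.erase α)) x := by rw [insert_erase hα]
  rw [h0]
  unfold dcoef
  rw [sum_powerset_insert hn, sub_eq_add_neg, ← sum_neg_distrib]
  congr 1
  refine sum_congr rfl fun A hA => ?_
  have hA' : α ∉ A := fun h => hn (mem_powerset.1 hA h)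
  rw [sum_insert hA', card_insert_of_notMem hA', pow_succ]
  by_cases h : ∑ β ∈ A, β = x - α
  · rw [if_pos (by rw [h]; abel), if_pos h]; ring
  · rw [if_neg (fun h' => h (by rw [← h']; abel)), if_neg h]; ring

open Classical in
lemma inner_mul_dcoef (S : Finset V) (x y : V) :
    ⟪y, x⟫_ℝ * (dcoef S x : ℝ)
      = - ∑ β ∈ S, ⟪y, β⟫_ℝ * (dcoef (S.erase β) (x - β) : ℝ) := by
  have key : ∀ β ∈ S, (dcoef (S.erase β) (x - β) : ℝ)
      = - ∑ A ∈ S.powerset, if β ∈ A then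
          (if ∑ α ∈ A, α = x then (-1 : ℝ) ^ A.card else 0) else 0 := by
    intro β hβ
    have hn : β ∉ S.erase β := by simp
    conv_rhs => rw [← insert_erase hβ]
    rw [sum_powerset_insert hn]
    unfold dcoef
    rw [sum_eq_zero (s := (S.erase β).powerset)
      (f := fun t => if β ∈ t then if ∑ α ∈ t, α = x then (-1 : ℝ) ^ #t else 0 else 0),
      zero_add, ← sum_neg_distrib]
    · push_cast
      refine sum_congr rfl fun A hA => ?_
      have hA' : β ∉ A := fun h => hn (mem_powerset.1 hA h)
      rw [sum_insert hA', card_insert_of_notMem hA', pow_succ, if_pos (mem_insert_self _ _)]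
      by_cases h : ∑ γ ∈ A, γ = x - β
      · rw [if_pos h, if_pos (by rw [h]; abel)]; ring
      · rw [if_neg h, if_neg (fun h' => h (by rw [← h']; abel))]; ring
    · intro A hA
      exact if_neg fun h => hn (mem_powerset.1 hA h)
  rw [sum_congr rfl fun β hβ => by rw [key β hβ]]
  simp only [mul_neg, sum_neg_distrib, neg_neg, mul_sum]
  rw [sum_comm]
  unfold dcoef
  push_cast
  rw [mul_sum]
  refine sum_congr rfl fun A hA => ?_
  by_cases h : ∑ α ∈ A, α = x
  · simp only [h, if_true, mul_ite, mul_zero]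
    rw [← sum_filter, ← sum_mul, filter_mem_eq_inter,
      inter_eq_right.2 (mem_powerset.1 hA), ← inner_sum, h]
  · simp [h]

open Classical in
/-- The differential equation satisfied by the Weyl density. -/
lemma dcoef_laplace {Φ : Finset V} (hΦ : IsRootSys Φ) (x : V) :
    ⟪x, x⟫_ℝ * (dcoef Φ x : ℝ)
      + ∑ α ∈ Φ, ⟪α, x⟫_ℝ * (dcoef (Φ.erase α) x : ℝ) = 0 := by
  rw [inner_mul_dcoef]
  have h : ∀ β ∈ Φ, ⟪x, β⟫_ℝ * (dcoef (Φ.erase β) (x - β) : ℝ)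
      = ⟪β, x⟫_ℝ * (dcoef (Φ.erase β) x : ℝ) - ⟪x, β⟫_ℝ * dcoef Φ x := by
    intro β hβ
    rw [dcoef_erase hβ x, real_inner_comm]
    push_cast
    ring
  rw [sum_congr rfl h, sum_sub_distrib, ← sum_mul, ← inner_sum, hΦ.sum_eq_zero]
  simp

lemma exists_of_dcoef_ne_zero {S : Finset V} {x : V} (h : dcoef S x ≠ 0) :
    ∃ A ⊆ S, ∑ α ∈ A, α = x := by
  classical
  by_contra hcon
  push Not at hcon
  apply h
  unfold dcoef
  exact sum_eq_zero fun A hA => if_neg (hcon A (mem_powerset.1 hA))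

lemma finite_dcoef (S : Finset V) : {x : V | dcoef S x ≠ 0}.Finite := by
  classical
  refine (S.powerset.image fun A => ∑ α ∈ A, α).finite_toSet.subset ?_
  intro x hx
  obtain ⟨A, hA, rfl⟩ := exists_of_dcoef_ne_zero hx
  simp only [coe_image, Set.mem_image, SetLike.mem_coe, mem_powerset]
  exact ⟨A, hA, rfl⟩

/-- `x` is a sum over a subset of `Φ`, of the greatest possible length. -/
def IsTop (Φ : Finset V) (x : V) : Prop :=
  (∃ A ⊆ Φ, ∑ α ∈ A, α = x) ∧ ∀ A ⊆ Φ, ‖∑ α ∈ A, α‖ ≤ ‖x‖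

lemma exists_isTop (Φ : Finset V) : ∃ x, IsTop Φ x := by
  classical
  obtain ⟨A, hA, hmax⟩ := Φ.powerset.exists_max_image (fun A => ‖∑ α ∈ A, α‖)
    ⟨∅, by simp⟩
  exact ⟨_, ⟨A, mem_powerset.1 hA, rfl⟩, fun B hB => hmax B (mem_powerset.2 hB)⟩

lemma IsTop.eq_pos {Φ : Finset V} (h0 : (0 : V) ∉ Φ) {x : V} (hx : IsTop Φ x) {A : Finset V}
    (hA : A ⊆ Φ) (hAx : ∑ α ∈ A, α = x) :
    Regular Φ x ∧ A = pos Φ x := by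
  classical
  have h1 : ∀ α ∈ A, 0 < ⟪x, α⟫_ℝ := by
    intro α hα
    have hα0 : α ≠ 0 := fun h => h0 (h ▸ hA hα)
    have hle := hx.2 (A.erase α) ((erase_subset _ _).trans hA)
    have hs : ∑ β ∈ A.erase α, β = x - α := by
      rw [← hAx, ← add_sum_erase A (fun y => y) hα]; simp
    rw [hs] at hle
    have h2 := norm_sub_sq_real x α
    have h3 : ‖x - α‖ ^ 2 ≤ ‖x‖ ^ 2 := by gcongr
    have h4 : 0 < ‖α‖ ^ 2 := by positivity
    linarith
  have h2 : ∀ α ∈ Φ, α ∉ A → ⟪x, α⟫_ℝ < 0 := by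
    intro α hα hαA
    have hα0 : α ≠ 0 := fun h => h0 (h ▸ hα)
    have hle := hx.2 (insert α A) (insert_subset hα hA)
    have hs : ∑ β ∈ insert α A, β = x + α := by
      rw [sum_insert hαA, hAx, add_comm]
    rw [hs] at hle
    have h2 := norm_add_sq_real x α
    have h3 : ‖x + α‖ ^ 2 ≤ ‖x‖ ^ 2 := by gcongr
    have h4 : 0 < ‖α‖ ^ 2 := by positivity
    linarith
  refine ⟨fun α hα => ?_, ?_⟩
  · by_cases h : α ∈ A
    · exact (h1 α h).ne'
    · exact (h2 α hα h).ne
  · ext α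
    rw [mem_pos]
    refine ⟨fun h => ⟨hA h, h1 α h⟩, fun h => ?_⟩
    by_contra hA'
    exact absurd h.2 (not_lt.2 (h2 α h.1 hA').le)

lemma IsTop.regular {Φ : Finset V} (h0 : (0 : V) ∉ Φ) {x : V} (hx : IsTop Φ x) :
    Regular Φ x := by
  obtain ⟨A, hA, hAx⟩ := hx.1
  exact (hx.eq_pos h0 hA hAx).1

lemma IsTop.eq_sum {Φ : Finset V} (h0 : (0 : V) ∉ Φ) {x : V} (hx : IsTop Φ x) :
    x = ∑ α ∈ pos Φ x, α := by
  obtain ⟨A, hA, hAx⟩ := hx.1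
  rw [← (hx.eq_pos h0 hA hAx).2, hAx]

lemma IsTop.dcoef_eq {Φ : Finset V} (h0 : (0 : V) ∉ Φ) {x : V} (hx : IsTop Φ x) :
    dcoef Φ x = (-1) ^ (pos Φ x).card := by
  classical
  unfold dcoef
  rw [sum_eq_single (pos Φ x)]
  · rw [if_pos (hx.eq_sum h0).symm]
  · intro B hB hne
    exact if_neg fun h => hne (hx.eq_pos h0 (mem_powerset.1 hB) h).2
  · intro h
    exact absurd (mem_powerset.2 fun α hα => (mem_pos.1 hα).1) h

lemma IsTop.neg {Φ : Finset V} (hΦ : IsRootSys Φ) {x : V} (hx : IsTop Φ x) :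
    IsTop Φ (-x) := by
  classical
  refine ⟨?_, fun A hA => by rw [norm_neg]; exact hx.2 A hA⟩
  obtain ⟨A, hA, hAx⟩ := hx.1
  refine ⟨A.image (fun x => -x), ?_, ?_⟩
  · intro α hα
    obtain ⟨β, hβ, rfl⟩ := mem_image.1 hα
    exact hΦ.neg_mem _ (hA hβ)
  · rw [sum_image (fun a _ b _ h => neg_injective h), sum_neg_distrib, hAx]

/-- The constant term of `∏_{α ∈ Φ} (1 - e^α) = Q · Q̄` is the sum of the squares of the
coefficients of `Q = ∏_{α > 0} (1 - e^α)`, hence positive. -/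
lemma dcoef_zero_pos {Φ : Finset V} (hΦ : IsRootSys Φ) : 0 < dcoef Φ 0 := by
  classical
  obtain ⟨v, hv⟩ := exists_isTop Φ
  have hreg := hv.regular hΦ.zero_notMem
  set P := pos Φ v
  set N := P.image (fun x => -x)
  have hPN : Disjoint P N := by
    rw [disjoint_left]
    intro α h1 h2
    obtain ⟨β, hβ, rfl⟩ := mem_image.1 h2
    have h3 := (mem_pos.1 h1).2
    have h4 := (mem_pos.1 hβ).2
    rw [inner_neg_right] at h3
    linarith
  have hΦe : Φ = P ∪ N := by
    ext α
    simp only [mem_union, N, mem_image]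
    constructor
    · intro h
      rcases hΦ.pos_or_neg hreg h with h | h
      · exact Or.inl h
      · exact Or.inr ⟨_, h, neg_neg _⟩
    · rintro (h | ⟨β, hβ, rfl⟩)
      · exact (mem_pos.1 h).1
      · exact hΦ.neg_mem _ (mem_pos.1 hβ).1
  -- the product over the union, split into pairs of subsets of `P`
  have hsplit : dcoef Φ 0 = ∑ A ∈ P.powerset, ∑ B ∈ P.powerset,
      if ∑ α ∈ A, α = ∑ α ∈ B, α then (-1 : ℤ) ^ A.card * (-1) ^ B.card else 0 := by
    rw [← sum_product']
    unfold dcoef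
    symm
    refine sum_bij' (fun p _ => p.1 ∪ p.2.image (fun x => -x))
      (fun C _ => (C ∩ P, (C ∩ N).image (fun x => -x))) ?_ ?_ ?_ ?_ ?_
    · rintro ⟨A, B⟩ h
      simp only [mem_product, mem_powerset] at h ⊢
      rw [hΦe]
      exact union_subset_union h.1 (image_subset_image h.2)
    · intro C hC
      simp only [mem_product, mem_powerset]
      refine ⟨inter_subset_right, ?_⟩
      intro α hα
      obtain ⟨β, hβ, rfl⟩ := mem_image.1 hα
      obtain ⟨γ, hγ, rfl⟩ := mem_image.1 (mem_inter.1 hβ).2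
      simpa using hγ
    · rintro ⟨A, B⟩ h
      simp only [mem_product, mem_powerset] at h
      have hB : B.image (fun x => -x) ⊆ N := image_subset_image h.2
      have e1 : (A ∪ B.image (fun x => -x)) ∩ P = A := by
        rw [union_inter_distrib_right, inter_eq_left.2 h.1,
          disjoint_iff_inter_eq_empty.1 (disjoint_of_subset_left hB hPN.symm), union_empty]
      have e2 : (A ∪ B.image (fun x => -x)) ∩ N = B.image (fun x => -x) := by
        rw [union_inter_distrib_right, inter_eq_left.2 hB,
          disjoint_iff_inter_eq_empty.1 (disjoint_of_subset_left h.1 hPN), empty_union]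
      simp only [e1, e2, image_image]
      simp
    · intro C hC
      have hC' := mem_powerset.1 hC
      simp only [image_image]
      have : ((fun x : V => -x) ∘ fun x => -x) = id := by ext; simp
      rw [this, image_id, ← inter_union_distrib_left, ← hΦe, inter_eq_left.2 hC']
    · rintro ⟨A, B⟩ h
      simp only [mem_product, mem_powerset] at h
      have hB : B.image (fun x => -x) ⊆ N := image_subset_image h.2
      have hd : Disjoint A (B.image (fun x => -x)) :=
        disjoint_of_subset_left h.1 (disjoint_of_subset_right hB hPN)
      simp only
      rw [sum_union hd, card_union_of_disjoint hd, card_image_of_injective _ neg_injective,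
        sum_image (fun a _ b _ h => neg_injective h), sum_neg_distrib, pow_add,
        ← sub_eq_add_neg]
      simp only [sub_eq_zero]
  set X := P.powerset.image fun A => ∑ α ∈ A, α
  have hsq : dcoef Φ 0 = ∑ x ∈ X, (dcoef P x) ^ 2 := by
    rw [hsplit]
    unfold dcoef
    simp only [sq, sum_mul_sum]
    rw [sum_comm' (t' := P.powerset) (s' := fun _ => X) (by simp [and_comm])]
    refine sum_congr rfl fun A hA => ?_
    rw [sum_comm' (t' := P.powerset) (s' := fun _ => X) (by simp [and_comm])]
    refine sum_congr rfl fun B hB => ?_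
    rw [sum_eq_single (s := X) (∑ α ∈ A, α)]
    · simp [eq_comm]
    · intro x _ hx
      rw [if_neg (Ne.symm hx), zero_mul]
    · intro h
      exact absurd (mem_image_of_mem _ hA) h
  rw [hsq]
  have h0 : dcoef P 0 = 1 := by
    unfold dcoef
    rw [sum_eq_single ∅]
    · simp
    · intro A hA hne
      refine if_neg fun h => ?_
      have h1 : 0 < ∑ α ∈ A, ⟪v, α⟫_ℝ :=
        sum_pos (fun α hα => (mem_pos.1 (mem_powerset.1 hA hα)).2) (nonempty_iff_ne_empty.2 hne)
      rw [← inner_sum, h, inner_zero_right] at h1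
      exact lt_irrefl _ h1
    · simp
  have h0X : (0 : V) ∈ X := mem_image.2 ⟨∅, by simp, by simp⟩
  calc (0 : ℤ) < dcoef P 0 ^ 2 := by rw [h0]; norm_num
    _ ≤ _ := single_le_sum (f := fun x => dcoef P x ^ 2) (fun x _ => sq_nonneg _) h0X

end DimDatum

/-! ### Root systems with a common subsystem -/

namespace DimDatum
section Combi
set_option linter.unusedVariables false
open scoped InnerProductSpace Classical
open Finset IsRootSys
variable {V : Type*} [NormedAddCommGroup V] [InnerProductSpace ℝ V]

lemma map_refl (θ : V ≃ₗᵢ[ℝ] V) (α x : V) : θ (refl α x) = refl (θ α) (θ x) := by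
  simp [refl]

lemma mem_pos_image {θ : V ≃ₗᵢ[ℝ] V} {v : V} (hv : θ v = v) {Φ : Finset V} {x : V} :
    θ x ∈ pos (Φ.image θ) v ↔ x ∈ pos Φ v := by
  rw [mem_pos, mem_pos, mem_image]
  have h1 : ⟪v, θ x⟫_ℝ = ⟪v, x⟫_ℝ := by
    nth_rewrite 1 [← hv]; exact θ.inner_map_map v x
  simp [h1]

lemma pos_image {θ : V ≃ₗᵢ[ℝ] V} {v : V} (hv : θ v = v) (Φ : Finset V) :
    pos (Φ.image θ) v = (pos Φ v).image θ := by
  ext x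
  obtain ⟨y, rfl⟩ := θ.surjective x
  rw [mem_pos_image hv]
  simp

lemma mem_simple_image {θ : V ≃ₗᵢ[ℝ] V} {v : V} (hv : θ v = v) {Φ : Finset V} {x : V} :
    θ x ∈ simple (Φ.image θ) v ↔ x ∈ simple Φ v := by
  rw [mem_simple, mem_simple, mem_pos_image hv, pos_image hv]
  simp only [mem_image, forall_exists_index, and_imp, forall_apply_eq_imp_iff₂, ← map_add, ne_eq,
    EmbeddingLike.apply_eq_iff_eq]

lemma simple_image {θ : V ≃ₗᵢ[ℝ] V} {v : V} (hv : θ v = v) (Φ : Finset V) :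
    simple (Φ.image θ) v = (simple Φ v).image θ := by
  ext x
  obtain ⟨y, rfl⟩ := θ.surjective x
  rw [mem_simple_image hv]
  simp

lemma IsRootSys.image {Φ : Finset V} (h : IsRootSys Φ) (θ : V ≃ₗᵢ[ℝ] V) :
    IsRootSys (Φ.image θ) where
  zero_notMem := by
    intro h0
    obtain ⟨x, hx, hx0⟩ := mem_image.1 h0
    rw [map_eq_zero_iff θ θ.injective] at hx0
    exact h.zero_notMem (hx0 ▸ hx)
  neg_mem := by
    intro α hα
    obtain ⟨x, hx, rfl⟩ := mem_image.1 hα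
    exact mem_image.2 ⟨-x, h.neg_mem _ hx, map_neg _ _⟩
  refl_mem := by
    intro α hα β hβ
    obtain ⟨x, hx, rfl⟩ := mem_image.1 hα
    obtain ⟨y, hy, rfl⟩ := mem_image.1 hβ
    exact mem_image.2 ⟨_, h.refl_mem _ hx _ hy, map_refl _ _ _⟩
  sub_mem := by
    intro α hα β hβ hi hne
    obtain ⟨x, hx, rfl⟩ := mem_image.1 hα
    obtain ⟨y, hy, rfl⟩ := mem_image.1 hβ
    rw [θ.inner_map_map] at hi
    exact mem_image.2 ⟨_, h.sub_mem _ hx _ hy hi (fun h => hne (by rw [h])), map_sub _ _ _⟩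
  two_notMem := by
    intro α hα h2
    obtain ⟨x, hx, rfl⟩ := mem_image.1 hα
    obtain ⟨y, hy, hyx⟩ := mem_image.1 h2
    rw [← map_smul] at hyx
    exact h.two_notMem _ hx (θ.injective hyx ▸ hy)

/-- The data attached to a root system `Φ` in `t` relative to a smaller root system `Ψ`, a
group `G` of isometries containing the reflections in the roots, a vector `v` which is the
sum of the positive roots, and a lattice `Λ` spanned by the simple roots. -/
structure Side (G : Subgroup (V ≃ₗᵢ[ℝ] V)) (t : Submodule ℝ V) (v : V) (Ψ : Finset V)
    (Λ : AddSubgroup V) (Φ : Finset V) : Prop where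
  root : IsRootSys Φ
  reg : Regular Φ v
  sum : v = ∑ α ∈ pos Φ v, α
  sub_t : ∀ α ∈ Φ, α ∈ t
  sub : Ψ ⊆ Φ
  span : ∀ α ∈ Φ, α ∈ Submodule.span ℝ (Ψ : Set V)
  refl_mem : ∀ α ∈ Φ, ∃ g ∈ G, ∀ x ∈ t, g x = refl α x
  lat : Λ = AddSubgroup.closure (simple Φ v : Set V)

variable {G : Subgroup (V ≃ₗᵢ[ℝ] V)} {t : Submodule ℝ V} {v : V} {Ψ : Finset V}
    {Λ : AddSubgroup V} {Φ Φ' : Finset V}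

/-- The data on `Ψ` and `Λ` that does not involve `Φ`. -/
structure Base (G : Subgroup (V ≃ₗᵢ[ℝ] V)) (t : Submodule ℝ V) (Ψ : Finset V)
    (Λ : AddSubgroup V) : Prop where
  root : IsRootSys Ψ
  map_t : ∀ g ∈ G, ∀ x ∈ t, g x ∈ t
  map_Ψ : ∀ g ∈ G, ∀ x ∈ Ψ, g x ∈ Ψ
  map_Λ : ∀ g ∈ G, ∀ x ∈ Λ, g x ∈ Λ

lemma refl_injective (c : V) : Function.Injective (refl c) :=
  fun x y h => by rw [← refl_refl (α := c) x, h, refl_refl]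

lemma pos_mono (h : Ψ ⊆ Φ) : pos Ψ v ⊆ pos Φ v :=
  fun _ hx => mem_pos.2 ⟨h (mem_pos.1 hx).1, (mem_pos.1 hx).2⟩

lemma sub_refl (c a : V) : a - refl c a = (2 * ⟪a, c⟫_ℝ / ⟪c, c⟫_ℝ) • c := by
  simp [refl]

/-- Two distinct differences of three simple roots of the same length form an acute angle. -/
lemma IsRootSys.acute (hΨ : IsRootSys Ψ) (hr : Regular Ψ v) {p q r : V} (hp : p ∈ simple Ψ v)
    (hq : q ∈ simple Ψ v) (hr' : r ∈ simple Ψ v) (hpq : p ≠ q) (hpr : p ≠ r)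
    (h1 : ⟪q, q⟫_ℝ = ⟪p, p⟫_ℝ) (h2 : ⟪r, r⟫_ℝ = ⟪p, p⟫_ℝ) :
    0 < ⟪q - p, r - p⟫_ℝ := by
  have i1 := hΨ.simple_inner_nonpos hr hp hq hpq
  have i2 := hΨ.simple_inner_nonpos hr hp hr' hpr
  have hne : q + r ≠ 0 := by
    intro h
    have a1 := (mem_pos.1 (simple_pos hq)).2
    have a2 := (mem_pos.1 (simple_pos hr')).2
    have : ⟪v, q + r⟫_ℝ = 0 := by rw [h, inner_zero_right]
    rw [inner_add_right] at this
    linarith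
  have i3 := inner_self_pos' hne
  simp only [inner_add_left, inner_add_right] at i3
  simp only [inner_sub_left, inner_sub_right]
  rw [real_inner_comm q r] at i3
  rw [real_inner_comm p q]
  linarith

namespace Side

lemma regΨ (B : Base G t Ψ Λ) (S : Side G t v Ψ Λ Φ) : Regular Ψ v := fun α hα => S.reg α (S.sub hα)

lemma refl_mem_posΨ (B : Base G t Ψ Λ) (S : Side G t v Ψ Λ Φ)
    {c a : V} (hc : c ∈ simple Φ v) (hcΨ : c ∉ Ψ) (ha : a ∈ pos Ψ v) :
    refl c a ∈ pos Ψ v := by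
  have haΨ := (mem_pos.1 ha).1
  have h1 := S.root.refl_pos S.reg hc (pos_mono S.sub ha) (fun h => hcΨ (h ▸ haΨ))
  obtain ⟨g, hg, hgr⟩ := S.refl_mem c (simple_mem hc)
  refine mem_pos.2 ⟨?_, (mem_pos.1 h1).2⟩
  rw [← hgr a (S.sub_t a (S.sub haΨ))]
  exact B.map_Ψ g hg a haΨ

/-- The reflection in a simple root of `Φ` outside `Ψ` permutes the simple roots of `Ψ`. -/
lemma refl_mem_simpleΨ (B : Base G t Ψ Λ) (S : Side G t v Ψ Λ Φ)
    {c a : V} (hc : c ∈ simple Φ v) (hcΨ : c ∉ Ψ) (ha : a ∈ simple Ψ v) :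
    refl c a ∈ simple Ψ v := by
  refine mem_simple.2 ⟨refl_mem_posΨ B S hc hcΨ (simple_pos ha), ?_⟩
  intro β hβ γ hγ h
  apply (mem_simple.1 ha).2 _ (refl_mem_posΨ B S hc hcΨ hβ) _ (refl_mem_posΨ B S hc hcΨ hγ)
  rw [← refl_add, ← h, refl_refl]

lemma refl_ne (B : Base G t Ψ Λ) (S : Side G t v Ψ Λ Φ)
    {c a : V} (h : 0 < ⟪a, c⟫_ℝ) : refl c a ≠ a := by
  intro he
  have h1 := sub_refl c a
  rw [he, sub_self, eq_comm, smul_eq_zero] at h1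
  have hc : c ≠ 0 := by rintro rfl; simp at h
  have hcc := inner_self_pos' hc
  rcases h1 with h1 | h1
  · have : 0 < 2 * ⟪a, c⟫_ℝ / ⟪c, c⟫_ℝ := by positivity
    linarith
  · exact hc h1

/-- A simple root of `Φ` outside `Ψ` is detected by some simple root of `Ψ`, because `Ψ` spans. -/
lemma exists_inner_pos (B : Base G t Ψ Λ) (S : Side G t v Ψ Λ Φ)
    {c : V} (hc : c ∈ simple Φ v) (hcΨ : c ∉ Ψ) :
    ∃ a ∈ simple Ψ v, 0 < ⟪a, c⟫_ℝ := by
  by_contra hcon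
  push Not at hcon
  have h0 : ∀ a ∈ simple Ψ v, ⟪a, c⟫_ℝ = 0 := by
    intro a ha
    refine le_antisymm (hcon a ha) ?_
    have h := hcon _ (refl_mem_simpleΨ B S hc hcΨ ha)
    rw [inner_refl_left, refl_self, inner_neg_right] at h
    linarith
  have hpos : ∀ a ∈ pos Ψ v, ⟪a, c⟫_ℝ = 0 := by
    intro a ha
    obtain ⟨d, hd⟩ := exists_coeff (pos_mem_closure_simple ha)
    rw [hd, sum_inner]
    exact sum_eq_zero fun γ hγ => by rw [inner_smul_left, h0 γ hγ, mul_zero]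
  have hall : ∀ a ∈ Ψ, ⟪a, c⟫_ℝ = 0 := by
    intro a ha
    rcases B.root.pos_or_neg (regΨ B S) ha with h | h
    · exact hpos a h
    · have := hpos _ h
      rw [inner_neg_left] at this
      linarith
  have hspan := S.span c (simple_mem hc)
  have hcc : ∀ x ∈ Submodule.span ℝ (Ψ : Set V), ⟪x, c⟫_ℝ = 0 := by
    intro x hx
    induction hx using Submodule.span_induction with
    | mem x hx => exact hall x hx
    | zero => simp
    | add x y _ _ hx hy => rw [inner_add_left, hx, hy, add_zero]
    | smul r x _ hx => rw [inner_smul_left, hx, mul_zero]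
  exact (inner_self_pos' (S.root.ne_zero (simple_mem hc))).ne' (hcc c hspan)

/-- The reflection in a simple root `c ∉ Ψ` of `Φ` acts on the simple roots of `Ψ` as the
transposition of `a` and `refl c a`. -/
lemma refl_fix (B : Base G t Ψ Λ) (S : Side G t v Ψ Λ Φ)
    {c a x : V} (hc : c ∈ simple Φ v) (hcΨ : c ∉ Ψ) (ha : a ∈ simple Ψ v)
    (hac : 0 < ⟪a, c⟫_ℝ) (hx : x ∈ simple Ψ v) (hxa : x ≠ a) (hxb : x ≠ refl c a) :
    refl c x = x := by
  by_contra hne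
  have hb := refl_mem_simpleΨ B S hc hcΨ ha
  have hy := refl_mem_simpleΨ B S hc hcΨ hx
  have hcc := inner_self_pos' (S.root.ne_zero (simple_mem hc))
  have e1 := sub_refl c a
  have e2 := sub_refl c x
  set r := 2 * ⟪a, c⟫_ℝ / ⟪c, c⟫_ℝ
  set s := 2 * ⟪x, c⟫_ℝ / ⟪c, c⟫_ℝ
  have hr : 0 < r := by positivity
  have hrel : r • (x - refl c x) - s • (a - refl c a) = 0 := by
    rw [e1, e2, smul_smul, smul_smul, mul_comm, sub_self]
  have hsingle : ∀ y ∈ simple Ψ v, ∑ γ ∈ simple Ψ v, (if γ = y then (1:ℝ) else 0) • γ = y := by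
    intro y hy
    simp [ite_smul, hy]
  have := B.root.simple_indep (regΨ B S)
    (fun γ => r * ((if γ = x then 1 else 0) - if γ = refl c x then 1 else 0)
      - s * ((if γ = a then 1 else 0) - if γ = refl c a then 1 else 0)) (by
      simp only [sub_smul, mul_smul, sum_sub_distrib, ← smul_sum, hsingle _ hx, hsingle _ hy,
        hsingle _ ha, hsingle _ hb, hrel]) x hx
  simp only [if_true, if_neg (Ne.symm hne), if_neg hxa, if_neg hxb] at this
  linarith

lemma simple_mem_simpleΨ (B : Base G t Ψ Λ) (S : Side G t v Ψ Λ Φ)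
    {c : V} (hc : c ∈ simple Φ v) (hcΨ : c ∈ Ψ) : c ∈ simple Ψ v := by
  refine mem_simple.2 ⟨mem_pos.2 ⟨hcΨ, (mem_pos.1 (simple_pos hc)).2⟩, ?_⟩
  intro β hβ γ hγ
  exact (mem_simple.1 hc).2 _ (pos_mono S.sub hβ) _ (pos_mono S.sub hγ)

/-- A simple root of `Ψ` that is decomposable in `Φ` has positive inner product with a simple root of
`Φ`, which cannot lie in `Ψ`. -/
lemma exists_cof (B : Base G t Ψ Λ) (S : Side G t v Ψ Λ Φ)
    {a : V} (ha : a ∈ simple Ψ v) (haΦ : a ∉ simple Φ v) :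
    ∃ c ∈ simple Φ v, c ∉ Ψ ∧ 0 < ⟪a, c⟫_ℝ := by
  obtain ⟨c, hc, hac⟩ := S.root.exists_simple_inner_pos (pos_mono S.sub (simple_pos ha))
  refine ⟨c, hc, fun hcΨ => ?_, hac⟩
  have := B.root.simple_inner_nonpos (regΨ B S) ha (simple_mem_simpleΨ B S hc hcΨ)
    (fun h => haΦ (h ▸ hc))
  linarith

lemma inner_sub_sub_nonpos (B : Base G t Ψ Λ) (S : Side G t v Ψ Λ Φ)
    {c d a b x y : V} {r s : ℝ} (hc : c ∈ simple Φ v)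
    (hd : d ∈ simple Φ v) (hr : 0 < r) (hs : 0 < s) (h1 : a - b = r • c) (h2 : x - y = s • d)
    (hne : c ≠ d) : ⟪a - b, x - y⟫_ℝ ≤ 0 := by
  rw [h1, h2, inner_smul_left, inner_smul_right, RCLike.conj_to_real]
  have := S.root.simple_inner_nonpos S.reg hc hd hne
  have := mul_pos hr hs
  nlinarith

lemma coef_pos (B : Base G t Ψ Λ) (S : Side G t v Ψ Λ Φ)
    {a c : V} (hc : c ∈ simple Φ v) (h : 0 < ⟪a, c⟫_ℝ) :
    0 < 2 * ⟪a, c⟫_ℝ / ⟪c, c⟫_ℝ := by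
  have := inner_self_pos' (S.root.ne_zero (simple_mem hc))
  positivity

lemma cof_unique (B : Base G t Ψ Λ) (S : Side G t v Ψ Λ Φ)
    {a c d : V} (ha : a ∈ simple Ψ v) (hc : c ∈ simple Φ v) (hcΨ : c ∉ Ψ)
    (hac : 0 < ⟪a, c⟫_ℝ) (hd : d ∈ simple Φ v) (hdΨ : d ∉ Ψ) (had : 0 < ⟪a, d⟫_ℝ) : c = d := by
  by_contra hne
  have h1 := inner_sub_sub_nonpos B S hc hd (coef_pos B S hc hac) (coef_pos B S hd had)
    (sub_refl c a) (sub_refl d a) hne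
  have h2 := B.root.acute (regΨ B S) ha (refl_mem_simpleΨ B S hc hcΨ ha)
    (refl_mem_simpleΨ B S hd hdΨ ha) (refl_ne B S hac).symm (refl_ne B S had).symm
    (inner_refl_refl _ _ _) (inner_refl_refl _ _ _)
  rw [← neg_sub a, ← neg_sub a, inner_neg_neg] at h2
  linarith

/-- A simple root of `Ψ` is obtained by reflection from at most one other one lying above it. -/
lemma pred_injective (B : Base G t Ψ Λ) (S : Side G t v Ψ Λ Φ)
    {a a' c d : V} (ha : a ∈ simple Ψ v) (ha' : a' ∈ simple Ψ v)
    (hc : c ∈ simple Φ v) (hcΨ : c ∉ Ψ)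
    (hac : 0 < ⟪a, c⟫_ℝ) (hd : d ∈ simple Φ v) (had : 0 < ⟪a', d⟫_ℝ)
    (h : refl c a = refl d a') : a = a' := by
  by_cases hne : c = d
  · subst hne; exact refl_injective _ h
  exfalso
  have e2 := sub_refl d a'
  rw [← h] at e2
  have h1 := inner_sub_sub_nonpos B S hc hd (coef_pos B S hc hac) (coef_pos B S hd had)
    (sub_refl c a) e2 hne
  have h2 := B.root.acute (regΨ B S) (refl_mem_simpleΨ B S hc hcΨ ha) ha ha'
    (refl_ne B S hac) (h ▸ refl_ne B S had) (inner_refl_refl _ _ _).symm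
    (by rw [h]; exact (inner_refl_refl _ _ _).symm)
  linarith

lemma image (S : Side G t v Ψ Λ Φ) {θ : V ≃ₗᵢ[ℝ] V} (B : Base G t Ψ Λ) (hθ : θ ∈ G) (hv : θ v = v) :
    Side G t v Ψ Λ (Φ.image θ) where
  root := S.root.image θ
  reg := by
    intro α hα
    obtain ⟨x, hx, rfl⟩ := mem_image.1 hα
    have := S.reg x hx
    rwa [← θ.inner_map_map, hv] at this
  sum := by
    rw [pos_image hv, sum_image (fun a _ b _ h => θ.injective h), ← map_sum, ← S.sum, hv]
  sub_t := by
    intro α hα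
    obtain ⟨x, hx, rfl⟩ := mem_image.1 hα
    exact B.map_t θ hθ x (S.sub_t x hx)
  sub := by
    intro α hα
    refine mem_image.2 ⟨θ⁻¹ α, S.sub (B.map_Ψ _ (inv_mem hθ) _ hα), ?_⟩
    exact θ.apply_symm_apply α
  span := by
    intro α hα
    obtain ⟨x, hx, rfl⟩ := mem_image.1 hα
    have h := Submodule.mem_map_of_mem (f := (θ : V →ₗ[ℝ] V)) (S.span x hx)
    rw [Submodule.map_span] at h
    refine Submodule.span_mono ?_ h
    rintro _ ⟨y, hy, rfl⟩
    exact B.map_Ψ θ hθ y hy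
  refl_mem := by
    intro α hα
    obtain ⟨x, hx, rfl⟩ := mem_image.1 hα
    obtain ⟨g, hg, hgr⟩ := S.refl_mem x hx
    refine ⟨θ * g * θ⁻¹, mul_mem (mul_mem hθ hg) (inv_mem hθ), fun y hy => ?_⟩
    change θ (g (θ⁻¹ y)) = _
    rw [hgr _ (B.map_t _ (inv_mem hθ) _ hy), map_refl]
    congr 1
    exact θ.apply_symm_apply y
  lat := by
    rw [simple_image hv, coe_image]
    have := AddMonoidHom.map_closure (θ.toLinearEquiv.toAddEquiv.toAddMonoidHom)
      (simple Φ v : Set V)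
    change AddSubgroup.map _ _ = AddSubgroup.closure (θ '' _) at this
    rw [← this, ← S.lat]
    ext x
    simp only [AddSubgroup.mem_map]
    constructor
    · intro hx
      exact ⟨θ⁻¹ x, B.map_Λ _ (inv_mem hθ) _ hx, θ.apply_symm_apply x⟩
    · rintro ⟨y, hy, rfl⟩
      exact B.map_Λ θ hθ y hy

end Side
end Combi
end DimDatum

/-! ### Matching simple roots -/

namespace DimDatum
section Combi2
set_option linter.unusedVariables false
open scoped InnerProductSpace Classical
open Finset IsRootSys
variable {V : Type*} [NormedAddCommGroup V] [InnerProductSpace ℝ V]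

/-- For a simple root `a` of `Ψ`, the simple root `c ∉ Ψ` of `Φ` with `⟪a, c⟫ > 0`
(unique if it exists; `0` otherwise). -/
noncomputable def cof (Ψ Φ : Finset V) (v a : V) : V :=
  if h : ∃ c ∈ simple Φ v, c ∉ Ψ ∧ 0 < ⟪a, c⟫_ℝ then h.choose else 0

lemma exists_coeff_int {D : Finset V} {x : V} (hx : x ∈ AddSubgroup.closure (D : Set V)) :
    ∃ c : V → ℤ, x = ∑ γ ∈ D, (c γ : ℝ) • γ := by
  induction hx using AddSubgroup.closure_induction with
  | mem x hx =>
    refine ⟨fun γ => if γ = x then 1 else 0, ?_⟩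
    rw [Finset.sum_eq_single x]
    · simp
    · intro b _ hb; simp [hb]
    · intro h; exact absurd hx h
  | zero => exact ⟨0, by simp⟩
  | add x y _ _ hx hy =>
    obtain ⟨c, rfl⟩ := hx
    obtain ⟨d, rfl⟩ := hy
    exact ⟨c + d, by simp [add_smul, sum_add_distrib]⟩
  | neg x _ hx =>
    obtain ⟨c, rfl⟩ := hx
    exact ⟨-c, by simp⟩

/-- Simple roots are primitive in the lattice they span. -/
lemma IsRootSys.smul_simple_int {Φ : Finset V} {v : V} (hΦ : IsRootSys Φ) (hv : Regular Φ v)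
    {c : V} (hc : c ∈ simple Φ v) {s : ℝ}
    (h : s • c ∈ AddSubgroup.closure (simple Φ v : Set V)) : ∃ m : ℤ, s = m := by
  obtain ⟨d, hd⟩ := exists_coeff_int h
  refine ⟨d c, ?_⟩
  have := hΦ.simple_indep_eq hv (c := fun γ => if γ = c then s else 0) (d := fun γ => (d γ : ℝ))
    (by simp [ite_smul, hc, ← hd]) c hc
  simpa using this

variable {G : Subgroup (V ≃ₗᵢ[ℝ] V)} {t : Submodule ℝ V} {v : V} {Ψ : Finset V}
    {Λ : AddSubgroup V} {Φ Φ' : Finset V}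

namespace Side

lemma cof_spec (B : Base G t Ψ Λ) (S : Side G t v Ψ Λ Φ)
    {a : V} (ha : a ∈ simple Ψ v) (haΦ : a ∉ simple Φ v) :
    cof Ψ Φ v a ∈ simple Φ v ∧ cof Ψ Φ v a ∉ Ψ ∧ 0 < ⟪a, cof Ψ Φ v a⟫_ℝ := by
  have h := exists_cof B S ha haΦ
  rw [cof, dif_pos h]
  exact ⟨h.choose_spec.1, h.choose_spec.2.1, h.choose_spec.2.2⟩

lemma cof_eq (B : Base G t Ψ Λ) (S : Side G t v Ψ Λ Φ)
    {a c : V} (ha : a ∈ simple Ψ v) (hc : c ∈ simple Φ v) (hcΨ : c ∉ Ψ)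
    (hac : 0 < ⟪a, c⟫_ℝ) : cof Ψ Φ v a = c := by
  have h : ∃ c ∈ simple Φ v, c ∉ Ψ ∧ 0 < ⟪a, c⟫_ℝ := ⟨c, hc, hcΨ, hac⟩
  rw [cof, dif_pos h]
  exact cof_unique B S ha h.choose_spec.1 h.choose_spec.2.1 h.choose_spec.2.2 hc hcΨ hac

lemma cof_eq_zero (B : Base G t Ψ Λ) (S : Side G t v Ψ Λ Φ)
    {a : V} (ha : a ∈ simple Ψ v) (haΦ : a ∈ simple Φ v) : cof Ψ Φ v a = 0 := by
  rw [cof, dif_neg]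
  rintro ⟨c, hc, hcΨ, hac⟩
  have := S.root.simple_inner_nonpos S.reg haΦ hc (fun h => hcΨ (h ▸ simple_mem ha))
  linarith

lemma cof_ne_zero (B : Base G t Ψ Λ) (S : Side G t v Ψ Λ Φ)
    {a : V} (ha : a ∈ simple Ψ v) : cof Ψ Φ v a ≠ 0 ↔ a ∉ simple Φ v := by
  constructor
  · intro h h'
    exact h (cof_eq_zero B S ha h')
  · intro h h0
    have := (cof_spec B S ha h).2.2
    rw [h0, inner_zero_right] at this
    exact lt_irrefl _ this

lemma inner_pred_lt (B : Base G t Ψ Λ) (S : Side G t v Ψ Λ Φ)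
    {a : V} {c : V} (hc : c ∈ simple Φ v) (hac : 0 < ⟪a, c⟫_ℝ) :
    ⟪v, refl c a⟫_ℝ < ⟪v, a⟫_ℝ := by
  have h1 := congrArg (fun x => ⟪v, x⟫_ℝ) (sub_refl c a)
  simp only [inner_sub_right, inner_smul_right] at h1
  have h2 := mul_pos (coef_pos B S hc hac) (mem_pos.1 (simple_pos hc)).2
  linarith

lemma inner_self_le (B : Base G t Ψ Λ) (S : Side G t v Ψ Λ Φ)
    : ∀ a ∈ pos Ψ v, a ∈ simple Ψ v → ⟪a, a⟫_ℝ ≤ ⟪v, a⟫_ℝ := by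
  refine pos_induction (Φ := Ψ) (v := v) _ ?_
  intro a _ ih ha
  by_cases haΦ : a ∈ simple Φ v
  · exact (S.root.inner_simple S.reg S.sum haΦ).ge
  · obtain ⟨hc, hcΨ, hac⟩ := cof_spec B S ha haΦ
    have hb := refl_mem_simpleΨ B S hc hcΨ ha
    have hlt := inner_pred_lt B S hc hac
    have := ih _ (simple_pos hb) hlt hb
    rw [inner_refl_refl] at this
    linarith

/-- Whether a simple root of `Ψ` is simple in `Φ` depends on `Φ` only through `v`. -/
lemma mem_simple_iff (B : Base G t Ψ Λ) (S : Side G t v Ψ Λ Φ) {a : V} (ha : a ∈ simple Ψ v) :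
    a ∈ simple Φ v ↔ ⟪v, a⟫_ℝ = ⟪a, a⟫_ℝ := by
  refine ⟨S.root.inner_simple S.reg S.sum, fun h => ?_⟩
  by_contra haΦ
  obtain ⟨hc, hcΨ, hac⟩ := cof_spec B S ha haΦ
  have hb := refl_mem_simpleΨ B S hc hcΨ ha
  have hlt := inner_pred_lt B S hc hac
  have := inner_self_le B S _ (simple_pos hb) hb
  rw [inner_refl_refl] at this
  linarith

lemma v_mem_span (B : Base G t Ψ Λ) (S : Side G t v Ψ Λ Φ)
    : v ∈ Submodule.span ℝ (simple Ψ v : Set V) := by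
  have h1 : Submodule.span ℝ (Ψ : Set V) ≤ Submodule.span ℝ (simple Ψ v : Set V) := by
    rw [Submodule.span_le]
    have hpos : ∀ x ∈ pos Ψ v, x ∈ Submodule.span ℝ (simple Ψ v : Set V) := by
      intro x hx
      obtain ⟨c, hc⟩ := exists_coeff (pos_mem_closure_simple hx)
      rw [hc]
      exact Submodule.sum_mem _ fun γ hγ =>
        Submodule.smul_mem _ _ (Submodule.subset_span hγ)
    intro x hx
    rcases B.root.pos_or_neg (regΨ B S) hx with h | h
    · exact hpos x h
    · exact (Submodule.neg_mem_iff _).1 (hpos _ h)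
  have h2 : ∑ α ∈ pos Φ v, α ∈ Submodule.span ℝ (Ψ : Set V) :=
    Submodule.sum_mem _ fun α hα => S.span α (mem_pos.1 hα).1
  rw [← S.sum] at h2
  exact h1 h2

/-- The simple roots of `Φ` are determined by `v` and the function `cof Ψ Φ v`. -/
lemma simple_subset (B : Base G t Ψ Λ) (S : Side G t v Ψ Λ Φ) (S' : Side G t v Ψ Λ Φ')
    (h : ∀ a ∈ simple Ψ v, cof Ψ Φ v a = cof Ψ Φ' v a) :
    simple Φ v ⊆ simple Φ' v := by
  intro c hc
  by_cases hcΨ : c ∈ Ψ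
  · have h0 := simple_mem_simpleΨ B S hc hcΨ
    exact (mem_simple_iff B S' h0).2 ((mem_simple_iff B S h0).1 hc)
  · obtain ⟨a, ha, hac⟩ := exists_inner_pos B S hc hcΨ
    have h1 := cof_eq B S ha hc hcΨ hac
    have h2 := h a ha
    have h3 : cof Ψ Φ' v a ≠ 0 := by
      rw [← h2, h1]; exact S.root.ne_zero (simple_mem hc)
    have := (cof_spec B S' ha ((cof_ne_zero B S' ha).1 h3)).1
    rwa [← h2, h1] at this

/-- Proportional simple roots of translates of the two systems coincide. -/
lemma eq_of_smul (B : Base G t Ψ Λ) (S : Side G t v Ψ Λ Φ) (S' : Side G t v Ψ Λ Φ')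
    {c c' : V} {g : V ≃ₗᵢ[ℝ] V} (hg : g ∈ G) (hc : c ∈ simple Φ v)
    (hc' : c' ∈ simple Φ' v) {r s : ℝ} (hr : 0 < r) (hs : 0 < s) (h : r • c = s • g c') :
    g c' = c := by
  have hcΛ : c ∈ Λ := by rw [S.lat]; exact AddSubgroup.subset_closure hc
  have hcΛ' : c' ∈ Λ := by rw [S'.lat]; exact AddSubgroup.subset_closure hc'
  have e1 : g c' = (r / s) • c := by
    rw [div_eq_inv_mul, mul_smul, h, smul_smul, inv_mul_cancel₀ hs.ne', one_smul]
  have e2 : g⁻¹ c = (s / r) • c' := by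
    have : c = (s / r) • g c' := by
      rw [div_eq_inv_mul, mul_smul, ← h, smul_smul, inv_mul_cancel₀ hr.ne', one_smul]
    rw [this, map_smul]
    congr 1
    exact g.symm_apply_apply c'
  obtain ⟨m, hm⟩ := S.root.smul_simple_int S.reg hc
    (by rw [← e1, ← S.lat]; exact B.map_Λ g hg _ hcΛ')
  obtain ⟨k, hk⟩ := S'.root.smul_simple_int S'.reg hc'
    (by rw [← e2, ← S'.lat]; exact B.map_Λ _ (inv_mem hg) _ hcΛ)
  have h1 : (m : ℝ) * k = 1 := by rw [← hm, ← hk]; field_simp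
  have hm0 : (0:ℝ) < m := by rw [← hm]; positivity
  have h1' : m * k = 1 := by exact_mod_cast h1
  have hm0' : 0 < m := by exact_mod_cast hm0
  have hm1 : m = 1 := by
    rcases Int.eq_one_or_neg_one_of_mul_eq_one h1' with h | h
    · exact h
    · omega
  rw [e1, hm, hm1]
  simp

lemma image_Ψ (B : Base G t Ψ Λ) (S' : Side G t v Ψ Λ Φ')
    {θ : V ≃ₗᵢ[ℝ] V} (hθ : θ ∈ G) : Ψ.image θ = Ψ := by
  ext x
  rw [mem_image]
  constructor
  · rintro ⟨y, hy, rfl⟩; exact B.map_Ψ θ hθ y hy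
  · intro hx
    exact ⟨θ⁻¹ x, B.map_Ψ _ (inv_mem hθ) _ hx, θ.apply_symm_apply x⟩

lemma cof_image (B : Base G t Ψ Λ) (S' : Side G t v Ψ Λ Φ')
    {θ : V ≃ₗᵢ[ℝ] V} (hθ : θ ∈ G) (hv : θ v = v) {a : V} (ha : a ∈ simple Ψ v) :
    cof Ψ (Φ'.image θ) v (θ a) = θ (cof Ψ Φ' v a) := by
  have ha' : θ a ∈ simple Ψ v := by
    rw [← image_Ψ B S' hθ]; exact (mem_simple_image hv).2 ha
  have T := S'.image B hθ hv
  by_cases h : a ∈ simple Φ' v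
  · rw [cof_eq_zero B S' ha h, map_zero]
    exact cof_eq_zero B T ha' ((mem_simple_image hv).2 h)
  · obtain ⟨hc, hcΨ, hac⟩ := cof_spec B S' ha h
    refine cof_eq B T ha' ((mem_simple_image hv).2 hc) ?_ (by rwa [θ.inner_map_map])
    intro hmem
    have := B.map_Ψ _ (inv_mem hθ) _ hmem
    exact hcΨ (by simpa [θ.symm_apply_apply] using this)

/-- The measure of agreement between `Φ` and `Φ'`. The number of lower simple roots enters as an
exponent of `3`, so that gaining agreement at a root outweighs losing it at two lower ones. -/
noncomputable def agree (Ψ Φ Φ' : Finset V) (v : V) : ℕ :=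
  ∑ x ∈ simple Ψ v, if cof Ψ Φ v x = cof Ψ Φ' v x then
    3 ^ ((simple Ψ v).filter fun y => ⟪v, y⟫_ℝ < ⟪v, x⟫_ℝ).card else 0

/-- If the two systems disagree at some simple root of `Ψ`, then a transposition of two lower
simple roots of `Ψ` increases the agreement. -/
lemma exists_improve (B : Base G t Ψ Λ) (S : Side G t v Ψ Λ Φ) (S' : Side G t v Ψ Λ Φ')
    {a : V} (ha : a ∈ simple Ψ v) (hne : cof Ψ Φ v a ≠ cof Ψ Φ' v a) :
    ∃ g ∈ G, g v = v ∧ agree Ψ Φ Φ' v < agree Ψ Φ (Φ'.image g) v := by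
  have haΦ : a ∉ simple Φ v := by
    intro h
    have h' : a ∈ simple Φ' v := (mem_simple_iff B S' ha).2 ((mem_simple_iff B S ha).1 h)
    rw [cof_eq_zero B S ha h, cof_eq_zero B S' ha h'] at hne
    exact hne rfl
  have haΦ' : a ∉ simple Φ' v := fun h =>
    haΦ ((mem_simple_iff B S ha).2 ((mem_simple_iff B S' ha).1 h))
  obtain ⟨hc, hcΨ, hac⟩ := cof_spec B S ha haΦ
  obtain ⟨hc', hcΨ', hac'⟩ := cof_spec B S' ha haΦ'
  set c := cof Ψ Φ v a with hcdef
  set c' := cof Ψ Φ' v a with hcdef'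
  have hb := refl_mem_simpleΨ B S hc hcΨ ha
  have hb' := refl_mem_simpleΨ B S' hc' hcΨ' ha
  have hba := refl_ne B S hac
  have hba' := refl_ne B S' hac'
  set b := refl c a with hbdef
  set b' := refl c' a with hbdef'
  have hr := coef_pos B S hc hac
  have hr' := coef_pos B S' hc' hac'
  have e := sub_refl c a
  have e' := sub_refl c' a
  rw [← hbdef] at e
  rw [← hbdef'] at e'
  set r := 2 * ⟪a, c⟫_ℝ / ⟪c, c⟫_ℝ with hrdef
  set r' := 2 * ⟪a, c'⟫_ℝ / ⟪c', c'⟫_ℝ with hrdef'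
  have hbb : b ≠ b' := by
    intro h
    have := eq_of_smul B S S' (one_mem G) hc hc' hr hr' (by
      rw [← e, h, e']; rfl)
    exact hne this.symm
  obtain ⟨p, hp, hpr⟩ := S.refl_mem c (simple_mem hc)
  obtain ⟨q, hq, hqr⟩ := S'.refl_mem c' (simple_mem hc')
  have htΨ : ∀ x ∈ simple Ψ v, x ∈ t := fun x hx => S.sub_t x (S.sub (simple_mem hx))
  set g := p * q * p with hgdef
  have hg : g ∈ G := mul_mem (mul_mem hp hq) hp
  have hgapp : ∀ x, g x = p (q (p x)) := fun x => rfl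
  have pa : p a = b := hpr a (htΨ a ha)
  have pb : p b = a := by rw [hpr b (htΨ b hb), hbdef, refl_refl]
  have qa : q a = b' := hqr a (htΨ a ha)
  have qb : q b' = a := by rw [hqr b' (htΨ b' hb'), hbdef', refl_refl]
  have pfix : ∀ x ∈ simple Ψ v, x ≠ a → x ≠ b → p x = x := fun x hx h1 h2 => by
    rw [hpr x (htΨ x hx)]; exact refl_fix B S hc hcΨ ha hac hx h1 h2
  have qfix : ∀ x ∈ simple Ψ v, x ≠ a → x ≠ b' → q x = x := fun x hx h1 h2 => by
    rw [hqr x (htΨ x hx)]; exact refl_fix B S' hc' hcΨ' ha hac' hx h1 h2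
  have ga : g a = a := by rw [hgapp, pa, qfix b hb hba hbb, pb]
  have gb : g b = b' := by rw [hgapp, pb, qa, pfix b' hb' hba' hbb.symm]
  have gb' : g b' = b := by rw [hgapp, pfix b' hb' hba' hbb.symm, qb, pa]
  have gfix : ∀ x ∈ simple Ψ v, x ≠ b → x ≠ b' → g x = x := by
    intro x hx h1 h2
    by_cases hxa : x = a
    · rw [hxa, ga]
    · rw [hgapp, pfix x hx hxa h1, qfix x hx hxa h2, pfix x hx hxa h1]
  -- the translate of `c'` is proportional, hence equal, to `c`
  have gc : g c' = c := by
    refine eq_of_smul B S S' hg hc hc' hr hr' ?_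
    rw [← map_smul, ← e', map_sub, ga, gb', e]
  have hvb : ⟪v, b⟫_ℝ = ⟪v, b'⟫_ℝ := by
    have i1 : ⟪a, c'⟫_ℝ = ⟪a, c⟫_ℝ := by rw [← g.inner_map_map, ga, gc]
    have i2 : ⟪c', c'⟫_ℝ = ⟪c, c⟫_ℝ := by rw [← g.inner_map_map, gc]
    have i3 := S.root.inner_simple S.reg S.sum hc
    have i4 := S'.root.inner_simple S'.reg S'.sum hc'
    have j1 := congrArg (fun x => ⟪v, x⟫_ℝ) e
    have j2 := congrArg (fun x => ⟪v, x⟫_ℝ) e'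
    simp only [inner_sub_right, inner_smul_right] at j1 j2
    rw [i3] at j1
    rw [i4, i2, hrdef', i1, i2, ← hrdef] at j2
    linarith
  have hgx : ∀ x ∈ simple Ψ v, ⟪v, g x⟫_ℝ = ⟪v, x⟫_ℝ := by
    intro x hx
    by_cases h1 : x = b
    · rw [h1, gb, hvb]
    by_cases h2 : x = b'
    · rw [h2, gb', hvb]
    rw [gfix x hx h1 h2]
  have gg : ∀ x ∈ simple Ψ v, g (g x) = x := by
    intro x hx
    by_cases h1 : x = b
    · rw [h1, gb, gb']
    by_cases h2 : x = b'
    · rw [h2, gb', gb]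
    rw [gfix x hx h1 h2, gfix x hx h1 h2]
  have gmem : ∀ x ∈ simple Ψ v, g x ∈ simple Ψ v := by
    intro x hx
    by_cases h1 : x = b
    · rw [h1, gb]; exact hb'
    by_cases h2 : x = b'
    · rw [h2, gb']; exact hb
    rwa [gfix x hx h1 h2]
  have gv : g v = v := by
    have hvs := v_mem_span B S
    have hgvs : g v ∈ Submodule.span ℝ (simple Ψ v : Set V) := by
      have h := Submodule.mem_map_of_mem (f := (g : V →ₗ[ℝ] V)) hvs
      rw [Submodule.map_span] at h
      refine Submodule.span_mono ?_ h
      rintro _ ⟨y, hy, rfl⟩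
      exact gmem y hy
    have horth : ∀ x ∈ Submodule.span ℝ (simple Ψ v : Set V), ⟪g v - v, x⟫_ℝ = 0 := by
      intro x hx
      induction hx using Submodule.span_induction with
      | mem x hx =>
        rw [inner_sub_left, ← gg x hx, g.inner_map_map, gg x hx, hgx x hx, sub_self]
      | zero => simp
      | add x y _ _ hx hy => rw [inner_add_right, hx, hy, add_zero]
      | smul r x _ hx => rw [inner_smul_right, hx, mul_zero]
    have := horth _ (Submodule.sub_mem _ hgvs hvs)
    exact sub_eq_zero.1 (inner_self_eq_zero.1 this)
  refine ⟨g, hg, gv, ?_⟩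
  have hcof : ∀ x ∈ simple Ψ v, cof Ψ (Φ'.image g) v x = g (cof Ψ Φ' v (g x)) := by
    intro x hx
    have := cof_image B S' hg gv (gmem x hx)
    rwa [gg x hx] at this
  have hkeep : ∀ x ∈ simple Ψ v, x ≠ b → x ≠ b' → cof Ψ Φ v x = cof Ψ Φ' v x →
      cof Ψ Φ v x = cof Ψ (Φ'.image g) v x := by
    intro x hx hxb hxb' h
    rw [hcof x hx, gfix x hx hxb hxb']
    by_cases h0 : x ∈ simple Φ v
    · have := cof_eq_zero B S hx h0
      rw [← h, this, map_zero]
    · have hxΦ' : x ∉ simple Φ' v := (cof_ne_zero B S' hx).1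
        (h ▸ (cof_ne_zero B S hx).2 h0)
      obtain ⟨kd, kdΨ, kxd⟩ := cof_spec B S hx h0
      obtain ⟨kd', kdΨ', kxd'⟩ := cof_spec B S' hx hxΦ'
      rw [← h] at kd' kdΨ' kxd' ⊢
      set d := cof Ψ Φ v x with hd
      have hxa : x ≠ a := by
        rintro rfl
        exact hne h
      have hy := refl_mem_simpleΨ B S kd kdΨ hx
      have ey := sub_refl d x
      have hrd := coef_pos B S kd kxd
      have gy : g (refl d x) = refl d x := by
        refine gfix _ hy ?_ ?_
        · intro hyb
          exact hxa (pred_injective B S hx ha kd kdΨ kxd hc hac hyb)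
        · intro hyb
          exact hxa (pred_injective B S' hx ha kd' kdΨ' kxd' hc' hac' hyb)
      have h5 := congrArg g ey
      rw [map_sub, gfix x hx hxb hxb', gy, map_smul, ey] at h5
      exact (smul_right_injective V hrd.ne') h5
  have hgain : cof Ψ Φ v a = cof Ψ (Φ'.image g) v a := by
    rw [hcof a ha, ga, ← hcdef', gc]
  -- gain at `a`, loss at most at `b` and `b'`, which are lower
  set m : V → ℕ := fun x => ((simple Ψ v).filter fun y => ⟪v, y⟫_ℝ < ⟪v, x⟫_ℝ).card with hm
  have hmb : m b' = m b := by simp only [hm, hvb]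
  have hlt : ⟪v, b⟫_ℝ < ⟪v, a⟫_ℝ := inner_pred_lt B S hc hac
  have hmlt : m b < m a := by
    refine card_lt_card (ssubset_iff_of_subset ?_ |>.2 ⟨b, ?_, ?_⟩)
    · intro y hy
      rw [mem_filter] at hy ⊢
      exact ⟨hy.1, hy.2.trans hlt⟩
    · exact mem_filter.2 ⟨hb, hlt⟩
    · simp
  have hterm : ∀ x ∈ simple Ψ v,
      (if cof Ψ Φ v x = cof Ψ Φ' v x then 3 ^ m x else 0) + (if x = a then 3 ^ m a else 0)
      ≤ (if cof Ψ Φ v x = cof Ψ (Φ'.image g) v x then 3 ^ m x else 0)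
        + ((if x = b then 3 ^ m b else 0) + (if x = b' then 3 ^ m b else 0)) := by
    intro x hx
    by_cases hxa : x = a
    · subst hxa
      rw [if_neg hne, if_pos hgain]
      simp
    rw [if_neg hxa]
    by_cases hxb : x = b
    · subst hxb
      rw [if_pos rfl]
      generalize 3 ^ m b = K
      split_ifs <;> omega
    by_cases hxb' : x = b'
    · subst hxb'
      rw [if_pos rfl, if_neg hxb, hmb]
      generalize 3 ^ m b = K
      split_ifs <;> omega
    by_cases h : cof Ψ Φ v x = cof Ψ Φ' v x
    · rw [if_pos h, if_pos (hkeep x hx hxb hxb' h)]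
      omega
    · rw [if_neg h]; omega
  have hsum := sum_le_sum hterm
  simp only [sum_add_distrib, sum_ite_eq', ha, hb, hb', if_true] at hsum
  have h3 : 3 ^ m b * 3 ≤ 3 ^ m a := by
    rw [← pow_succ]; exact Nat.pow_le_pow_right (by norm_num) hmlt
  have h4 : 0 < 3 ^ m b := by positivity
  change ∑ x ∈ simple Ψ v, (if cof Ψ Φ v x = cof Ψ Φ' v x then 3 ^ m x else 0) <
    ∑ x ∈ simple Ψ v, (if cof Ψ Φ v x = cof Ψ (Φ'.image g) v x then 3 ^ m x else 0)
  omega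

/-- Two root systems with the same sum of positive roots, containing a common `G`-stable
subsystem of full rank, have simple roots conjugate under the stabilizer of `v` in `G`. -/
theorem exists_simple_eq (B : Base G t Ψ Λ) (S : Side G t v Ψ Λ Φ) (S' : Side G t v Ψ Λ Φ') :
    ∃ θ ∈ G, θ v = v ∧ simple Φ v = simple (Φ'.image θ) v := by
  set X : Set ℕ := {k | ∃ θ ∈ G, θ v = v ∧ k = agree Ψ Φ (Φ'.image θ) v}
  have hX : X.Nonempty := ⟨_, 1, one_mem G, rfl, rfl⟩
  have hbdd : BddAbove X := by
    refine ⟨∑ x ∈ simple Ψ v,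
      3 ^ ((simple Ψ v).filter fun y => ⟪v, y⟫_ℝ < ⟪v, x⟫_ℝ).card, ?_⟩
    rintro _ ⟨θ, -, -, rfl⟩
    refine sum_le_sum fun x _ => ?_
    split_ifs
    · exact le_rfl
    · exact Nat.zero_le _
  obtain ⟨θ, hθ, hv, hk⟩ := Nat.sSup_mem hX hbdd
  refine ⟨θ, hθ, hv, ?_⟩
  have T := S'.image B hθ hv
  have hall : ∀ a ∈ simple Ψ v, cof Ψ Φ v a = cof Ψ (Φ'.image θ) v a := by
    by_contra hcon
    push Not at hcon
    obtain ⟨a, ha, hne⟩ := hcon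
    obtain ⟨g, hg, gv, hlt⟩ := exists_improve B S T ha hne
    have : agree Ψ Φ ((Φ'.image θ).image g) v ∈ X := by
      refine ⟨g * θ, mul_mem hg hθ, ?_, ?_⟩
      · change g (θ v) = v
        rw [hv, gv]
      · rw [image_image]; rfl
    have := le_csSup hbdd this
    omega
  exact Subset.antisymm (simple_subset B S T hall)
    (simple_subset B T S fun a ha => (hall a ha).symm)

end Side
end Combi2
end DimDatum

/-! ### Matrix Lie algebras in standard position -/

namespace DimDatum
section LieBasic
open scoped InnerProductSpace Matrix Matrix.Norms.Operator
open Finset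

/-- Complex square matrices of size `n`. -/
abbrev Mat (n : ℕ) := Matrix (Fin n) (Fin n) ℂ
/-- Real vectors of length `n` with the Euclidean inner product. -/
abbrev Euc (n : ℕ) := EuclideanSpace ℝ (Fin n)

variable {n : ℕ}

/-- The real diagonal matrix with diagonal `x`. -/
noncomputable def dg (x : Euc n) : Mat n := Matrix.diagonal fun a => (x a : ℂ)

/-- A complex matrix Lie algebra, closed under adjoints, acting irreducibly on `ℂⁿ` and
stable under the group of its skew-Hermitian part. -/
structure Pre (g : Submodule ℂ (Mat n)) : Prop where
  lie : ∀ A ∈ g, ∀ B ∈ g, ⁅A, B⁆ ∈ g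
  star : ∀ A ∈ g, Aᴴ ∈ g
  irr : ∀ W : Submodule ℂ (Fin n → ℂ), (∀ A ∈ g, ∀ v ∈ W, A *ᵥ v ∈ W) → W = ⊥ ∨ W = ⊤
  exp_conj : ∀ A ∈ g, Aᴴ = -A → ∀ B ∈ g, NormedSpace.exp A * B * NormedSpace.exp (-A) ∈ g

/-- The Lie algebra `g` in standard position: its real diagonal matrices, parametrized by `t`,
form a maximal commuting family of Hermitian elements. -/
structure Std (g : Submodule ℂ (Mat n)) (t : Submodule ℝ (Euc n)) : Prop extends Pre g where
  mem_t : ∀ x, x ∈ t ↔ dg x ∈ g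
  torus : ∀ A ∈ g, (∀ x ∈ t, ⁅dg x, A⁆ = 0) → ∃ d, A = Matrix.diagonal d

lemma br_def (A B : Mat n) : ⁅A, B⁆ = A * B - B * A := rfl
lemma br_skew (A B : Mat n) : -⁅B, A⁆ = ⁅A, B⁆ := by simp only [br_def]; abel
lemma br_jacobi (A B C : Mat n) : ⁅A, ⁅B, C⁆⁆ - ⁅B, ⁅A, C⁆⁆ = ⁅⁅A, B⁆, C⁆ := by
  simp only [br_def]; noncomm_ring
lemma br_neg (A B : Mat n) : ⁅A, -B⁆ = -⁅A, B⁆ := by simp only [br_def]; noncomm_ring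
lemma neg_br (A B : Mat n) : ⁅-A, B⁆ = -⁅A, B⁆ := by simp only [br_def]; noncomm_ring
lemma br_add (A B C : Mat n) : ⁅A, B + C⁆ = ⁅A, B⁆ + ⁅A, C⁆ := by
  simp only [br_def]; noncomm_ring
lemma add_br (A B C : Mat n) : ⁅A + B, C⁆ = ⁅A, C⁆ + ⁅B, C⁆ := by
  simp only [br_def]; noncomm_ring
lemma br_sub (A B C : Mat n) : ⁅A, B - C⁆ = ⁅A, B⁆ - ⁅A, C⁆ := by
  simp only [br_def]; noncomm_ring
lemma sub_br (A B C : Mat n) : ⁅A - B, C⁆ = ⁅A, C⁆ - ⁅B, C⁆ := by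
  simp only [br_def]; noncomm_ring
lemma br_smul (c : ℂ) (A B : Mat n) : ⁅A, c • B⁆ = c • ⁅A, B⁆ := by
  simp only [br_def, mul_smul_comm, smul_mul_assoc, smul_sub]
lemma smul_br (c : ℂ) (A B : Mat n) : ⁅c • A, B⁆ = c • ⁅A, B⁆ := by
  simp only [br_def, mul_smul_comm, smul_mul_assoc, smul_sub]
lemma br_self (A : Mat n) : ⁅A, A⁆ = 0 := by simp [br_def]
lemma br_zero (A : Mat n) : ⁅A, (0 : Mat n)⁆ = 0 := by simp [br_def]
lemma zero_br (A : Mat n) : ⁅(0 : Mat n), A⁆ = 0 := by simp [br_def]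

/-! ### Diagonal matrices -/

lemma dg_apply (x : Euc n) (a b : Fin n) : dg x a b = if a = b then (x a : ℂ) else 0 := by
  simp [dg, Matrix.diagonal_apply]

lemma dg_add (x y : Euc n) : dg (x + y) = dg x + dg y := by
  ext a b; simp only [dg_apply, Matrix.add_apply]; split_ifs <;> simp

lemma dg_smul (r : ℝ) (x : Euc n) : dg (r • x) = (r : ℂ) • dg x := by
  ext a b; simp only [dg_apply, Matrix.smul_apply]; split_ifs <;> simp

lemma dg_sub (x y : Euc n) : dg (x - y) = dg x - dg y := by
  ext a b; simp only [dg_apply, Matrix.sub_apply]; split_ifs <;> simp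

lemma dg_neg (x : Euc n) : dg (-x) = -dg x := by
  ext a b; simp only [dg_apply, Matrix.neg_apply]; split_ifs <;> simp

lemma dg_star (x : Euc n) : (dg x)ᴴ = dg x := by
  simp [dg, Matrix.diagonal_conjTranspose, Pi.star_def]

lemma dg_injective : Function.Injective (dg (n := n)) := by
  intro x y h
  ext a
  have := congrFun (congrFun h a) a
  simpa [dg] using this

lemma lie_dg_apply (x : Euc n) (A : Mat n) (a b : Fin n) :
    ⁅dg x, A⁆ a b = ((x a - x b : ℝ) : ℂ) * A a b := by
  simp [br_def, dg, Matrix.sub_apply, Matrix.diagonal_mul, Matrix.mul_diagonal]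
  ring

lemma trace_dg_mul (x y : Euc n) : (dg x * dg y).trace = ((⟪x, y⟫_ℝ : ℝ) : ℂ) := by
  simp [dg, Matrix.trace, PiLp.inner_apply, mul_comm]

/-! ### The Hilbert–Schmidt norm -/

/-- The square of the Hilbert–Schmidt norm. -/
noncomputable def nsq (A : Mat n) : ℝ := ((Aᴴ * A).trace).re

lemma trace_eq_sum (A B : Mat n) : (Aᴴ * B).trace = ∑ b, ∑ a, star (A a b) * B a b := by
  simp [Matrix.trace, Matrix.mul_apply]

lemma nsq_eq (A : Mat n) : nsq A = ∑ b, ∑ a, ‖A a b‖ ^ 2 := by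
  simp only [nsq, trace_eq_sum, Complex.re_sum]
  refine sum_congr rfl fun b _ => sum_congr rfl fun a _ => ?_
  simp [Complex.sq_norm, Complex.normSq_apply]

lemma trace_star_mul_self (A : Mat n) : (Aᴴ * A).trace = (nsq A : ℂ) := by
  rw [nsq_eq, trace_eq_sum]
  push_cast
  refine sum_congr rfl fun b _ => sum_congr rfl fun a _ => ?_
  exact Complex.conj_mul' _

lemma nsq_nonneg (A : Mat n) : 0 ≤ nsq A := by
  rw [nsq_eq]; positivity

lemma nsq_eq_zero {A : Mat n} : nsq A = 0 ↔ A = 0 := by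
  constructor
  · intro h
    rw [nsq_eq, sum_eq_zero_iff_of_nonneg fun _ _ => by positivity] at h
    ext a b
    have := h b (mem_univ b)
    rw [sum_eq_zero_iff_of_nonneg fun _ _ => by positivity] at this
    simpa using this a (mem_univ a)
  · rintro rfl
    simp [nsq]

lemma nsq_pos {A : Mat n} (h : A ≠ 0) : 0 < nsq A :=
  lt_of_le_of_ne (nsq_nonneg A) fun h0 => h (nsq_eq_zero.1 h0.symm)

lemma nsq_star (A : Mat n) : nsq Aᴴ = nsq A := by
  rw [nsq, nsq, Matrix.conjTranspose_conjTranspose, Matrix.trace_mul_comm]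

lemma lie_star (A B : Mat n) : ⁅A, B⁆ᴴ = ⁅Bᴴ, Aᴴ⁆ := by
  simp [br_def, Matrix.conjTranspose_sub, Matrix.conjTranspose_mul]

lemma trace_lie_mul (A B C : Mat n) : (⁅A, B⁆ * C).trace = (A * ⁅B, C⁆).trace := by
  simp only [br_def, sub_mul, mul_sub, Matrix.trace_sub]
  congr 1
  · rw [mul_assoc]
  · rw [mul_assoc, Matrix.trace_mul_comm, mul_assoc]

lemma trace_lie_star_mul (e f A : Mat n) :
    (⁅e, f⁆ᴴ * A).trace = (fᴴ * ⁅eᴴ, A⁆).trace := by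
  rw [lie_star, trace_lie_mul]

lemma trace_lie_lie (e f : Mat n) : (nsq ⁅e, f⁆ : ℂ) = (fᴴ * ⁅eᴴ, ⁅e, f⁆⁆).trace := by
  rw [← trace_star_mul_self, trace_lie_star_mul]

lemma nsq_lie_sub (e f : Mat n) :
    (nsq ⁅e, f⁆ : ℂ) - nsq ⁅eᴴ, f⁆ = (fᴴ * ⁅⁅eᴴ, e⁆, f⁆).trace := by
  rw [trace_lie_lie, trace_lie_lie, ← Matrix.trace_sub, ← mul_sub,
    Matrix.conjTranspose_conjTranspose, br_jacobi]

/-! ### Weights of the coordinate vectors -/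

/-- The restriction to `t` of the `a`-th coordinate, as a vector of `t`. -/
noncomputable def wt (t : Submodule ℝ (Euc n)) (a : Fin n) : Euc n :=
  t.starProjection (EuclideanSpace.single a 1)

variable {t : Submodule ℝ (Euc n)} {g : Submodule ℂ (Mat n)}

lemma wt_mem (a : Fin n) : wt t a ∈ t := Submodule.starProjection_apply_mem _ _

lemma inner_wt {x : Euc n} (hx : x ∈ t) (a : Fin n) : ⟪wt t a, x⟫_ℝ = x a := by
  rw [wt, Submodule.inner_starProjection_left_eq_right, Submodule.starProjection_eq_self_iff.2 hx]
  simp [EuclideanSpace.inner_single_left]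

lemma inner_wt' {x : Euc n} (hx : x ∈ t) (a : Fin n) : ⟪x, wt t a⟫_ℝ = x a := by
  rw [real_inner_comm, inner_wt hx]

lemma sum_wt (x : Euc n) : ∑ a, x a • wt t a = t.starProjection x := by
  have : x = ∑ a, x a • EuclideanSpace.single a (1 : ℝ) := by
    ext b
    simp [Finset.sum_apply, Pi.single_apply]
  conv_rhs => rw [this]
  simp [wt]

lemma parseval {x : Euc n} (hx : x ∈ t) : ∑ a, x a • wt t a = x := by
  rw [sum_wt, Submodule.starProjection_eq_self_iff.2 hx]

lemma eq_of_inner {x y : Euc n} (hx : x ∈ t) (hy : y ∈ t)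
    (h : ∀ z ∈ t, ⟪x, z⟫_ℝ = ⟪y, z⟫_ℝ) : x = y := by
  have := h (x - y) (t.sub_mem hx hy)
  rw [← sub_eq_zero, ← inner_sub_left] at this
  exact sub_eq_zero.1 (inner_self_eq_zero.1 this)

/-- The weight space of `g` for the weight `α` of `t`. -/
def gs (g : Submodule ℂ (Mat n)) (t : Submodule ℝ (Euc n)) (α : Euc n) : Submodule ℂ (Mat n) where
  carrier := {A | A ∈ g ∧ ∀ a b, A a b ≠ 0 → wt t a - wt t b = α}
  add_mem' := by
    rintro A B ⟨hA, hA'⟩ ⟨hB, hB'⟩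
    refine ⟨g.add_mem hA hB, fun a b h => ?_⟩
    by_cases h1 : A a b = 0
    · refine hB' a b fun h2 => h ?_
      simp [h1, h2]
    · exact hA' a b h1
  zero_mem' := ⟨g.zero_mem, by simp⟩
  smul_mem' := by
    rintro c A ⟨hA, hA'⟩
    exact ⟨g.smul_mem c hA, fun a b h => hA' a b fun h1 => h (by simp [h1])⟩

lemma gs_le (α : Euc n) : gs g t α ≤ g := fun _ h => h.1

lemma gs_apply {α : Euc n} {A : Mat n} (h : A ∈ gs g t α) {a b : Fin n} (hab : A a b ≠ 0) :
    wt t a - wt t b = α := h.2 a b hab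

lemma lie_dg_gs {α : Euc n} {A : Mat n} (h : A ∈ gs g t α) {x : Euc n} (hx : x ∈ t) :
    ⁅dg x, A⁆ = ((⟪α, x⟫_ℝ : ℝ) : ℂ) • A := by
  ext a b
  rw [lie_dg_apply, Matrix.smul_apply, smul_eq_mul]
  by_cases h0 : A a b = 0
  · simp [h0]
  · rw [← gs_apply h h0, inner_sub_left, inner_wt hx, inner_wt hx]

lemma mem_gs_of_lie {α : Euc n} (hα : α ∈ t) {A : Mat n} (hA : A ∈ g)
    (h : ∀ x ∈ t, ⁅dg x, A⁆ = ((⟪α, x⟫_ℝ : ℝ) : ℂ) • A) : A ∈ gs g t α := by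
  refine ⟨hA, fun a b hab => eq_of_inner (t.sub_mem (wt_mem a) (wt_mem b)) hα fun x hx => ?_⟩
  have := congrFun (congrFun (h x hx) a) b
  rw [lie_dg_apply, Matrix.smul_apply, smul_eq_mul] at this
  have := mul_right_cancel₀ hab this
  rw [inner_sub_left, inner_wt hx, inner_wt hx]
  exact_mod_cast this

lemma mem_t_of_gs {α : Euc n} {A : Mat n} (h : A ∈ gs g t α) (h0 : A ≠ 0) : α ∈ t := by
  have : ∃ a b, A a b ≠ 0 := by
    by_contra hcon
    push Not at hcon
    exact h0 (by ext a b; simp [hcon])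
  obtain ⟨a, b, hab⟩ := this
  rw [← gs_apply h hab]
  exact t.sub_mem (wt_mem a) (wt_mem b)

lemma gs_lie (hs : Std g t) {α β : Euc n} {A B : Mat n} (hA : A ∈ gs g t α) (hB : B ∈ gs g t β) :
    ⁅A, B⁆ ∈ gs g t (α + β) := by
  refine ⟨hs.lie A hA.1 B hB.1, fun a b hab => ?_⟩
  rw [br_def, Matrix.sub_apply, Matrix.mul_apply, Matrix.mul_apply] at hab
  by_cases h1 : ∃ c, A a c * B c b ≠ 0
  · obtain ⟨c, hc⟩ := h1
    rw [← gs_apply hA (left_ne_zero_of_mul hc), ← gs_apply hB (right_ne_zero_of_mul hc)]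
    abel
  · by_cases h2 : ∃ c, B a c * A c b ≠ 0
    · obtain ⟨c, hc⟩ := h2
      rw [← gs_apply hA (right_ne_zero_of_mul hc), ← gs_apply hB (left_ne_zero_of_mul hc)]
      abel
    · push Not at h1 h2
      simp [h1, h2] at hab

lemma gs_star (hs : Std g t) {α : Euc n} {A : Mat n} (hA : A ∈ gs g t α) :
    Aᴴ ∈ gs g t (-α) := by
  refine ⟨hs.star A hA.1, fun a b hab => ?_⟩
  rw [← gs_apply hA (a := b) (b := a) (by simpa using hab)]
  abel

/-! ### Weight space decomposition -/

open Classical in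
/-- All differences of two weights. -/
noncomputable def diffs (t : Submodule ℝ (Euc n)) : Finset (Euc n) :=
  univ.image fun p : Fin n × Fin n => wt t p.1 - wt t p.2

open Classical in
/-- The component of `A` of weight `α`. -/
noncomputable def comp (t : Submodule ℝ (Euc n)) (α : Euc n) (A : Mat n) : Mat n :=
  Matrix.of fun a b => if wt t a - wt t b = α then A a b else 0

lemma mem_diffs (a b : Fin n) : wt t a - wt t b ∈ diffs t := by
  classical
  exact mem_image.2 ⟨(a, b), mem_univ _, rfl⟩

lemma diffs_sub {α : Euc n} (h : α ∈ diffs t) : α ∈ t := by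
  classical
  obtain ⟨p, -, rfl⟩ := mem_image.1 h
  exact t.sub_mem (wt_mem _) (wt_mem _)

lemma prod_mem (hs : Std g t) {α : Euc n} (hα : α ∈ t) (S : Finset (Euc n))
    (hS : ∀ β ∈ S, β ∈ t) {A : Mat n} (hA : A ∈ g) :
    (Matrix.of fun a b => ((∏ β ∈ S, ⟪α - β, wt t a - wt t b - β⟫_ℝ : ℝ) : ℂ) * A a b) ∈ g := by
  classical
  induction S using Finset.induction_on with
  | empty =>
    simp only [prod_empty, Complex.ofReal_one, one_mul]
    exact hA
  | insert β S hβ ih =>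
    have h1 := ih fun γ hγ => hS γ (mem_insert_of_mem hγ)
    set B := (Matrix.of fun a b =>
      ((∏ β ∈ S, ⟪α - β, wt t a - wt t b - β⟫_ℝ : ℝ) : ℂ) * A a b) with hB
    have hβt := hS β (mem_insert_self _ _)
    have hd : α - β ∈ t := t.sub_mem hα hβt
    have h2 := g.sub_mem (hs.lie _ ((hs.mem_t _).1 hd) _ h1)
      (g.smul_mem ((⟪α - β, β⟫_ℝ : ℝ) : ℂ) h1)
    convert h2 using 1
    ext a b
    rw [Matrix.sub_apply, lie_dg_apply, Matrix.smul_apply, smul_eq_mul, ← sub_mul, hB,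
      Matrix.of_apply, Matrix.of_apply, prod_insert hβ, inner_sub_right, inner_sub_right,
      inner_wt' hd, inner_wt' hd]
    push_cast
    ring

lemma comp_mem (hs : Std g t) (α : Euc n) {A : Mat n} (hA : A ∈ g) :
    comp t α A ∈ gs g t α := by
  classical
  refine ⟨?_, fun a b hab => ?_⟩
  · by_cases hα : α ∈ diffs t
    · have h1 := prod_mem hs (diffs_sub hα) ((diffs t).erase α)
        (fun β hβ => diffs_sub (mem_of_mem_erase hβ)) hA
      have h2 := g.smul_mem (((∏ β ∈ (diffs t).erase α, ⟪α - β, α - β⟫_ℝ : ℝ) : ℂ)⁻¹) h1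
      convert h2 using 1
      ext a b
      rw [comp, Matrix.of_apply, Matrix.smul_apply, Matrix.of_apply, smul_eq_mul]
      split_ifs with h
      · rw [h, inv_mul_cancel_left₀]
        norm_cast
        refine prod_ne_zero_iff.2 fun β hβ => (inner_self_pos' ?_).ne'
        exact sub_ne_zero.2 fun h => (mem_erase.1 hβ).1 h.symm
      · have : ∏ β ∈ (diffs t).erase α, ⟪α - β, wt t a - wt t b - β⟫_ℝ = 0 :=
          prod_eq_zero (mem_erase.2 ⟨h, mem_diffs a b⟩) (by rw [sub_self, inner_zero_right])
        rw [this]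
        simp
    · convert g.zero_mem
      ext a b
      rw [comp, Matrix.of_apply, if_neg]
      · rfl
      · rintro rfl
        exact hα (mem_diffs a b)
  · by_contra h
    simp [comp, h] at hab

lemma sum_comp (A : Mat n) : ∑ α ∈ diffs t, comp t α A = A := by
  classical
  ext a b
  simp [Matrix.sum_apply, comp, mem_diffs]

open Classical in
/-- The roots of `g`: the nonzero weights of `g`. -/
noncomputable def roots (g : Submodule ℂ (Mat n)) (t : Submodule ℝ (Euc n)) : Finset (Euc n) :=
  (diffs t).filter fun α => α ≠ 0 ∧ ∃ A ∈ gs g t α, A ≠ 0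

lemma mem_roots {α : Euc n} : α ∈ roots g t ↔ α ≠ 0 ∧ ∃ A ∈ gs g t α, A ≠ 0 := by
  classical
  rw [roots, mem_filter, and_iff_right_iff_imp]
  rintro ⟨-, A, hA, h0⟩
  have : ∃ a b, A a b ≠ 0 := by
    by_contra hcon
    push Not at hcon
    exact h0 (by ext a b; simp [hcon])
  obtain ⟨a, b, hab⟩ := this
  rw [← gs_apply hA hab]
  exact mem_diffs a b

lemma roots_sub {α : Euc n} (h : α ∈ roots g t) : α ∈ t := by
  obtain ⟨-, A, hA, h0⟩ := mem_roots.1 h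
  exact mem_t_of_gs hA h0

/-! ### The zero weight space and the coroots -/

lemma gs_zero_diag (hs : Std g t) {A : Mat n} (hA : A ∈ gs g t 0) :
    ∃ d, A = Matrix.diagonal d := by
  refine hs.torus A hA.1 fun x hx => ?_
  rw [lie_dg_gs hA hx]
  simp

lemma gs_zero_herm (hs : Std g t) {A : Mat n} (hA : A ∈ gs g t 0) (hh : Aᴴ = A) :
    ∃ x ∈ t, A = dg x := by
  obtain ⟨d, hd⟩ := gs_zero_diag hs hA
  have hx : A = dg (WithLp.toLp 2 fun a => (d a).re) := by
    rw [hd, dg]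
    congr 1
    funext a
    have : A a a = star (A a a) := by
      conv_lhs => rw [← hh]
      rfl
    rw [hd] at this
    simp only [Matrix.diagonal_apply_eq] at this
    exact (Complex.conj_eq_iff_re.1 this.symm).symm
  exact ⟨_, (hs.mem_t _).2 (hx ▸ hA.1), hx⟩

/-- An element of `gs 0` is determined by its products with the torus. -/
lemma gs_zero_eq (hs : Std g t) {A : Mat n} (hA : A ∈ gs g t 0) :
    ∃ x ∈ t, ∃ y ∈ t, A = dg x + Complex.I • dg y := by
  have hA' : Aᴴ ∈ gs g t 0 := by simpa using gs_star hs hA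
  obtain ⟨x, hx, hx'⟩ := gs_zero_herm hs (A := (1 / 2 : ℂ) • (A + Aᴴ))
    ((gs g t 0).smul_mem _ ((gs g t 0).add_mem hA hA')) (by
      simp [Matrix.conjTranspose_smul, add_comm])
  obtain ⟨y, hy, hy'⟩ := gs_zero_herm hs (A := (-Complex.I / 2 : ℂ) • (A - Aᴴ))
    ((gs g t 0).smul_mem _ ((gs g t 0).sub_mem hA hA')) (by
      simp only [Matrix.conjTranspose_smul, Matrix.conjTranspose_sub,
        Matrix.conjTranspose_conjTranspose]
      simp [neg_div, ← smul_neg])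
  refine ⟨x, hx, y, hy, ?_⟩
  rw [← hx', ← hy', smul_smul]
  have : Complex.I * (-Complex.I / 2) = 1 / 2 := by
    rw [mul_div_assoc', mul_neg, Complex.I_mul_I, neg_neg]
  rw [this, ← smul_add]
  have : A + Aᴴ + (A - Aᴴ) = (2 : ℂ) • A := by rw [two_smul]; abel
  rw [this, smul_smul]
  norm_num

lemma gs_zero_eq_zero (hs : Std g t) {A : Mat n} (hA : A ∈ gs g t 0)
    (h : ∀ x ∈ t, (dg x * A).trace = 0) : A = 0 := by
  obtain ⟨x, hx, y, hy, rfl⟩ := gs_zero_eq hs hA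
  have h1 := h x hx
  have h2 := h y hy
  rw [mul_add, Matrix.trace_add, mul_smul_comm, Matrix.trace_smul, trace_dg_mul, trace_dg_mul,
    smul_eq_mul] at h1 h2
  have e1 := congrArg Complex.re h1
  have e2 := congrArg Complex.im h2
  simp only [Complex.add_re, Complex.add_im, Complex.ofReal_re, Complex.ofReal_im, Complex.mul_re,
    Complex.mul_im, Complex.I_re, Complex.I_im, Complex.zero_re, Complex.zero_im] at e1 e2
  have e1' : ⟪x, x⟫_ℝ = 0 := by linarith
  have e2' : ⟪y, y⟫_ℝ = 0 := by linarith
  rw [inner_self_eq_zero.1 e1', inner_self_eq_zero.1 e2']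
  ext a b
  simp [dg_apply]

lemma trace_dg_lie {α : Euc n} {A : Mat n} (hA : A ∈ gs g t α) (B : Mat n) {x : Euc n}
    (hx : x ∈ t) : (dg x * ⁅A, B⁆).trace = ((⟪α, x⟫_ℝ : ℝ) : ℂ) * (A * B).trace := by
  rw [← trace_lie_mul, lie_dg_gs hA hx, smul_mul_assoc, Matrix.trace_smul, smul_eq_mul]

lemma lie_star_self (hs : Std g t) {α : Euc n} {e : Mat n} (he : e ∈ gs g t α) :
    ⁅e, eᴴ⁆ = (nsq e : ℂ) • dg α := by
  by_cases h0 : e = 0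
  · simp [h0, nsq, br_def]
  have hα := mem_t_of_gs he h0
  have h1 : ⁅e, eᴴ⁆ ∈ gs g t 0 := by simpa using gs_lie hs he (gs_star hs he)
  have h2 : (nsq e : ℂ) • dg α ∈ gs g t 0 := by
    refine (gs g t 0).smul_mem _ ⟨(hs.mem_t _).1 hα, fun a b hab => ?_⟩
    by_cases h : a = b
    · simp [h]
    · simp [dg_apply, h] at hab
  refine sub_eq_zero.1 (gs_zero_eq_zero hs ((gs g t 0).sub_mem h1 h2) fun x hx => ?_)
  rw [mul_sub, Matrix.trace_sub, trace_dg_lie he _ hx, mul_smul_comm, Matrix.trace_smul,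
    trace_dg_mul, Matrix.trace_mul_comm, trace_star_mul_self, real_inner_comm, smul_eq_mul]
  ring

/-- The basic norm identity for root vectors. -/
lemma nsq_lie (hs : Std g t) {α β : Euc n} {e f : Mat n} (he : e ∈ gs g t α)
    (hf : f ∈ gs g t β) :
    nsq ⁅eᴴ, f⁆ = nsq ⁅e, f⁆ + nsq e * ⟪α, β⟫_ℝ * nsq f := by
  by_cases h0 : e = 0
  · simp [h0, nsq, br_def]
  have hα := mem_t_of_gs he h0
  have h := nsq_lie_sub e f
  rw [← br_skew eᴴ e, lie_star_self hs he, neg_br, smul_br, lie_dg_gs hf hα, mul_neg,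
    Matrix.trace_neg, mul_smul_comm, mul_smul_comm, Matrix.trace_smul, Matrix.trace_smul,
    trace_star_mul_self, real_inner_comm] at h
  simp only [smul_eq_mul] at h
  have h' : (nsq ⁅e, f⁆ : ℝ) - nsq ⁅eᴴ, f⁆ = -(nsq e * (⟪α, β⟫_ℝ * nsq f)) := by exact_mod_cast h
  linarith

lemma gs_eq_zero (hs : Std g t) {α : Euc n} (hα : α ≠ 0) {e f : Mat n} (he : e ∈ gs g t α)
    (h0 : e ≠ 0) (hf : f ∈ gs g t α) (h : (eᴴ * f).trace = 0) : f = 0 := by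
  have h1 : ⁅eᴴ, f⁆ = 0 := by
    have hm : ⁅eᴴ, f⁆ ∈ gs g t 0 := by simpa using gs_lie hs (gs_star hs he) hf
    refine gs_zero_eq_zero hs hm fun x hx => ?_
    rw [trace_dg_lie (gs_star hs he) _ hx, h, mul_zero]
  have h2 := nsq_lie hs he hf
  rw [h1, nsq_eq_zero.2 rfl] at h2
  by_contra hf0
  have h3 : 0 < nsq e * ⟪α, α⟫_ℝ * nsq f :=
    mul_pos (mul_pos (nsq_pos h0) (inner_self_pos' hα)) (nsq_pos hf0)
  linarith [nsq_nonneg ⁅e, f⁆]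

/-- Root spaces are one-dimensional. -/
lemma gs_eq_smul (hs : Std g t) {α : Euc n} (hα : α ≠ 0) {e f : Mat n} (he : e ∈ gs g t α)
    (h0 : e ≠ 0) (hf : f ∈ gs g t α) : f = ((eᴴ * f).trace / nsq e) • e := by
  have hn : (nsq e : ℂ) ≠ 0 := by exact_mod_cast (nsq_pos h0).ne'
  refine sub_eq_zero.1 (gs_eq_zero hs hα he h0 ((gs g t α).sub_mem hf
    ((gs g t α).smul_mem _ he)) ?_)
  rw [mul_sub, Matrix.trace_sub, mul_smul_comm, Matrix.trace_smul, trace_star_mul_self,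
    smul_eq_mul, div_mul_cancel₀ _ hn, sub_self]

end LieBasic
end DimDatum

/-! ### Reflections and coordinate permutations -/

namespace DimDatum
section LieRefl
open scoped InnerProductSpace Matrix Matrix.Norms.Operator
open Finset

variable {n : ℕ} {t : Submodule ℝ (Euc n)} {g : Submodule ℂ (Mat n)}

lemma nsq_smul (c : ℂ) (A : Mat n) : nsq (c • A) = ‖c‖ ^ 2 * nsq A := by
  simp only [nsq_eq, Matrix.smul_apply, norm_smul, mul_pow, mul_sum]

lemma exists_unit {α : Euc n} (h : α ∈ roots g t) : ∃ e ∈ gs g t α, nsq e = 1 := by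
  obtain ⟨-, A, hA, h0⟩ := mem_roots.1 h
  have hp := nsq_pos h0
  refine ⟨((Real.sqrt (nsq A))⁻¹ : ℝ) • A, ?_, ?_⟩
  · have := (gs g t α).smul_mem (((Real.sqrt (nsq A))⁻¹ : ℝ) : ℂ) hA
    exact this
  · have : ((Real.sqrt (nsq A))⁻¹ : ℝ) • A = (((Real.sqrt (nsq A))⁻¹ : ℝ) : ℂ) • A := rfl
    rw [this, nsq_smul, Complex.norm_real, Real.norm_eq_abs, sq_abs, inv_pow,
      Real.sq_sqrt hp.le, inv_mul_cancel₀ hp.ne']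

lemma ne_zero_of_nsq {e : Mat n} (h : nsq e = 1) : e ≠ 0 := by
  rintro rfl
  rw [nsq_eq_zero.2 rfl] at h
  exact zero_ne_one h

lemma mem_roots_of {α : Euc n} (h : α ≠ 0) {e : Mat n} (he : e ∈ gs g t α) (h0 : e ≠ 0) :
    α ∈ roots g t := mem_roots.2 ⟨h, e, he, h0⟩

lemma roots_neg (hs : Std g t) {α : Euc n} (h : α ∈ roots g t) : -α ∈ roots g t := by
  obtain ⟨h0, A, hA, hA0⟩ := mem_roots.1 h
  exact mem_roots_of (neg_ne_zero.2 h0) (gs_star hs hA)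
    (by rwa [Ne, Matrix.conjTranspose_eq_zero])

lemma lie_star_ne_zero (hs : Std g t) {α β : Euc n} {e f : Mat n} (he : e ∈ gs g t β)
    (hf : f ∈ gs g t α) (he0 : e ≠ 0) (hf0 : f ≠ 0) (h : 0 < ⟪α, β⟫_ℝ) : ⁅eᴴ, f⁆ ≠ 0 := by
  intro h1
  have h2 := nsq_lie hs he hf
  rw [h1, nsq_eq_zero.2 rfl, real_inner_comm] at h2
  have := mul_pos (mul_pos (nsq_pos he0) h) (nsq_pos hf0)
  linarith [nsq_nonneg ⁅e, f⁆]

lemma roots_sub_mem (hs : Std g t) {α β : Euc n} (hα : α ∈ roots g t) (hβ : β ∈ roots g t)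
    (h : 0 < ⟪α, β⟫_ℝ) (hne : α ≠ β) : α - β ∈ roots g t := by
  obtain ⟨-, f, hf, hf0⟩ := mem_roots.1 hα
  obtain ⟨-, e, he, he0⟩ := mem_roots.1 hβ
  refine mem_roots_of (sub_ne_zero.2 hne) ?_ (lie_star_ne_zero hs he hf he0 hf0 h)
  have := gs_lie hs (gs_star hs he) hf
  rwa [neg_add_eq_sub] at this

lemma roots_two (hs : Std g t) {α : Euc n} (hα : α ∈ roots g t) : (2 : ℝ) • α ∉ roots g t := by
  intro h2
  obtain ⟨h0, e, he, he0⟩ := mem_roots.1 hα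
  obtain ⟨-, f, hf, hf0⟩ := mem_roots.1 h2
  have hpos : 0 < ⟪(2 : ℝ) • α, α⟫_ℝ := by
    rw [inner_smul_left]
    have := inner_self_pos' h0
    simp only [conj_trivial]
    linarith
  have h1 := lie_star_ne_zero hs he hf he0 hf0 hpos
  have hm : ⁅eᴴ, f⁆ ∈ gs g t α := by
    have := gs_lie hs (gs_star hs he) hf
    rwa [two_smul, neg_add_cancel_left] at this
  have h3 := trace_lie_lie eᴴ f
  rw [Matrix.conjTranspose_conjTranspose] at h3
  have h4 : ⁅e, ⁅eᴴ, f⁆⁆ = 0 := by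
    rw [gs_eq_smul hs h0 he he0 hm, br_smul, br_self, smul_zero]
  rw [h4, mul_zero, Matrix.trace_zero] at h3
  exact h1 (nsq_eq_zero.1 (by exact_mod_cast h3))

/-- Rotating the torus by the one-parameter group of `e - eᴴ`. -/
lemma rotate (hs : Std g t) {α : Euc n} (hα : α ≠ 0) {e : Mat n} (he : e ∈ gs g t α)
    (hn : nsq e = 1) :
    ∃ k ∈ g, kᴴ = -k ∧ ∀ x ∈ t,
      NormedSpace.exp k * dg x * NormedSpace.exp (-k) = dg (refl α x) := by
  have he0 := ne_zero_of_nsq hn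
  have hαt := mem_t_of_gs he he0
  have hpos := inner_self_pos' hα
  set ω : ℝ := Real.sqrt (2 * ⟪α, α⟫_ℝ) with hω
  have hω2 : ω ^ 2 = 2 * ⟪α, α⟫_ℝ := Real.sq_sqrt (by positivity)
  have hω0 : ω ≠ 0 := (Real.sqrt_pos.2 (by positivity)).ne'
  set k := e - eᴴ with hk
  set p := e + eᴴ with hp
  have hkstar : kᴴ = -k := by simp [hk]
  have hkx : ∀ x ∈ t, ⁅k, dg x⁆ = -(⟪α, x⟫_ℝ • p) := by
    intro x hx
    rw [← br_skew, hk, br_sub, lie_dg_gs he hx, lie_dg_gs (gs_star hs he) hx, inner_neg_left, hp]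
    push_cast
    rw [neg_smul, sub_neg_eq_add, ← smul_add]
    rfl
  have hkp : ⁅k, p⁆ = (2 : ℝ) • dg α := by
    rw [hk, hp, br_add, sub_br, sub_br, br_self, br_self, ← br_skew eᴴ e, lie_star_self hs he, hn]
    simp only [Complex.ofReal_one, one_smul, zero_sub, neg_neg, sub_zero, two_smul]
  refine ⟨(Real.pi / ω) • k, g.smul_mem ((Real.pi / ω : ℝ) : ℂ)
    (g.sub_mem he.1 (hs.star e he.1)), ?_, ?_⟩
  · rw [Matrix.conjTranspose_smul, hkstar]; simp
  intro x hx
  set c := ⟪α, x⟫_ℝ with hc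
  set F : ℝ → Mat n := fun s => dg x - (c * (Real.sin (ω * s) / ω)) • p
    - (c * (2 * (1 - Real.cos (ω * s)) / ω ^ 2)) • dg α with hF
  have hFd : ∀ s, HasDerivAt F ⁅k, F s⁆ s := by
    intro s
    have hl : HasDerivAt (fun s : ℝ => ω * s) ω s := by simpa using (hasDerivAt_id s).const_mul ω
    have h1 : HasDerivAt (fun s => c * (Real.sin (ω * s) / ω)) (c * Real.cos (ω * s)) s := by
      have := ((hl.sin).div_const ω).const_mul c
      refine this.congr_deriv ?_
      field_simp
    have h2 : HasDerivAt (fun s => c * (2 * (1 - Real.cos (ω * s)) / ω ^ 2))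
        (c * (2 * Real.sin (ω * s) / ω)) s := by
      have := ((((hl.cos).const_sub 1).const_mul 2).div_const (ω ^ 2)).const_mul c
      refine this.congr_deriv ?_
      field_simp
    have h3 := ((hasDerivAt_const s (dg x)).sub (h1.smul_const p)).sub (h2.smul_const (dg α))
    refine h3.congr_deriv ?_
    have rs : ∀ (r : ℝ) (A : Mat n), ⁅k, r • A⁆ = r • ⁅k, A⁆ := fun r A => br_smul (r : ℂ) k A
    simp only [hF, br_sub, rs, hkx x hx, hkx α hαt, hkp]
    simp only [smul_neg, smul_smul]
    have e1 : c * (2 * (1 - Real.cos (ω * s)) / ω ^ 2) * ⟪α, α⟫_ℝ = c - c * Real.cos (ω * s) := by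
      rw [hω2]
      field_simp
    rw [e1, sub_smul]
    have e2 : c * (Real.sin (ω * s) / ω) * 2 = c * (2 * Real.sin (ω * s) / ω) := by ring
    rw [e2]
    module
  have hK : ∀ s, HasDerivAt (fun s : ℝ => NormedSpace.exp (s • (-k)) * F s *
      NormedSpace.exp (s • k)) 0 s := by
    intro s
    have h1 := hasDerivAt_exp_smul_const (𝕂 := ℝ) (-k) s
    have h2 := hasDerivAt_exp_smul_const' (𝕂 := ℝ) k s
    have h3 := (h1.mul (hFd s)).mul h2
    refine h3.congr_deriv ?_
    rw [br_def]
    simp only [Pi.mul_apply]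
    noncomm_ring
  have hconst : NormedSpace.exp ((Real.pi / ω) • (-k)) * F (Real.pi / ω) *
      NormedSpace.exp ((Real.pi / ω) • k) = dg x := by
    have := is_const_of_deriv_eq_zero (fun s => (hK s).differentiableAt) (fun s => (hK s).deriv)
      (Real.pi / ω) 0
    simp only [zero_smul, NormedSpace.exp_zero, one_mul, mul_one] at this
    rw [this]
    simp [hF]
  have hFe : F (Real.pi / ω) = dg (refl α x) := by
    simp only [hF]
    rw [mul_div_cancel₀ _ hω0, Real.sin_pi, Real.cos_pi, refl, dg_sub, dg_smul]
    simp only [zero_div, mul_zero, zero_smul, sub_zero]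
    congr 1
    rw [hω2, real_inner_comm α x, ← hc]
    have : c * (2 * (1 - -1) / (2 * ⟪α, α⟫_ℝ)) = 2 * c / ⟪α, α⟫_ℝ := by
      field_simp
      ring
    rw [this]
    rfl
  rw [hFe] at hconst
  rw [smul_neg] at hconst
  set B := (Real.pi / ω) • k
  have i1 : NormedSpace.exp B * NormedSpace.exp (-B) = 1 := by
    rw [← Matrix.exp_add_of_commute B (-B) (Commute.neg_right (Commute.refl B)), add_neg_cancel,
      NormedSpace.exp_zero]
  rw [← hconst]
  calc _ = (NormedSpace.exp B * NormedSpace.exp (-B)) * dg (refl α x) *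
      (NormedSpace.exp B * NormedSpace.exp (-B)) := by noncomm_ring
    _ = _ := by rw [i1, one_mul, mul_one]

/-- Coordinate permutation: the `a`-th basis vector goes to the `σ a`-th one. -/
noncomputable def pm (σ : Equiv.Perm (Fin n)) : Euc n ≃ₗᵢ[ℝ] Euc n :=
  LinearIsometryEquiv.piLpCongrLeft 2 ℝ ℝ σ

lemma pm_apply (σ : Equiv.Perm (Fin n)) (x : Euc n) (a : Fin n) : pm σ x a = x (σ.symm a) := by
  simp [pm, LinearIsometryEquiv.piLpCongrLeft_apply, Equiv.piCongrLeft']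

lemma pm_one : pm (1 : Equiv.Perm (Fin n)) = 1 := by
  ext x a; simp [pm_apply]; rfl

lemma pm_mul (σ τ : Equiv.Perm (Fin n)) : pm (σ * τ) = pm σ * pm τ := by
  ext x a
  change _ = pm σ (pm τ x) a
  rw [pm_apply, pm_apply, pm_apply]
  rfl

lemma pm_inv_apply (σ : Equiv.Perm (Fin n)) (x : Euc n) : pm σ⁻¹ (pm σ x) = x := by
  ext a; rw [pm_apply, pm_apply]; simp only [Equiv.Perm.inv_def, Equiv.symm_symm, Equiv.symm_apply_apply]

lemma pm_apply_inv (σ : Equiv.Perm (Fin n)) (x : Euc n) : pm σ (pm σ⁻¹ x) = x := by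
  ext a; rw [pm_apply, pm_apply]; simp only [Equiv.Perm.inv_def, Equiv.symm_symm, Equiv.apply_symm_apply]

lemma refl_mem_t {α x : Euc n} (hα : α ∈ t) (hx : x ∈ t) : refl α x ∈ t :=
  t.sub_mem hx (t.smul_mem _ hα)

/-- Every reflection in a root is induced by a coordinate permutation. -/
lemma exists_perm (hs : Std g t) {α : Euc n} (hα : α ∈ roots g t) :
    ∃ σ : Equiv.Perm (Fin n), ∀ x ∈ t, pm σ x = refl α x := by
  have hαt := roots_sub hα
  obtain ⟨e, he, hn⟩ := exists_unit hα
  obtain ⟨k, -, -, h⟩ := rotate hs (mem_roots.1 hα).1 he hn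
  set U := NormedSpace.exp k
  have i1 : U * NormedSpace.exp (-k) = 1 := by
    rw [← Matrix.exp_add_of_commute k (-k) (Commute.neg_right (Commute.refl k)), add_neg_cancel,
      NormedSpace.exp_zero]
  have i2 : NormedSpace.exp (-k) * U = 1 := mul_eq_one_comm.1 i1
  have hdet : U.det ≠ 0 := by
    intro h0
    have := congrArg Matrix.det i1
    rw [Matrix.det_mul, h0, zero_mul, Matrix.det_one] at this
    exact zero_ne_one this
  have hU : ∀ x ∈ t, U * dg x = dg (refl α x) * U := by
    intro x hx
    rw [← h x hx, mul_assoc _ _ U, i2, mul_one]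
  have hent : ∀ a b, U a b ≠ 0 → ∀ x ∈ t, x b = refl α x a := by
    intro a b hab x hx
    have := congrFun (congrFun (hU x hx) a) b
    rw [dg, dg, Matrix.mul_diagonal, Matrix.diagonal_mul, mul_comm] at this
    exact_mod_cast mul_right_cancel₀ hab this
  rw [Matrix.det_apply] at hdet
  obtain ⟨σ, -, hσ⟩ := exists_ne_zero_of_sum_ne_zero hdet
  have hσ' : ∏ b, U (σ b) b ≠ 0 := fun h0 => hσ (by rw [h0, smul_zero])
  refine ⟨σ, fun x hx => ?_⟩
  ext a
  rw [pm_apply]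
  have := hent (σ (σ.symm a)) (σ.symm a) (prod_ne_zero_iff.1 hσ' _ (mem_univ _)) x hx
  rw [this, Equiv.apply_symm_apply]

lemma roots_refl (hs : Std g t) {α β : Euc n} (hα : α ∈ roots g t) (hβ : β ∈ roots g t) :
    refl α β ∈ roots g t := by
  have hαt := roots_sub hα
  obtain ⟨e, he, hn⟩ := exists_unit hα
  obtain ⟨k, hk, hk', h⟩ := rotate hs (mem_roots.1 hα).1 he hn
  obtain ⟨hβ0, f, hf, hf0⟩ := mem_roots.1 hβ
  have hm := hs.exp_conj k hk hk' f hf.1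
  set U := NormedSpace.exp k
  set U' := NormedSpace.exp (-k)
  have i1 : U * U' = 1 := by
    rw [← Matrix.exp_add_of_commute k (-k) (Commute.neg_right (Commute.refl k)), add_neg_cancel,
      NormedSpace.exp_zero]
  have i2 : U' * U = 1 := mul_eq_one_comm.1 i1
  refine mem_roots_of (e := U * f * U') ?_ (mem_gs_of_lie (refl_mem_t hαt (roots_sub hβ)) hm ?_) ?_
  · intro h0
    have := refl_refl (α := α) β
    rw [h0] at this
    apply hβ0
    rw [← this]
    simp [refl]
  · intro x hx
    have hx' := refl_mem_t hαt hx
    have h1 : dg x = U * dg (refl α x) * U' := by rw [h _ hx', refl_refl]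
    have h2 := lie_dg_gs hf hx'
    rw [inner_refl_left, ← smul_mul_assoc, ← mul_smul_comm, ← h2, h1, br_def, br_def]
    calc _ = U * dg (refl α x) * (U' * U) * f * U' - U * f * (U' * U) * dg (refl α x) * U' := by
          noncomm_ring
      _ = _ := by rw [i2]; noncomm_ring
  · intro h0
    apply hf0
    calc f = (U' * U) * f * (U' * U) := by rw [i2, one_mul, mul_one]
      _ = U' * (U * f * U') * U := by noncomm_ring
      _ = 0 := by rw [h0]; simp

theorem isRootSys_roots (hs : Std g t) : IsRootSys (roots g t) where
  zero_notMem h := (mem_roots.1 h).1 rfl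
  neg_mem _ h := roots_neg hs h
  refl_mem _ h _ h' := roots_refl hs h h'
  sub_mem _ h _ h' h1 h2 := roots_sub_mem hs h h' h1 h2
  two_notMem _ h := roots_two hs h

end LieRefl
end DimDatum

/-! ### Irreducible Lie algebras -/

namespace DimDatum
section LieIrr
open scoped InnerProductSpace Matrix Matrix.Norms.Operator
open Finset

variable {n : ℕ} {t : Submodule ℝ (Euc n)} {g : Submodule ℂ (Mat n)}

/-- The vectors supported on a set of coordinates. -/
def supp (S : Set (Fin n)) : Submodule ℂ (Fin n → ℂ) where
  carrier := {x | ∀ a, x a ≠ 0 → a ∈ S}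
  add_mem' := by
    intro x y hx hy a h
    by_cases h1 : x a = 0
    · exact hy a fun h2 => h (by simp [h1, h2])
    · exact hx a h1
  zero_mem' := by intro a h; simp at h
  smul_mem' := by
    intro c x hx a h
    exact hx a fun h1 => h (by simp [h1])

lemma mem_supp {S : Set (Fin n)} {x : Fin n → ℂ} : x ∈ supp S ↔ ∀ a, x a ≠ 0 → a ∈ S := Iff.rfl

lemma exists_of_mulVec_ne {A : Mat n} {x : Fin n → ℂ} {b : Fin n} (h : (A *ᵥ x) b ≠ 0) :
    ∃ c, A b c ≠ 0 ∧ x c ≠ 0 := by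
  rw [Matrix.mulVec, dotProduct] at h
  obtain ⟨c, -, hc⟩ := exists_ne_zero_of_sum_ne_zero h
  exact ⟨c, left_ne_zero_of_mul hc, right_ne_zero_of_mul hc⟩

lemma single_mem_supp {S : Set (Fin n)} {a : Fin n} : Pi.single a 1 ∈ supp S ↔ a ∈ S := by
  constructor
  · intro h; exact h a (by simp)
  · intro h b hb
    by_cases hab : b = a
    · rwa [hab]
    · simp [hab] at hb

lemma mem_of_supp_eq_top {S : Set (Fin n)} (h : supp S = ⊤) (a : Fin n) : a ∈ S :=
  single_mem_supp.1 (h ▸ Submodule.mem_top)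

lemma entry_root (hs : Std g t) {A : Mat n} (hA : A ∈ g) {a b : Fin n} (hab : A a b ≠ 0) :
    wt t a = wt t b ∨ wt t a - wt t b ∈ roots g t := by
  by_cases h0 : wt t a - wt t b = 0
  · left; exact sub_eq_zero.1 h0
  · right
    refine mem_roots_of h0 (comp_mem hs _ hA) fun h => hab ?_
    have := congrFun (congrFun h a) b
    simpa [comp] using this

/-- If `V'` is annihilated by the part of `g` of positive degree and stable under the part of
degree zero, then everything is generated from it by the part of negative degree. The
degree is the pairing of the weight with `y`. -/
lemma top_lemma (hs : Std g t) (y : Euc n) {V' N : Submodule ℂ (Fin n → ℂ)}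
    (hV : V' ≠ ⊥) (h0 : ∀ β, ⟪β, y⟫_ℝ = 0 → ∀ A ∈ gs g t β, ∀ x ∈ V', A *ᵥ x ∈ V')
    (hp : ∀ β, 0 < ⟪β, y⟫_ℝ → ∀ A ∈ gs g t β, ∀ x ∈ V', A *ᵥ x = 0) (hVN : V' ≤ N)
    (hN : ∀ β, ⟪β, y⟫_ℝ < 0 → ∀ A ∈ gs g t β, ∀ x ∈ N, A *ᵥ x ∈ N) : N = ⊤ := by
  set X : Set (Submodule ℂ (Fin n → ℂ)) := {N | V' ≤ N ∧
    ∀ β, ⟪β, y⟫_ℝ < 0 → ∀ A ∈ gs g t β, ∀ x ∈ N, A *ᵥ x ∈ N} with hX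
  set M := sInf X with hM
  have hMX : M ∈ X := by
    refine ⟨le_sInf fun N hN => hN.1, fun β hβ A hA x hx => ?_⟩
    rw [hM, Submodule.mem_sInf] at hx ⊢
    exact fun N hN => hN.2 β hβ A hA x (hx N hN)
  let M' : Submodule ℂ (Fin n → ℂ) :=
    { carrier := {x | x ∈ M ∧ ∀ β, 0 ≤ ⟪β, y⟫_ℝ → ∀ A ∈ gs g t β, A *ᵥ x ∈ M}
      add_mem' := by
        rintro x z ⟨hx, hx'⟩ ⟨hz, hz'⟩
        refine ⟨M.add_mem hx hz, fun β hβ A hA => ?_⟩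
        rw [Matrix.mulVec_add]
        exact M.add_mem (hx' β hβ A hA) (hz' β hβ A hA)
      zero_mem' := ⟨M.zero_mem, fun β hβ A hA => by rw [Matrix.mulVec_zero]; exact M.zero_mem⟩
      smul_mem' := by
        rintro c x ⟨hx, hx'⟩
        refine ⟨M.smul_mem c hx, fun β hβ A hA => ?_⟩
        rw [Matrix.mulVec_smul]
        exact M.smul_mem c (hx' β hβ A hA) }
  have hM'X : M' ∈ X := by
    constructor
    · intro x hx
      refine ⟨hMX.1 hx, fun β hβ A hA => ?_⟩
      rcases hβ.eq_or_lt with h | h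
      · exact hMX.1 (h0 β h.symm A hA x hx)
      · rw [hp β h A hA x hx]; exact M.zero_mem
    · rintro γ hγ B hB x ⟨hx, hx'⟩
      refine ⟨hMX.2 γ hγ B hB x hx, fun β hβ A hA => ?_⟩
      have e : A *ᵥ (B *ᵥ x) = B *ᵥ (A *ᵥ x) + ⁅A, B⁆ *ᵥ x := by
        rw [br_def, Matrix.sub_mulVec, Matrix.mulVec_mulVec, Matrix.mulVec_mulVec]
        abel
      rw [e]
      refine M.add_mem (hMX.2 γ hγ B hB _ (hx' β hβ A hA)) ?_
      have hAB := gs_lie hs hA hB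
      by_cases h : 0 ≤ ⟪β + γ, y⟫_ℝ
      · exact hx' _ h _ hAB
      · exact hMX.2 _ (not_le.1 h) _ hAB x hx
  have hMM' : M ≤ M' := sInf_le hM'X
  have hst : ∀ A ∈ g, ∀ x ∈ M, A *ᵥ x ∈ M := by
    intro A hA x hx
    rw [← sum_comp (t := t) A, Matrix.sum_mulVec]
    refine M.sum_mem fun β _ => ?_
    have hc := comp_mem hs β hA
    by_cases h : 0 ≤ ⟪β, y⟫_ℝ
    · exact (hMM' hx).2 β h _ hc
    · exact hMX.2 β (not_le.1 h) _ hc x hx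
  have htop : M = ⊤ := by
    refine (hs.irr M hst).resolve_left fun hb => hV ?_
    rw [eq_bot_iff, ← hb]
    exact hMX.1
  rw [eq_top_iff, ← htop]
  exact sInf_le ⟨hVN, hN⟩

/-- The index of a coordinate vector which is a highest weight vector with respect to `v`. -/
lemma exists_highest [NeZero n] (hs : Std g t) {v : Euc n}
    (hreg : Regular (roots g t) v) :
    ∃ a0, ∀ a, a = a0 ∨ (wt t a0 - wt t a ∈ AddSubmonoid.closure (simple (roots g t) v : Set _)
      ∧ ⟪v, wt t a⟫_ℝ < ⟪v, wt t a0⟫_ℝ) := by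
  obtain ⟨a0, -, hmax⟩ := (univ : Finset (Fin n)).exists_max_image (fun a => ⟪v, wt t a⟫_ℝ)
    ⟨0, mem_univ _⟩
  refine ⟨a0, fun a => ?_⟩
  set S : Set (Fin n) := {a | a = a0 ∨ (wt t a0 - wt t a ∈
    AddSubmonoid.closure (simple (roots g t) v : Set _) ∧ ⟪v, wt t a⟫_ℝ < ⟪v, wt t a0⟫_ℝ)}
  suffices h : supp S = ⊤ from mem_of_supp_eq_top h a
  refine top_lemma hs v (V' := supp {a0}) ?_ ?_ ?_ ?_ ?_
  · intro h
    have : (Pi.single a0 1 : Fin n → ℂ) ∈ supp ({a0} : Set (Fin n)) :=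
      single_mem_supp.2 rfl
    rw [h, Submodule.mem_bot] at this
    have := congrFun this a0
    simp at this
  · intro β hβ A hA x hx b hb
    obtain ⟨c, hc, hxc⟩ := exists_of_mulVec_ne hb
    have hc0 : c = a0 := hx c hxc
    have hβ0 : β = 0 := by
      by_contra h
      refine hreg β (mem_roots_of h hA ?_) (by rw [real_inner_comm]; exact hβ)
      rintro rfl
      exact hc rfl
    rw [hβ0] at hA
    obtain ⟨d, hd⟩ := gs_zero_diag hs hA
    rw [hd, Matrix.diagonal_apply] at hc
    have : b = c := by
      by_contra h
      rw [if_neg h] at hc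
      exact hc rfl
    rw [this, hc0]; rfl
  · intro β hβ A hA x hx
    by_contra hne
    obtain ⟨b, hb⟩ := Function.ne_iff.1 hne
    obtain ⟨c, hc, hxc⟩ := exists_of_mulVec_ne hb
    have hc0 : c = a0 := hx c hxc
    have := gs_apply hA hc
    have h1 := hmax b (mem_univ b)
    rw [← this, inner_sub_left, hc0, real_inner_comm v, real_inner_comm v] at hβ
    linarith
  · intro x hx b hb
    exact Or.inl (hx b hb)
  · intro β hβ A hA x hx b hb
    obtain ⟨c, hc, hxc⟩ := exists_of_mulVec_ne hb
    have hbc := gs_apply hA hc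
    have hβ0 : -β ∈ pos (roots g t) v := by
      refine mem_pos.2 ⟨roots_neg hs (mem_roots_of ?_ hA ?_), ?_⟩
      · rintro rfl; simp at hβ
      · rintro rfl; exact hc rfl
      · rw [inner_neg_right, real_inner_comm]; linarith
    have hcl := IsRootSys.pos_mem_closure_simple hβ0
    have hv2 : ⟪v, wt t b⟫_ℝ < ⟪v, wt t c⟫_ℝ := by
      rw [← hbc, inner_sub_left, real_inner_comm v, real_inner_comm v] at hβ
      linarith
    right
    rcases hx c hxc with h | ⟨h1, h2⟩
    · refine ⟨?_, by rw [← h]; exact hv2⟩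
      rw [← h]
      have : wt t c - wt t b = -β := by rw [← hbc]; abel
      rwa [this]
    · refine ⟨?_, hv2.trans h2⟩
      have : wt t a0 - wt t b = (wt t a0 - wt t c) + (-β) := by rw [← hbc]; abel
      rw [this]
      exact add_mem h1 hcl

lemma exists_nat_coeff [NeZero n] (hs : Std g t) {v : Euc n} (hreg : Regular (roots g t) v)
    (a b : Fin n) : ∃ c : Euc n → ℤ,
      wt t a - wt t b = ∑ γ ∈ simple (roots g t) v, (c γ : ℝ) • γ := by
  obtain ⟨a0, h⟩ := exists_highest hs hreg
  have key : ∀ a, wt t a0 - wt t a ∈ AddSubmonoid.closure (simple (roots g t) v : Set _) := by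
    intro a
    rcases h a with h | h
    · rw [h, sub_self]; exact zero_mem _
    · exact h.1
  obtain ⟨c, hc⟩ := IsRootSys.exists_coeff (key b)
  obtain ⟨d, hd⟩ := IsRootSys.exists_coeff (key a)
  refine ⟨fun γ => (c γ : ℤ) - d γ, ?_⟩
  have : wt t a - wt t b = (wt t a0 - wt t b) - (wt t a0 - wt t a) := by abel
  rw [this, hc, hd, ← sum_sub_distrib]
  refine sum_congr rfl fun γ _ => ?_
  push_cast
  rw [sub_smul]

/-- The lattice generated by the differences of weights is the root lattice. -/
lemma closure_diffs [NeZero n] (hs : Std g t) {v : Euc n} (hreg : Regular (roots g t) v) :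
    AddSubgroup.closure (diffs t : Set (Euc n))
      = AddSubgroup.closure (simple (roots g t) v : Set (Euc n)) := by
  classical
  refine le_antisymm ((AddSubgroup.closure_le _).2 ?_) ((AddSubgroup.closure_le _).2 ?_)
  · intro x hx
    obtain ⟨p, -, rfl⟩ := mem_image.1 hx
    obtain ⟨c, hc⟩ := exists_nat_coeff hs hreg p.1 p.2
    rw [hc]
    refine sum_mem fun γ hγ => ?_
    rw [Int.cast_smul_eq_zsmul]
    exact zsmul_mem (AddSubgroup.subset_closure hγ) _
  · intro x hx
    refine AddSubgroup.subset_closure ?_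
    have := IsRootSys.simple_mem hx
    rw [roots] at this
    exact (mem_filter.1 this).1

/-! ### The part of the torus orthogonal to the roots -/

lemma const_of_orth (hs : Std g t) {x : Euc n} (hx : x ∈ t)
    (h : ∀ α ∈ roots g t, ⟪α, x⟫_ℝ = 0) (a b : Fin n) : x a = x b := by
  have : supp {c | x c = x b} = ⊤ := by
    refine (hs.irr _ ?_).resolve_left ?_
    · intro A hA z hz c hc
      obtain ⟨d, hd, hzd⟩ := exists_of_mulVec_ne hc
      have h1 : x d = x b := hz d hzd
      change x c = x b
      rw [← h1, ← inner_wt hx c, ← inner_wt hx d]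
      rcases entry_root hs hA hd with h2 | h2
      · rw [h2]
      · have := h _ h2
        rw [inner_sub_left] at this
        linarith
    · intro h
      have : (Pi.single b 1 : Fin n → ℂ) ∈ supp {c | x c = x b} := single_mem_supp.2 rfl
      rw [h, Submodule.mem_bot] at this
      have := congrFun this b
      simp at this
  exact mem_of_supp_eq_top this a

/-- The all-ones vector. -/
noncomputable def ones (n : ℕ) : Euc n := WithLp.toLp 2 fun _ => 1

lemma ones_apply (a : Fin n) : ones n a = 1 := rfl

lemma inner_ones (x : Euc n) : ⟪ones n, x⟫_ℝ = ∑ a, x a := by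
  simp [PiLp.inner_apply, ones_apply]

lemma root_orth_ones (hs : Std g t) {α : Euc n} (hα : α ∈ roots g t) : ⟪ones n, α⟫_ℝ = 0 := by
  obtain ⟨e, he, hn⟩ := exists_unit hα
  have h := congrArg Matrix.trace (lie_star_self hs he)
  rw [hn, br_def, Matrix.trace_sub, Matrix.trace_mul_comm, sub_self] at h
  rw [inner_ones]
  simp [dg] at h
  exact_mod_cast h.symm

lemma proj_ones (hs : Std g t) :
    t.starProjection (ones n) = 0 ∨ t.starProjection (ones n) = ones n := by
  by_cases h1 : ones n ∈ t
  · right; exact Submodule.starProjection_eq_self_iff.2 h1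
  left
  set x := t.starProjection (ones n) with hx
  have hxt : x ∈ t := Submodule.starProjection_apply_mem _ _
  have hort : ∀ α ∈ roots g t, ⟪α, x⟫_ℝ = 0 := by
    intro α hα
    rw [hx, ← Submodule.inner_starProjection_left_eq_right,
      Submodule.starProjection_eq_self_iff.2 (roots_sub hα), real_inner_comm]
    exact root_orth_ones hs hα
  have hc := const_of_orth hs hxt hort
  by_contra h0
  have : ∃ a, x a ≠ 0 := by
    by_contra hcon
    push Not at hcon
    exact h0 (by ext a; simp [hcon])
  obtain ⟨a, ha⟩ := this
  apply h1
  have : ones n = (x a)⁻¹ • x := by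
    ext b
    simp [ones_apply, hc b a, ha]
  rw [this]
  exact t.smul_mem _ hxt

/-! ### Coordinate permutations preserving the torus -/

lemma inner_pm (σ : Equiv.Perm (Fin n)) (x y : Euc n) : ⟪pm σ x, y⟫_ℝ = ⟪x, pm σ⁻¹ y⟫_ℝ := by
  conv_lhs => rw [← pm_apply_inv σ y]
  exact (pm σ).inner_map_map _ _

lemma pm_inv_apply' (σ : Equiv.Perm (Fin n)) (x : Euc n) (a : Fin n) :
    pm σ⁻¹ x a = x (σ a) := by
  rw [pm_apply]; rfl

lemma wt_pm' {t' : Submodule ℝ (Euc n)} {σ : Equiv.Perm (Fin n)} (h : ∀ x, pm σ x ∈ t' ↔ x ∈ t)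
    (a : Fin n) : wt t' (σ a) = pm σ (wt t a) := by
  refine eq_of_inner (wt_mem _) ((h _).2 (wt_mem a)) fun x hx => ?_
  rw [inner_wt hx, inner_pm, inner_wt, pm_inv_apply']
  rwa [← h, pm_apply_inv]

lemma wt_pm {σ : Equiv.Perm (Fin n)} (h : ∀ x, pm σ x ∈ t ↔ x ∈ t) (a : Fin n) :
    wt t (σ a) = pm σ (wt t a) := wt_pm' h a

/-- The group of coordinate permutations preserving `t`. -/
def permGroup (t : Submodule ℝ (Euc n)) : Subgroup (Euc n ≃ₗᵢ[ℝ] Euc n) where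
  carrier := {θ | (∃ σ, θ = pm σ) ∧ ∀ x, θ x ∈ t ↔ x ∈ t}
  mul_mem' := by
    rintro _ _ ⟨⟨σ, rfl⟩, h⟩ ⟨⟨τ, rfl⟩, h'⟩
    exact ⟨⟨σ * τ, (pm_mul σ τ).symm⟩, fun x => (h _).trans (h' x)⟩
  one_mem' := ⟨⟨1, pm_one.symm⟩, fun x => Iff.rfl⟩
  inv_mem' := by
    rintro _ ⟨⟨σ, rfl⟩, h⟩
    refine ⟨⟨σ⁻¹, ?_⟩, fun x => ?_⟩
    · rw [inv_eq_iff_mul_eq_one, ← pm_mul, mul_inv_cancel, pm_one]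
    · rw [← h]
      exact iff_of_eq (congrArg (· ∈ t) ((pm σ).apply_symm_apply x))

lemma refl_mem_t_iff {α : Euc n} (hα : α ∈ t) (x : Euc n) : refl α x ∈ t ↔ x ∈ t :=
  ⟨fun h => by rw [← refl_refl (α := α) x]; exact refl_mem_t hα h, refl_mem_t hα⟩

/-- Reflections in roots are induced by elements of `permGroup`. -/
lemma exists_permGroup (hs : Std g t) {α : Euc n} (hα : α ∈ roots g t) :
    ∃ σ, pm σ ∈ permGroup t ∧ ∀ x ∈ t, pm σ x = refl α x := by
  obtain ⟨σ, hσ⟩ := exists_perm hs hα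
  refine ⟨σ, ⟨⟨σ, rfl⟩, fun x => ⟨fun h => ?_, fun h => ?_⟩⟩, hσ⟩
  · have h1 : refl α (pm σ x) ∈ t := refl_mem_t (roots_sub hα) h
    have h2 := hσ _ h1
    rw [refl_refl] at h2
    rwa [← (pm σ).injective h2]
  · rw [hσ x h]; exact refl_mem_t (roots_sub hα) h

/-! ### Rationality -/

lemma inner_root_rat [NeZero n] (hs : Std g t) {v : Euc n} (hreg : Regular (roots g t) v)
    {γ : Euc n} (hγ : γ ∈ simple (roots g t) v) :
    ∃ m : Fin n → ℤ, ∀ a, 2 * ⟪wt t a, γ⟫_ℝ / ⟪γ, γ⟫_ℝ = m a := by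
  classical
  obtain ⟨σ, hσ, hr⟩ := exists_permGroup hs (IsRootSys.simple_mem hγ)
  have : ∀ a, ∃ m : ℤ, 2 * ⟪wt t a, γ⟫_ℝ / ⟪γ, γ⟫_ℝ = m := by
    intro a
    obtain ⟨c, hc⟩ := exists_nat_coeff hs hreg a (σ a)
    rw [wt_pm hσ.2, hr _ (wt_mem a), sub_refl] at hc
    refine ⟨c γ, ?_⟩
    have h2 := (isRootSys_roots hs).simple_indep_eq hreg
      (c := fun δ => if δ = γ then 2 * ⟪wt t a, γ⟫_ℝ / ⟪γ, γ⟫_ℝ else 0) (d := fun δ => (c δ : ℝ))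
      (by rw [← hc]; simp [ite_smul, hγ]) γ hγ
    simpa using h2
  choose m hm using this
  exact ⟨m, hm⟩

lemma inner_simple_rat [NeZero n] (hs : Std g t) {v : Euc n} (hreg : Regular (roots g t) v)
    {γ : Euc n} (hγ : γ ∈ simple (roots g t) v) (a : Fin n) :
    ∃ q : ℚ, ⟪wt t a, γ⟫_ℝ = q := by
  obtain ⟨m, hm⟩ := inner_root_rat hs hreg hγ
  have hγΦ := IsRootSys.simple_mem hγ
  have hpos := inner_self_pos' (mem_roots.1 hγΦ).1
  have h1 : ∀ a, ⟪wt t a, γ⟫_ℝ = m a * ⟪γ, γ⟫_ℝ / 2 := by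
    intro a
    rw [← hm a]
    field_simp
  have hp : ⟪γ, γ⟫_ℝ = ∑ a, ⟪wt t a, γ⟫_ℝ ^ 2 := by
    have := parseval (roots_sub hγΦ)
    conv_lhs => rw [← this]
    rw [sum_inner]
    refine sum_congr rfl fun a _ => ?_
    rw [this, inner_smul_left, inner_wt (roots_sub hγΦ)]
    simp [sq]
  have h2 : ⟪γ, γ⟫_ℝ * (∑ a, (m a : ℝ) ^ 2) = 4 := by
    have h3 : ⟪γ, γ⟫_ℝ = ⟪γ, γ⟫_ℝ * (⟪γ, γ⟫_ℝ * (∑ a, (m a : ℝ) ^ 2) / 4) := by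
      conv_lhs => rw [hp]
      simp only [h1]
      rw [mul_sum, sum_div, mul_sum]
      refine sum_congr rfl fun a _ => ?_
      ring
    have h4 := mul_left_cancel₀ hpos.ne' ((mul_one _).trans h3)
    linarith
  refine ⟨m a * (4 / ∑ a, (m a : ℚ) ^ 2) / 2, ?_⟩
  rw [h1]
  have h5 : ⟪γ, γ⟫_ℝ = 4 / ∑ a, (m a : ℝ) ^ 2 := by
    rw [eq_div_iff, h2]
    intro h0
    rw [h0, mul_zero] at h2
    norm_num at h2
  rw [h5]
  push_cast
  rfl

lemma inner_wt_rat [NeZero n] (hs : Std g t) {v : Euc n} (hreg : Regular (roots g t) v)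
    (a b : Fin n) : ∃ q : ℚ, ⟪wt t a, wt t b⟫_ℝ = q := by
  have h1 : ∀ c, ∃ q : ℚ, ⟪wt t a, wt t b - wt t c⟫_ℝ = q := by
    intro c
    obtain ⟨k, hk⟩ := exists_nat_coeff hs hreg b c
    have : ∀ γ : Euc n, ∃ q : ℚ, γ ∈ simple (roots g t) v → ⟪wt t a, γ⟫_ℝ = q := by
      intro γ
      by_cases hγ : γ ∈ simple (roots g t) v
      · obtain ⟨q, hq⟩ := inner_simple_rat hs hreg hγ a
        exact ⟨q, fun _ => hq⟩
      · exact ⟨0, fun h => absurd h hγ⟩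
    choose q hq using this
    refine ⟨∑ γ ∈ simple (roots g t) v, k γ * q γ, ?_⟩
    rw [hk, inner_sum]
    push_cast
    exact sum_congr rfl fun γ hγ => by rw [inner_smul_right, hq γ hγ]
  choose q hq using h1
  have h2 : ∃ r : ℚ, ⟪wt t a, ∑ c, wt t c⟫_ℝ = r := by
    have : ∑ c, wt t c = t.starProjection (ones n) := by
      rw [← sum_wt]; simp [ones_apply]
    rw [this]
    rcases proj_ones hs with h | h
    · exact ⟨0, by simp [h]⟩
    · refine ⟨1, ?_⟩
      rw [← Submodule.inner_starProjection_left_eq_right,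
        Submodule.starProjection_eq_self_iff.2 (wt_mem a), wt,
        Submodule.inner_starProjection_left_eq_right, h]
      simp [ones_apply, EuclideanSpace.inner_single_left]
  obtain ⟨r, hr⟩ := h2
  refine ⟨(∑ c, q c + r) / n, ?_⟩
  have hn : (n : ℝ) ≠ 0 := by exact_mod_cast NeZero.ne n
  push_cast
  rw [eq_div_iff hn, ← hr, inner_sum]
  simp only [← hq, inner_sub_right, sum_sub_distrib]
  simp [mul_comm]

end LieIrr
end DimDatum

/-! ### Unitary conjugation and generation -/

namespace DimDatum
section Conj
open scoped InnerProductSpace Matrix Matrix.Norms.Operator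
open Finset

variable {n : ℕ} {t t' : Submodule ℝ (Euc n)} {g : Submodule ℂ (Mat n)}

/-- The subspace `U g Uᴴ`. -/
def cj (U : Mat n) (g : Submodule ℂ (Mat n)) : Submodule ℂ (Mat n) :=
  g.map ((LinearMap.mulRight ℂ Uᴴ).comp (LinearMap.mulLeft ℂ U))

lemma mem_cj {U A : Mat n} : A ∈ cj U g ↔ ∃ B ∈ g, U * B * Uᴴ = A := by
  simp [cj, Submodule.mem_map]

lemma mem_cj_of {U : Mat n} {B : Mat n} (h : B ∈ g) : U * B * Uᴴ ∈ cj U g :=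
  mem_cj.2 ⟨B, h, rfl⟩

lemma mem_cj_iff {U : Mat n} (hU : Uᴴ * U = 1) {A : Mat n} : A ∈ cj U g ↔ Uᴴ * A * U ∈ g := by
  have hU' : U * Uᴴ = 1 := mul_eq_one_comm.1 hU
  rw [mem_cj]
  constructor
  · rintro ⟨B, hB, rfl⟩
    have : Uᴴ * (U * B * Uᴴ) * U = (Uᴴ * U) * B * (Uᴴ * U) := by noncomm_ring
    rw [this, hU, one_mul, mul_one]
    exact hB
  · intro h
    refine ⟨_, h, ?_⟩
    have : U * (Uᴴ * A * U) * Uᴴ = (U * Uᴴ) * A * (U * Uᴴ) := by noncomm_ring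
    rw [this, hU', one_mul, mul_one]

lemma cj_cj (U W : Mat n) : cj W (cj U g) = cj (W * U) g := by
  ext A
  simp only [mem_cj]
  constructor
  · rintro ⟨_, ⟨B, hB, rfl⟩, rfl⟩
    exact ⟨B, hB, by rw [Matrix.conjTranspose_mul]; noncomm_ring⟩
  · rintro ⟨B, hB, rfl⟩
    exact ⟨_, ⟨B, hB, rfl⟩, by rw [Matrix.conjTranspose_mul]; noncomm_ring⟩

lemma cj_one : cj 1 g = g := by
  ext A; simp [mem_cj]

lemma unitary_mul {U W : Mat n} (hU : Uᴴ * U = 1) (hW : Wᴴ * W = 1) :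
    (W * U)ᴴ * (W * U) = 1 := by
  rw [Matrix.conjTranspose_mul]
  calc Uᴴ * Wᴴ * (W * U) = Uᴴ * (Wᴴ * W) * U := by noncomm_ring
    _ = 1 := by rw [hW, mul_one, hU]

lemma unitary_star {U : Mat n} (hU : Uᴴ * U = 1) : (Uᴴ)ᴴ * Uᴴ = 1 := by
  rw [Matrix.conjTranspose_conjTranspose]; exact mul_eq_one_comm.1 hU

lemma conj_lie {U : Mat n} (hU : Uᴴ * U = 1) (A B : Mat n) :
    ⁅U * A * Uᴴ, U * B * Uᴴ⁆ = U * ⁅A, B⁆ * Uᴴ := by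
  simp only [br_def]
  calc _ = U * A * (Uᴴ * U) * B * Uᴴ - U * B * (Uᴴ * U) * A * Uᴴ := by noncomm_ring
    _ = _ := by rw [hU]; noncomm_ring

lemma conj_exp {U : Mat n} (hU : Uᴴ * U = 1) (A : Mat n) :
    NormedSpace.exp (U * A * Uᴴ) = U * NormedSpace.exp A * Uᴴ := by
  have hinv : U⁻¹ = Uᴴ := Matrix.inv_eq_left_inv hU
  have hunit : IsUnit U := by
    rw [Matrix.isUnit_iff_isUnit_det]
    exact Matrix.isUnit_det_of_left_inverse hU
  rw [← hinv, Matrix.exp_conj U A hunit]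

lemma Pre.cj {U : Mat n} (hU : Uᴴ * U = 1) (h : Pre g) : Pre (cj U g) where
  lie := by
    intro A hA B hB
    obtain ⟨A, hA', rfl⟩ := mem_cj.1 hA
    obtain ⟨B, hB', rfl⟩ := mem_cj.1 hB
    rw [conj_lie hU]
    exact mem_cj_of (h.lie A hA' B hB')
  star := by
    intro A hA
    obtain ⟨A, hA', rfl⟩ := mem_cj.1 hA
    refine mem_cj.2 ⟨Aᴴ, h.star A hA', ?_⟩
    simp [Matrix.conjTranspose_mul, mul_assoc]
  irr := by
    intro W hW
    have hU' : U * Uᴴ = 1 := mul_eq_one_comm.1 hU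
    rcases h.irr (W.comap U.mulVecLin) (by
      intro A hA v hv
      rw [Submodule.mem_comap, Matrix.mulVecLin_apply] at hv ⊢
      have := hW _ (mem_cj_of hA) _ hv
      rw [Matrix.mulVec_mulVec] at this ⊢
      rwa [mul_assoc, mul_assoc, hU, mul_one] at this) with h | h
    · left
      rw [eq_bot_iff]
      intro x hx
      have : Uᴴ *ᵥ x ∈ W.comap U.mulVecLin := by
        rw [Submodule.mem_comap, Matrix.mulVecLin_apply, Matrix.mulVec_mulVec, hU',
          Matrix.one_mulVec]
        exact hx
      rw [h, Submodule.mem_bot] at this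
      rw [Submodule.mem_bot, ← Matrix.one_mulVec x, ← hU', ← Matrix.mulVec_mulVec, this,
        Matrix.mulVec_zero]
    · right
      rw [eq_top_iff]
      intro x _
      have : Uᴴ *ᵥ x ∈ W.comap U.mulVecLin := by rw [h]; trivial
      rwa [Submodule.mem_comap, Matrix.mulVecLin_apply, Matrix.mulVec_mulVec, hU',
          Matrix.one_mulVec] at this
  exp_conj := by
    intro A hA hs B hB
    have hU' : U * Uᴴ = 1 := mul_eq_one_comm.1 hU
    obtain ⟨A, hA', rfl⟩ := mem_cj.1 hA
    obtain ⟨B, hB', rfl⟩ := mem_cj.1 hB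
    have hs' : Aᴴ = -A := by
      have := congrArg (fun X => Uᴴ * X * U) hs
      simp only [Matrix.conjTranspose_mul, Matrix.conjTranspose_conjTranspose] at this
      have e1 : Uᴴ * (U * (Aᴴ * Uᴴ)) * U = (Uᴴ * U) * Aᴴ * (Uᴴ * U) := by noncomm_ring
      have e2 : Uᴴ * (-(U * A * Uᴴ)) * U = -((Uᴴ * U) * A * (Uᴴ * U)) := by noncomm_ring
      rw [e1, e2, hU] at this
      simpa using this
    have e : -(U * A * Uᴴ) = U * (-A) * Uᴴ := by noncomm_ring
    rw [e, conj_exp hU, conj_exp hU]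
    refine mem_cj.2 ⟨_, h.exp_conj A hA' hs' B hB', ?_⟩
    symm
    calc _ = U * NormedSpace.exp A * (Uᴴ * U) * B * (Uᴴ * U) * NormedSpace.exp (-A) * Uᴴ := by
          noncomm_ring
      _ = _ := by rw [hU]; noncomm_ring

/-- The permutation matrix of `σ`. -/
def pmat (σ : Equiv.Perm (Fin n)) : Mat n := Matrix.of fun a b => if a = σ b then 1 else 0

lemma pmat_conj_apply (σ : Equiv.Perm (Fin n)) (A : Mat n) (a b : Fin n) :
    (pmat σ * A * (pmat σ)ᴴ) (σ a) (σ b) = A a b := by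
  simp [Matrix.mul_apply, pmat, apply_ite, Finset.sum_ite_eq]

lemma pmat_unitary (σ : Equiv.Perm (Fin n)) : (pmat σ)ᴴ * pmat σ = 1 := by
  rw [mul_eq_one_comm]
  ext a b
  obtain ⟨a, rfl⟩ := σ.surjective a
  obtain ⟨b, rfl⟩ := σ.surjective b
  have := pmat_conj_apply σ 1 a b
  rw [mul_one] at this
  rw [this, Matrix.one_apply, Matrix.one_apply]
  simp

lemma pmat_mul (σ τ : Equiv.Perm (Fin n)) : pmat σ * pmat τ = pmat (σ * τ) := by
  ext a b
  simp [pmat, Matrix.mul_apply]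
  congr

lemma pmat_one : pmat (1 : Equiv.Perm (Fin n)) = 1 := by
  ext a b
  simp [pmat, Matrix.one_apply]
  congr

lemma pmat_dg (σ : Equiv.Perm (Fin n)) (x : Euc n) :
    pmat σ * dg x * (pmat σ)ᴴ = dg (pm σ x) := by
  ext a b
  obtain ⟨a, rfl⟩ := σ.surjective a
  obtain ⟨b, rfl⟩ := σ.surjective b
  rw [pmat_conj_apply, dg_apply, dg_apply, pm_apply]
  simp

lemma Std.perm {σ : Equiv.Perm (Fin n)} (hs : Std g t) (h : ∀ x, pm σ x ∈ t' ↔ x ∈ t) :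
    Std (cj (pmat σ) g) t' where
  toPre := hs.toPre.cj (pmat_unitary σ)
  mem_t := by
    intro x
    have e := pmat_dg σ (pm σ⁻¹ x)
    rw [pm_apply_inv] at e
    have e2 : x ∈ t' ↔ pm σ⁻¹ x ∈ t := by rw [← h, pm_apply_inv]
    rw [e2, hs.mem_t, mem_cj_iff (pmat_unitary σ), ← e]
    have hU := pmat_unitary σ
    have : (pmat σ)ᴴ * (pmat σ * dg (pm σ⁻¹ x) * (pmat σ)ᴴ) * pmat σ
      = ((pmat σ)ᴴ * pmat σ) * dg (pm σ⁻¹ x) * ((pmat σ)ᴴ * pmat σ) := by noncomm_ring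
    rw [this, hU, one_mul, mul_one]
  torus := by
    intro A hA hc
    obtain ⟨B, hB, rfl⟩ := mem_cj.1 hA
    have hU := pmat_unitary σ
    obtain ⟨d, hd⟩ := hs.torus B hB (by
      intro x hx
      have h1 := hc (pm σ x) ((h x).2 hx)
      rw [← pmat_dg, conj_lie hU] at h1
      have h2 := congrArg (fun X => (pmat σ)ᴴ * X * pmat σ) h1
      simp only [mul_zero, zero_mul] at h2
      have : (pmat σ)ᴴ * (pmat σ * ⁅dg x, B⁆ * (pmat σ)ᴴ) * pmat σ
        = ((pmat σ)ᴴ * pmat σ) * ⁅dg x, B⁆ * ((pmat σ)ᴴ * pmat σ) := by noncomm_ring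
      rwa [this, hU, one_mul, mul_one] at h2)
    refine ⟨fun a => d (σ.symm a), ?_⟩
    ext a b
    obtain ⟨a, rfl⟩ := σ.surjective a
    obtain ⟨b, rfl⟩ := σ.surjective b
    rw [pmat_conj_apply, hd, Matrix.diagonal_apply, Matrix.diagonal_apply]
    simp

lemma gs_perm {σ : Equiv.Perm (Fin n)} (h : ∀ x, pm σ x ∈ t' ↔ x ∈ t) {α : Euc n} {A : Mat n}
    (hA : A ∈ gs g t α) : pmat σ * A * (pmat σ)ᴴ ∈ gs (cj (pmat σ) g) t' (pm σ α) := by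
  refine ⟨mem_cj_of hA.1, fun a b hab => ?_⟩
  obtain ⟨a, rfl⟩ := σ.surjective a
  obtain ⟨b, rfl⟩ := σ.surjective b
  rw [pmat_conj_apply] at hab
  rw [wt_pm' h, wt_pm' h, ← map_sub, gs_apply hA hab]

lemma roots_perm_sub {σ : Equiv.Perm (Fin n)} (h : ∀ x, pm σ x ∈ t' ↔ x ∈ t) {α : Euc n}
    (hα : α ∈ roots g t) : pm σ α ∈ roots (cj (pmat σ) g) t' := by
  obtain ⟨h0, A, hA, hA0⟩ := mem_roots.1 hα
  refine mem_roots_of ?_ (gs_perm h hA) fun h1 => hA0 ?_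
  · rwa [Ne, map_eq_zero_iff _ (pm σ).injective]
  · ext a b
    have := pmat_conj_apply σ A a b
    rw [h1] at this
    exact this.symm

lemma cj_pmat_inv (σ : Equiv.Perm (Fin n)) : cj (pmat σ⁻¹) (cj (pmat σ) g) = g := by
  rw [cj_cj, pmat_mul, inv_mul_cancel, pmat_one, cj_one]

lemma mem_roots_perm {σ : Equiv.Perm (Fin n)} (h : ∀ x, pm σ x ∈ t' ↔ x ∈ t) {α : Euc n} :
    pm σ α ∈ roots (cj (pmat σ) g) t' ↔ α ∈ roots g t := by
  refine ⟨fun hα => ?_, roots_perm_sub h⟩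
  have h' : ∀ x, pm σ⁻¹ x ∈ t ↔ x ∈ t' := fun x => by rw [← h, pm_apply_inv]
  have := roots_perm_sub h' hα
  rwa [cj_pmat_inv, pm_inv_apply] at this

open Classical in
lemma roots_perm {σ : Equiv.Perm (Fin n)} (h : ∀ x, pm σ x ∈ t' ↔ x ∈ t) :
    roots (cj (pmat σ) g) t' = (roots g t).image (pm σ) := by
  ext x
  rw [← pm_apply_inv σ x, mem_roots_perm h]
  simp

/-- `g` is generated by the torus and the root vectors for plus and minus the simple roots. -/
lemma generation (hs : Std g t) {v : Euc n} (hreg : Regular (roots g t) v)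
    {e : Euc n → Mat n} (he : ∀ γ ∈ simple (roots g t) v, e γ ∈ gs g t γ ∧ nsq (e γ) = 1)
    {S : Submodule ℂ (Mat n)} (hS : ∀ A ∈ S, ∀ B ∈ S, ⁅A, B⁆ ∈ S) (hd : ∀ x ∈ t, dg x ∈ S)
    (heS : ∀ γ ∈ simple (roots g t) v, e γ ∈ S) (heS' : ∀ γ ∈ simple (roots g t) v, (e γ)ᴴ ∈ S) :
    g ≤ S := by
  have hΦ := isRootSys_roots hs
  have key : ∀ α ∈ pos (roots g t) v, gs g t α ≤ S ∧ gs g t (-α) ≤ S := by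
    refine IsRootSys.pos_induction _ ?_
    intro α hα ih
    have hα0 := hΦ.ne_zero (mem_pos.1 hα).1
    suffices h : ∃ f ∈ gs g t α, f ≠ 0 ∧ f ∈ S ∧ fᴴ ∈ S by
      obtain ⟨f, hf, hf0, hfS, hfS'⟩ := h
      constructor
      · intro x hx
        rw [gs_eq_smul hs hα0 hf hf0 hx]
        exact S.smul_mem _ hfS
      · intro x hx
        rw [gs_eq_smul hs (neg_ne_zero.2 hα0) (gs_star hs hf)
          (by rwa [Ne, Matrix.conjTranspose_eq_zero]) hx]
        exact S.smul_mem _ hfS'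
    by_cases hsim : α ∈ simple (roots g t) v
    · exact ⟨e α, (he α hsim).1, ne_zero_of_nsq (he α hsim).2, heS α hsim, heS' α hsim⟩
    obtain ⟨γ, hγ, hpos⟩ := hΦ.exists_simple_inner_pos hα
    have hne : α ≠ γ := fun h => hsim (h ▸ hγ)
    have hsub := hΦ.sub_simple_pos hreg hα hγ hne hpos
    obtain ⟨i1, i2⟩ := ih _ hsub (by
      have := (mem_pos.1 (IsRootSys.simple_pos hγ)).2
      rw [inner_sub_right]; linarith)
    obtain ⟨f, hf, hfn⟩ := exists_unit (mem_pos.1 hα).1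
    obtain ⟨heγ, hen⟩ := he γ hγ
    have hne' := lie_star_ne_zero hs heγ hf (ne_zero_of_nsq hen) (ne_zero_of_nsq hfn) hpos
    have hm : ⁅(e γ)ᴴ, f⁆ ∈ gs g t (α - γ) := by
      have := gs_lie hs (gs_star hs heγ) hf
      rwa [neg_add_eq_sub] at this
    refine ⟨⁅e γ, ⁅(e γ)ᴴ, f⁆⁆, ?_, ?_, ?_, ?_⟩
    · have := gs_lie hs heγ hm
      rwa [add_sub_cancel] at this
    · intro h0
      have := trace_lie_lie (e γ)ᴴ f
      rw [Matrix.conjTranspose_conjTranspose, h0, mul_zero, Matrix.trace_zero] at this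
      exact hne' (nsq_eq_zero.1 (by exact_mod_cast this))
    · exact hS _ (heS γ hγ) _ (i1 hm)
    · rw [lie_star]
      exact hS _ (i2 (gs_star hs hm)) _ (heS' γ hγ)
  intro A hA
  rw [← sum_comp (t := t) A]
  refine S.sum_mem fun α _ => ?_
  have hc := comp_mem hs α hA
  by_cases h0 : comp t α A = 0
  · rw [h0]; exact S.zero_mem
  by_cases hα : α = 0
  · rw [hα] at hc ⊢
    obtain ⟨x, hx, y, hy, h⟩ := gs_zero_eq hs hc
    rw [h]
    exact S.add_mem (hd x hx) (S.smul_mem _ (hd y hy))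
  rcases hΦ.pos_or_neg hreg (mem_roots_of hα hc h0) with h | h
  · exact (key α h).1 hc
  · have := (key _ h).2
    rw [neg_neg] at this
    exact this hc

/-- Schur's lemma. -/
lemma schur [NeZero n] (h : Pre g) {X : Mat n} (hX : ∀ A ∈ g, A * X = X * A) :
    ∃ c : ℂ, X = c • (1 : Mat n) := by
  obtain ⟨c, hc⟩ := Module.End.exists_eigenvalue (Matrix.toLin' X)
  refine ⟨c, ?_⟩
  have htop : Module.End.eigenspace (Matrix.toLin' X) c = ⊤ := by
    refine (h.irr _ ?_).resolve_left hc
    intro A hA v hv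
    rw [Module.End.mem_eigenspace_iff, Matrix.toLin'_apply] at hv ⊢
    rw [Matrix.mulVec_mulVec, ← hX A hA, ← Matrix.mulVec_mulVec, hv, Matrix.mulVec_smul]
  ext a b
  have hb : (Pi.single b 1 : Fin n → ℂ) ∈ Module.End.eigenspace (Matrix.toLin' X) c := by
    rw [htop]; trivial
  rw [Module.End.mem_eigenspace_iff, Matrix.toLin'_apply, Matrix.mulVec_single_one] at hb
  have := congrFun hb a
  simpa [Matrix.one_apply, Pi.single_apply] using this

end Conj
end DimDatum

/-! ### Roots of a second Lie algebra with the same torus -/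

namespace DimDatum
section Common
open scoped InnerProductSpace Matrix Matrix.Norms.Operator
open Finset IsRootSys

variable {n : ℕ} {t : Submodule ℝ (Euc n)} {g g' g'' : Submodule ℂ (Mat n)}

/-- The diagonal entries of `⁅e, eᴴ⁆`. -/
lemma diag_formula (hs : Std g t) {α : Euc n} (hα : α ∈ t) {e : Mat n} (he : e ∈ gs g t α)
    (a : Fin n) : ∑ b, ‖e a b‖ ^ 2 - ∑ b, ‖e b a‖ ^ 2 = nsq e * ⟪wt t a, α⟫_ℝ := by
  have h2 := congrFun (congrFun (lie_star_self hs he) a) a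
  have key : ∀ z : ℂ, star z * z = ((‖z‖ ^ 2 : ℝ) : ℂ) := by
    intro z
    rw [Complex.star_def, ← Complex.normSq_eq_conj_mul_self, Complex.normSq_eq_norm_sq]
  rw [br_def, Matrix.sub_apply, Matrix.mul_apply, Matrix.mul_apply, Matrix.smul_apply,
    dg_apply, if_pos rfl] at h2
  have h3 : ∑ j, eᴴ a j * e j a = ((∑ j, ‖e j a‖ ^ 2 : ℝ) : ℂ) := by
    rw [Complex.ofReal_sum]
    exact Finset.sum_congr rfl fun j _ => by rw [Matrix.conjTranspose_apply, key]
  have h4 : ∑ j, e a j * eᴴ j a = ((∑ j, ‖e a j‖ ^ 2 : ℝ) : ℂ) := by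
    rw [Complex.ofReal_sum]
    exact Finset.sum_congr rfl fun j _ => by rw [Matrix.conjTranspose_apply, mul_comm, key]
  rw [h3, h4, smul_eq_mul] at h2
  rw [inner_wt hα]
  exact_mod_cast h2

/-- If `α` is a root not orthogonal to a weight, then the next weight in direction `-α`
exists. -/
lemma exists_weight_sub (hs : Std g t) {α : Euc n} (hα : α ∈ roots g t) {a0 : Fin n}
    (hpos : 0 < ⟪wt t a0, α⟫_ℝ) : ∃ b, wt t b = wt t a0 - α := by
  obtain ⟨e, he, hn⟩ := exists_unit hα
  by_contra! hb
  have h1 : ∀ b, e a0 b = 0 := by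
    intro b
    by_contra h
    apply hb b
    rw [← gs_apply he h]; abel
  have h2 := diag_formula hs (roots_sub hα) he a0
  simp only [h1, norm_zero, hn] at h2
  have h5 : 0 ≤ ∑ j, ‖e j a0‖ ^ 2 := Finset.sum_nonneg fun _ _ => by positivity
  norm_num at h2
  linarith

/-- The multiples of `α` in a root system not containing `α`. -/
lemma exists_multiple {V : Type*} [NormedAddCommGroup V] [InnerProductSpace ℝ V] {Φ : Finset V}
    (hΦ : IsRootSys Φ) {α : V} (hα : α ∉ Φ) :
    ∃ j : ℕ, j ≠ 1 ∧ ∀ z : ℤ, z ≠ 0 → (z : ℝ) • α ∈ Φ → z = j ∨ z = -j := by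
  by_cases h : ∃ j : ℕ, 1 ≤ j ∧ (j : ℝ) • α ∈ Φ
  · obtain ⟨j, hj, hjΦ⟩ := h
    have hj0 : (0 : ℝ) < j := by exact_mod_cast hj
    refine ⟨j, ?_, ?_⟩
    · rintro rfl
      simp only [Nat.cast_one, one_smul] at hjΦ
      exact hα hjΦ
    · have key : ∀ z : ℤ, 0 < z → (z : ℝ) • α ∈ Φ → z = j := by
        intro z hz h
        have hz' : (0 : ℝ) < z := by exact_mod_cast hz
        have := hΦ.smul_eq_self hjΦ (r := z / j) (by positivity)
          (by rwa [smul_smul, div_mul_cancel₀ _ hj0.ne'])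
        rw [div_eq_one_iff_eq hj0.ne'] at this
        exact_mod_cast this
      intro z hz h
      rcases hz.lt_or_gt with h0 | h0
      · right
        have := key (-z) (by omega) (by
          push_cast; rw [neg_smul]; exact hΦ.neg_mem _ h)
        omega
      · left; exact key z h0 h
  · push Not at h
    refine ⟨0, by norm_num, fun z hz hzΦ => ?_⟩
    exfalso
    rcases hz.lt_or_gt with h0 | h0
    · refine h z.natAbs (by omega) ?_
      have : ((z.natAbs : ℕ) : ℝ) = -(z : ℝ) := by
        rw [Nat.cast_natAbs, abs_of_neg h0]; push_cast; rfl
      rw [this, neg_smul]; exact hΦ.neg_mem _ hzΦ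
    · refine h z.natAbs (by omega) ?_
      have : ((z.natAbs : ℕ) : ℝ) = (z : ℝ) := by
        rw [Nat.cast_natAbs, abs_of_pos h0]
      rwa [this]

/-- A simple root that is not orthogonal to the highest weight is a root of every irreducible
Lie algebra with the same torus. -/
lemma mem_roots_of_highest (hs : Std g t) (hs'' : Std g'' t) {v : Euc n}
    (hreg : Regular (roots g t) v) {a0 : Fin n}
    (ha0 : ∀ a, a = a0 ∨ (wt t a0 - wt t a ∈ AddSubmonoid.closure (simple (roots g t) v : Set _)
      ∧ ⟪v, wt t a⟫_ℝ < ⟪v, wt t a0⟫_ℝ)) {α : Euc n} (hα : α ∈ simple (roots g t) v)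
    (hpos : 0 < ⟪wt t a0, α⟫_ℝ) : α ∈ roots g'' t := by
  classical
  by_contra hα''
  have hΦ := isRootSys_roots hs
  obtain ⟨b, hb⟩ := exists_weight_sub hs (simple_mem hα) hpos
  obtain ⟨j, hj1, hj⟩ := exists_multiple (isRootSys_roots hs'') hα''
  have hα0 := hΦ.ne_zero (simple_mem hα)
  have hαα := inner_self_pos' hα0
  have hvα := (mem_pos.1 (simple_pos hα)).2
  obtain ⟨y, hy⟩ : ∃ y, y = v - (⟪v, α⟫_ℝ / ⟪α, α⟫_ℝ) • α := ⟨_, rfl⟩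
  have hyα : ⟪y, α⟫_ℝ = 0 := by
    rw [hy, inner_sub_left, real_inner_smul_left, div_mul_cancel₀ _ hαα.ne', sub_self]
  have hyγ : ∀ γ ∈ simple (roots g t) v, γ ≠ α → 0 < ⟪y, γ⟫_ℝ := by
    intro γ hγ hne
    have h1 := (mem_pos.1 (simple_pos hγ)).2
    have h2 := hΦ.simple_inner_nonpos hreg hα hγ hne.symm
    rw [hy, inner_sub_left, real_inner_smul_left]
    have : 0 < ⟪v, α⟫_ℝ / ⟪α, α⟫_ℝ := by positivity
    nlinarith
  have key : ∀ a, ⟪y, wt t a⟫_ℝ < ⟪y, wt t a0⟫_ℝ ∨ ∃ m : ℤ, wt t a = wt t a0 + (m : ℝ) • α := by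
    intro a
    rcases ha0 a with rfl | ⟨h, -⟩
    · right; exact ⟨0, by simp⟩
    obtain ⟨c, hc⟩ := exists_coeff h
    rw [or_iff_not_imp_left]
    intro hlt
    have h1 : ⟪y, wt t a0 - wt t a⟫_ℝ
        = ∑ γ ∈ (simple (roots g t) v).erase α, c γ * ⟪y, γ⟫_ℝ := by
      rw [hc, inner_sum, ← Finset.add_sum_erase _ _ hα, real_inner_smul_right, hyα, mul_zero,
        zero_add]
      exact Finset.sum_congr rfl fun γ _ => real_inner_smul_right _ _ _
    have h0 : ∀ γ ∈ (simple (roots g t) v).erase α, 0 ≤ c γ * ⟪y, γ⟫_ℝ := fun γ hγ =>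
      mul_nonneg (Nat.cast_nonneg _)
        (hyγ γ (Finset.mem_of_mem_erase hγ) (Finset.ne_of_mem_erase hγ)).le
    have h2 : ∑ γ ∈ (simple (roots g t) v).erase α, c γ * ⟪y, γ⟫_ℝ = 0 := by
      refine le_antisymm ?_ (Finset.sum_nonneg h0)
      rw [← h1, inner_sub_right]; linarith
    rw [Finset.sum_eq_zero_iff_of_nonneg h0] at h2
    refine ⟨-(c α : ℤ), ?_⟩
    have h3 : wt t a0 - wt t a = (c α : ℝ) • α := by
      rw [hc, ← Finset.add_sum_erase _ _ hα, Finset.sum_eq_zero, add_zero]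
      intro γ hγ
      have := (mul_eq_zero.1 (h2 γ hγ)).resolve_right
        (hyγ γ (Finset.mem_of_mem_erase hγ) (Finset.ne_of_mem_erase hγ)).ne'
      rw [this, zero_smul]
    push_cast
    rw [neg_smul, ← h3]; abel
  let SV : Set (Fin n) := {a | ∃ k : ℤ, wt t a = wt t a0 + ((k * j : ℤ) : ℝ) • α}
  have hySV : ∀ a ∈ SV, ⟪y, wt t a⟫_ℝ = ⟪y, wt t a0⟫_ℝ := by
    rintro a ⟨k, hk⟩
    rw [hk, inner_add_right, real_inner_smul_right, hyα, mul_zero, add_zero]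
  have hle : ∀ a, ⟪y, wt t a⟫_ℝ ≤ ⟪y, wt t a0⟫_ℝ := by
    intro a
    rcases key a with h | ⟨m, hm⟩
    · exact h.le
    · rw [hm, inner_add_right, real_inner_smul_right, hyα, mul_zero, add_zero]
  have hin : ∀ β c d, wt t c - wt t d = β → ⟪β, y⟫_ℝ = ⟪y, wt t c⟫_ℝ - ⟪y, wt t d⟫_ℝ := by
    intro β c d h
    rw [← h, real_inner_comm, inner_sub_right]
  have hN := top_lemma hs'' y (V' := supp SV)
    (N := supp {a | ⟪y, wt t a⟫_ℝ < ⟪y, wt t a0⟫_ℝ ∨ a ∈ SV}) ?_ ?_ ?_ ?_ ?_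
  · rcases mem_of_supp_eq_top hN b with h | ⟨k, hk⟩
    · change ⟪y, wt t b⟫_ℝ < ⟪y, wt t a0⟫_ℝ at h
      rw [hb, inner_sub_right, hyα, sub_zero] at h
      exact lt_irrefl _ h
    · rw [hb, sub_eq_add_neg, add_right_inj, ← neg_one_smul ℝ α] at hk
      have h1 := smul_left_injective ℝ hα0 hk
      have h2 : (-1 : ℤ) = k * j := by exact_mod_cast h1
      have h3 : (j : ℤ) ∣ 1 := ⟨-k, by linarith⟩
      have h4 : j ∣ 1 := by exact_mod_cast h3
      exact hj1 (Nat.dvd_one.1 h4)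
  · intro h
    have : (Pi.single a0 1 : Fin n → ℂ) ∈ supp SV := single_mem_supp.2 ⟨0, by simp⟩
    rw [h, Submodule.mem_bot] at this
    have := congrFun this a0
    simp at this
  · intro β hβ A hA x hx
    rw [mem_supp] at hx ⊢
    intro c hc
    obtain ⟨d, hAd, hxd⟩ := exists_of_mulVec_ne hc
    have h1 := hin β c d (gs_apply hA hAd)
    have hd := hx d hxd
    rw [hβ, hySV d hd] at h1
    rcases key c with h | ⟨m, hm⟩
    · linarith
    obtain ⟨k, hk⟩ := hd
    rcases entry_root hs'' (gs_le _ hA) hAd with h | h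
    · exact ⟨k, by rw [h, hk]⟩
    · have h2 : wt t c - wt t d = ((m - k * j : ℤ) : ℝ) • α := by
        rw [hm, hk]; push_cast; module
      rw [h2] at h
      by_cases h0 : m - k * j = 0
      · refine ⟨k, ?_⟩
        rw [hm, show m = k * j by omega]
      rcases hj _ h0 h with h | h
      · refine ⟨k + 1, ?_⟩
        rw [hm, show m = (k + 1) * j by linarith]
      · refine ⟨k - 1, ?_⟩
        rw [hm, show m = (k - 1) * j by linarith]
  · intro β hβ A hA x hx
    by_contra h0
    obtain ⟨c, hc⟩ := Function.ne_iff.1 h0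
    obtain ⟨d, hAd, hxd⟩ := exists_of_mulVec_ne hc
    have h1 := hin β c d (gs_apply hA hAd)
    rw [hySV d (hx d hxd)] at h1
    have := hle c
    linarith
  · intro x hx a ha
    exact Or.inr (hx a ha)
  · intro β hβ A hA x hx c hc
    obtain ⟨d, hAd, hxd⟩ := exists_of_mulVec_ne hc
    have h1 := hin β c d (gs_apply hA hAd)
    have := hle d
    left
    linarith

end Common
end DimDatum

/-! ### Common roots of two Lie algebras with the same torus -/

namespace DimDatum
section Common
open scoped InnerProductSpace Matrix Matrix.Norms.Operator
open Finset IsRootSys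

variable {n : ℕ} {t : Submodule ℝ (Euc n)} {g g' g'' : Submodule ℂ (Mat n)}

lemma mem_permGroup {θ : Euc n ≃ₗᵢ[ℝ] Euc n} :
    θ ∈ permGroup t ↔ (∃ σ, θ = pm σ) ∧ ∀ x, θ x ∈ t ↔ x ∈ t := Iff.rfl

open Classical in
/-- The common roots of `g` and `g'` that stay common roots under every coordinate permutation
preserving `t`. -/
noncomputable def common (g g' : Submodule ℂ (Mat n)) (t : Submodule ℝ (Euc n)) :
    Finset (Euc n) :=
  (roots g t).filter fun α => ∀ θ ∈ permGroup t, θ α ∈ roots g t ∧ θ α ∈ roots g' t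

lemma mem_common {α : Euc n} :
    α ∈ common g g' t ↔ ∀ θ ∈ permGroup t, θ α ∈ roots g t ∧ θ α ∈ roots g' t := by
  classical
  rw [common, mem_filter]
  exact ⟨fun h => h.2, fun h => ⟨(h 1 (one_mem _)).1, h⟩⟩

lemma common_comm : common g g' t = common g' g t := by
  ext α
  simp only [mem_common, and_comm]

lemma common_sub {α : Euc n} (h : α ∈ common g g' t) : α ∈ roots g t :=
  (mem_common.1 h 1 (one_mem _)).1

lemma common_map {α : Euc n} (h : α ∈ common g g' t) {θ : Euc n ≃ₗᵢ[ℝ] Euc n}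
    (hθ : θ ∈ permGroup t) : θ α ∈ common g g' t :=
  mem_common.2 fun τ hτ => mem_common.1 h (τ * θ) (mul_mem hτ hθ)

lemma isRootSys_common (hs : Std g t) (hs' : Std g' t) : IsRootSys (common g g' t) where
  zero_notMem := fun h => (isRootSys_roots hs).zero_notMem (common_sub h)
  neg_mem := fun α hα => mem_common.2 fun θ hθ => by
    have := mem_common.1 hα θ hθ
    rw [map_neg]
    exact ⟨roots_neg hs this.1, roots_neg hs' this.2⟩
  refl_mem := fun α hα β hβ => mem_common.2 fun θ hθ => by
    have h1 := mem_common.1 hα θ hθ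
    have h2 := mem_common.1 hβ θ hθ
    rw [map_refl]
    exact ⟨roots_refl hs h1.1 h2.1, roots_refl hs' h1.2 h2.2⟩
  sub_mem := fun α hα β hβ hi hne => mem_common.2 fun θ hθ => by
    have h1 := mem_common.1 hα θ hθ
    have h2 := mem_common.1 hβ θ hθ
    rw [map_sub]
    rw [← θ.inner_map_map] at hi
    have hne' : θ α ≠ θ β := fun h => hne (θ.injective h)
    exact ⟨roots_sub_mem hs h1.1 h2.1 hi hne', roots_sub_mem hs' h1.2 h2.2 hi hne'⟩
  two_notMem := fun α hα h2 => roots_two hs (common_sub hα) (common_sub h2)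

lemma roots_mem_cj {σ : Equiv.Perm (Fin n)} (h : ∀ x, pm σ x ∈ t ↔ x ∈ t) (α : Euc n) :
    α ∈ roots (cj (pmat σ⁻¹) g) t ↔ pm σ α ∈ roots g t := by
  rw [← mem_roots_perm h (g := cj (pmat σ⁻¹) g)]
  have := cj_pmat_inv (g := g) σ⁻¹
  rw [inv_inv] at this
  rw [this]

lemma mem_common_of_highest (hs : Std g t) (hs' : Std g' t) {v : Euc n}
    (hreg : Regular (roots g t) v) {a0 : Fin n}
    (ha0 : ∀ a, a = a0 ∨ (wt t a0 - wt t a ∈ AddSubmonoid.closure (simple (roots g t) v : Set _)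
      ∧ ⟪v, wt t a⟫_ℝ < ⟪v, wt t a0⟫_ℝ)) {α : Euc n} (hα : α ∈ simple (roots g t) v)
    (hpos : 0 < ⟪wt t a0, α⟫_ℝ) : α ∈ common g g' t := by
  refine mem_common.2 fun θ hθ => ?_
  obtain ⟨⟨σ, rfl⟩, h⟩ := mem_permGroup.1 hθ
  have h' : ∀ x, pm σ⁻¹ x ∈ t ↔ x ∈ t := fun x => by rw [← h, pm_apply_inv]
  rw [← roots_mem_cj h, ← roots_mem_cj h]
  exact ⟨mem_roots_of_highest hs (hs.perm h') hreg ha0 hα hpos,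
    mem_roots_of_highest hs (hs'.perm h') hreg ha0 hα hpos⟩

lemma highest_apply {v : Euc n} {a0 : Fin n}
    (ha0 : ∀ a, a = a0 ∨ (wt t a0 - wt t a ∈ AddSubmonoid.closure (simple (roots g t) v : Set _)
      ∧ ⟪v, wt t a⟫_ℝ < ⟪v, wt t a0⟫_ℝ)) {α : Euc n} (hα : 0 < ⟪v, α⟫_ℝ) {A : Mat n}
    (hA : A ∈ gs g t α) (b : Fin n) : A b a0 = 0 := by
  by_contra h
  have h1 := gs_apply hA h
  rw [← h1, inner_sub_right] at hα
  rcases ha0 b with rfl | ⟨-, h2⟩ <;> linarith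

lemma highest_inner (hs : Std g t) {v : Euc n} {a0 : Fin n}
    (ha0 : ∀ a, a = a0 ∨ (wt t a0 - wt t a ∈ AddSubmonoid.closure (simple (roots g t) v : Set _)
      ∧ ⟪v, wt t a⟫_ℝ < ⟪v, wt t a0⟫_ℝ)) {α : Euc n} (hα : α ∈ pos (roots g t) v) :
    0 ≤ ⟪wt t a0, α⟫_ℝ := by
  obtain ⟨e, he, hn⟩ := exists_unit (mem_pos.1 hα).1
  have h := diag_formula hs (roots_sub (mem_pos.1 hα).1) he a0
  simp only [highest_apply ha0 (mem_pos.1 hα).2 he, hn, norm_zero] at h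
  norm_num at h
  rw [← h]
  positivity

/-- The common roots span the space spanned by all roots. -/
lemma roots_span [NeZero n] (hs : Std g t) (hs' : Std g' t) {v : Euc n}
    (hreg : Regular (roots g t) v) :
    ∀ α ∈ roots g t, α ∈ Submodule.span ℝ (common g g' t : Set (Euc n)) := by
  classical
  obtain ⟨a0, ha0⟩ := exists_highest hs hreg
  have hΦ := isRootSys_roots hs
  obtain ⟨E, hE⟩ : ∃ E, E = Submodule.span ℝ (common g g' t : Set (Euc n)) := ⟨_, rfl⟩
  rw [← hE]
  have hsub : ∀ ψ ∈ common g g' t, ψ ∈ E := fun ψ h => hE ▸ Submodule.subset_span h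
  have hdich : ∀ c ∈ roots g t, c ∉ E → ∀ x ∈ E, ⟪x, c⟫_ℝ = 0 := by
    intro c hc hcE x hx
    rw [hE] at hx
    induction hx using Submodule.span_induction with
    | mem ψ hψ =>
      by_contra h
      obtain ⟨σ, hσ, hr⟩ := exists_permGroup hs hc
      have h1 := common_map hψ hσ
      rw [hr _ (roots_sub (common_sub hψ))] at h1
      have h2 := E.sub_mem (hsub _ hψ) (hsub _ h1)
      rw [sub_refl] at h2
      have hcc := inner_self_pos' (hΦ.ne_zero hc)
      rw [E.smul_mem_iff (by positivity)] at h2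
      exact hcE h2
    | zero => simp
    | add x y _ _ h1 h2 => rw [inner_add_left, h1, h2, add_zero]
    | smul r x _ h => rw [real_inner_smul_left, h, mul_zero]
  have horth : ∀ c ∈ pos (roots g t) v, c ∉ E → ⟪wt t a0, c⟫_ℝ = 0 := by
    intro c hc hcE
    obtain ⟨k, hk⟩ := exists_coeff (pos_mem_closure_simple hc)
    rw [← Finset.sum_filter_add_sum_filter_not _ (fun γ => γ ∈ E)] at hk
    set p := ∑ γ ∈ (simple (roots g t) v).filter (fun γ => γ ∈ E), (k γ : ℝ) • γ with hp
    have hpE : p ∈ E := E.sum_mem fun γ hγ => E.smul_mem _ (mem_filter.1 hγ).2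
    have hp0 : p = 0 := by
      have h1 := hdich c (mem_pos.1 hc).1 hcE p hpE
      have h2 : ⟪p, ∑ γ ∈ (simple (roots g t) v).filter (fun γ => γ ∉ E), (k γ : ℝ) • γ⟫_ℝ
          = 0 := by
        rw [inner_sum]
        refine Finset.sum_eq_zero fun γ hγ => ?_
        rw [mem_filter] at hγ
        rw [real_inner_smul_right, hdich γ (simple_mem hγ.1) hγ.2 p hpE, mul_zero]
      rw [hk, inner_add_right, h2, add_zero] at h1
      exact inner_self_eq_zero.1 h1
    rw [hk, hp0, zero_add, inner_sum]
    refine Finset.sum_eq_zero fun γ hγ => ?_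
    rw [mem_filter] at hγ
    rw [real_inner_smul_right]
    have h1 := highest_inner hs ha0 (simple_pos hγ.1)
    have h2 : ¬ 0 < ⟪wt t a0, γ⟫_ℝ := fun h =>
      hγ.2 (hsub _ (mem_common_of_highest hs hs' hreg ha0 hγ.1 h))
    rw [le_antisymm (not_lt.1 h2) h1, mul_zero]
  by_contra! hcon
  obtain ⟨c, hc, hcE⟩ := hcon
  let N : Submodule ℂ (Fin n → ℂ) :=
    { carrier := {x | ∀ d ∈ roots g t, d ∉ E → ∀ A ∈ gs g t d, A *ᵥ x = 0}
      add_mem' := fun h1 h2 d hd hdE A hA => by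
        rw [Matrix.mulVec_add, h1 d hd hdE A hA, h2 d hd hdE A hA, add_zero]
      zero_mem' := fun d hd hdE A hA => Matrix.mulVec_zero _
      smul_mem' := fun r x h d hd hdE A hA => by
        rw [Matrix.mulVec_smul, h d hd hdE A hA, smul_zero] }
  have hN : N = ⊤ := by
    refine (hs.irr N ?_).resolve_left ?_
    · intro B hB x hx
      rw [← sum_comp (t := t) B, Matrix.sum_mulVec]
      refine N.sum_mem fun β _ => ?_
      have hβ := comp_mem hs β hB
      by_cases h0 : comp t β B = 0
      · rw [h0, Matrix.zero_mulVec]; exact N.zero_mem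
      by_cases hβE : β ∈ E
      · intro d hd hdE A hA
        have e1 : A *ᵥ (comp t β B *ᵥ x) = ⁅A, comp t β B⁆ *ᵥ x + comp t β B *ᵥ (A *ᵥ x) := by
          rw [br_def, Matrix.sub_mulVec, Matrix.mulVec_mulVec, Matrix.mulVec_mulVec]; abel
        rw [e1, hx d hd hdE A hA, Matrix.mulVec_zero, add_zero]
        have h2 := gs_lie hs hA hβ
        by_cases hb0 : β = 0
        · rw [hb0, add_zero] at h2
          rw [hb0]
          exact hx d hd hdE _ h2
        have hdβ : d + β ∉ E := fun h => hdE (by simpa using E.sub_mem h hβE)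
        by_cases h3 : ⁅A, comp t β B⁆ = 0
        · rw [h3, Matrix.zero_mulVec]
        · exfalso
          have h4 := mem_roots_of (fun h => hdβ (by rw [h]; exact E.zero_mem)) h2 h3
          have h5 := hdich _ h4 hdβ β hβE
          rw [inner_add_right, hdich d hd hdE β hβE, zero_add] at h5
          exact hb0 (inner_self_eq_zero.1 h5)
      · have hβ0 : β ≠ 0 := fun h => hβE (h ▸ E.zero_mem)
        rw [hx β (mem_roots_of hβ0 hβ h0) hβE _ hβ]
        exact N.zero_mem
    · intro hN
      have h1 : (Pi.single a0 1 : Fin n → ℂ) ∈ N := by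
        intro d hd hdE A hA
        rw [Matrix.mulVec_single_one]
        ext b
        rcases hΦ.pos_or_neg hreg hd with h | h
        · exact highest_apply ha0 (mem_pos.1 h).2 hA b
        · have hA' := gs_star hs hA
          have h2 := diag_formula hs (roots_sub (mem_pos.1 h).1) hA' a0
          rw [horth _ h (by rwa [E.neg_mem_iff])] at h2
          simp only [highest_apply ha0 (mem_pos.1 h).2 hA', norm_zero] at h2
          norm_num at h2
          rw [Finset.sum_eq_zero_iff_of_nonneg (fun _ _ => by positivity)] at h2
          simpa using h2 b (mem_univ _)
      rw [hN, Submodule.mem_bot] at h1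
      have := congrFun h1 a0
      simp at this
  obtain ⟨e, he, hn⟩ := exists_unit hc
  apply ne_zero_of_nsq hn
  ext a b
  have hb : (Pi.single b 1 : Fin n → ℂ) ∈ N := by rw [hN]; trivial
  have := congrFun (hb c hc hcE e he) a
  rwa [Matrix.mulVec_single_one] at this

lemma permGroup_wt {θ : Euc n ≃ₗᵢ[ℝ] Euc n} (hθ : θ ∈ permGroup t) {x : Euc n}
    (hx : x ∈ diffs t) : θ x ∈ diffs t := by
  obtain ⟨⟨σ, rfl⟩, h⟩ := mem_permGroup.1 hθ
  have : ∃ a b, x = wt t a - wt t b := by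
    simp only [diffs, Finset.mem_image] at hx
    obtain ⟨p, _, hp⟩ := hx
    exact ⟨p.1, p.2, hp.symm⟩
  obtain ⟨a, b, rfl⟩ := this
  rw [map_sub, ← wt_pm h, ← wt_pm h]
  exact mem_diffs _ _

lemma base_common (hs : Std g t) (hs' : Std g' t) :
    Base (permGroup t) t (common g g' t) (AddSubgroup.closure (diffs t : Set (Euc n))) where
  root := isRootSys_common hs hs'
  map_t := fun θ hθ x hx => ((mem_permGroup.1 hθ).2 x).2 hx
  map_Ψ := fun θ hθ x hx => common_map hx hθ
  map_Λ := fun θ hθ x hx => by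
    induction hx using AddSubgroup.closure_induction with
    | mem x hx => exact AddSubgroup.subset_closure (permGroup_wt hθ hx)
    | zero => rw [map_zero]; exact zero_mem _
    | add x y _ _ h1 h2 => rw [map_add]; exact add_mem h1 h2
    | neg x _ h => rw [map_neg]; exact neg_mem h

lemma side_common [NeZero n] (hs : Std g t) (hs' : Std g' t) {v : Euc n}
    (hreg : Regular (roots g t) v) (hsum : v = ∑ α ∈ pos (roots g t) v, α) :
    Side (permGroup t) t v (common g g' t) (AddSubgroup.closure (diffs t : Set (Euc n)))
      (roots g t) where
  root := isRootSys_roots hs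
  reg := hreg
  sum := hsum
  sub_t := fun _ h => roots_sub h
  sub := fun _ h => common_sub h
  span := roots_span hs hs' hreg
  refl_mem := fun α hα => by
    obtain ⟨σ, h1, h2⟩ := exists_permGroup hs hα
    exact ⟨_, h1, h2⟩
  lat := closure_diffs hs hreg

/-- After a permutation of the coordinates two irreducible Lie algebras with the same torus
and the same sum of positive roots have the same simple roots. -/
lemma exists_perm_simple [NeZero n] (hs : Std g t) (hs' : Std g' t) {v : Euc n}
    (hreg : Regular (roots g t) v) (hsum : v = ∑ α ∈ pos (roots g t) v, α)
    (hreg' : Regular (roots g' t) v) (hsum' : v = ∑ α ∈ pos (roots g' t) v, α) :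
    ∃ σ : Equiv.Perm (Fin n), Std (cj (pmat σ) g') t ∧ Regular (roots (cj (pmat σ) g') t) v ∧
      simple (roots g t) v = simple (roots (cj (pmat σ) g') t) v := by
  classical
  have S' := side_common hs' hs hreg' hsum'
  rw [common_comm] at S'
  obtain ⟨θ, hθ, hv, h⟩ := Side.exists_simple_eq (base_common hs hs')
    (side_common hs hs' hreg hsum) S'
  obtain ⟨⟨σ, rfl⟩, hσ⟩ := mem_permGroup.1 hθ
  refine ⟨σ, hs'.perm hσ, ?_, ?_⟩
  · rw [roots_perm hσ]
    intro α hα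
    obtain ⟨β, hβ, rfl⟩ := mem_image.1 hα
    rw [← hv, (pm σ).inner_map_map]
    exact hreg' β hβ
  · rw [roots_perm hσ, h]
    congr!

end Common
end DimDatum

/-! ### Conjugacy from equal sums of positive roots -/

namespace DimDatum
section Iso
open scoped InnerProductSpace Matrix Matrix.Norms.Operator
open Finset IsRootSys

variable {n : ℕ} {t : Submodule ℝ (Euc n)} {g g' g'' : Submodule ℂ (Mat n)}

/-- A subspace stable under the torus and the simple root vectors is trivial. -/
lemma bot_or_top_of_gen (hs : Std g t) {v : Euc n} (hreg : Regular (roots g t) v)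
    {e : Euc n → Mat n} (he : ∀ γ ∈ simple (roots g t) v, e γ ∈ gs g t γ ∧ nsq (e γ) = 1)
    {W : Submodule ℂ (Fin n → ℂ)} (hd : ∀ x ∈ t, ∀ p ∈ W, dg x *ᵥ p ∈ W)
    (h1 : ∀ γ ∈ simple (roots g t) v, ∀ p ∈ W, e γ *ᵥ p ∈ W)
    (h2 : ∀ γ ∈ simple (roots g t) v, ∀ p ∈ W, (e γ)ᴴ *ᵥ p ∈ W) : W = ⊥ ∨ W = ⊤ := by
  let S : Submodule ℂ (Mat n) :=
    { carrier := {A | ∀ p ∈ W, A *ᵥ p ∈ W}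
      add_mem' := fun ha hb p hp => by
        rw [Matrix.add_mulVec]; exact W.add_mem (ha p hp) (hb p hp)
      zero_mem' := fun p hp => by rw [Matrix.zero_mulVec]; exact W.zero_mem
      smul_mem' := fun c A hA p hp => by
        rw [Matrix.smul_mulVec]; exact W.smul_mem _ (hA p hp) }
  have hS : g ≤ S := by
    refine generation hs hreg he ?_ hd h1 h2
    intro A hA B hB p hp
    rw [br_def, Matrix.sub_mulVec, ← Matrix.mulVec_mulVec, ← Matrix.mulVec_mulVec]
    exact W.sub_mem (hA _ (hB p hp)) (hB _ (hA p hp))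
  exact hs.irr W fun A hA p hp => hS hA p hp

lemma lie_simple (hs : Std g t) {v : Euc n} (hreg : Regular (roots g t) v)
    {γ δ : Euc n} (hγ : γ ∈ simple (roots g t) v) (hδ : δ ∈ simple (roots g t) v) (hne : δ ≠ γ)
    {A B : Mat n} (hA : A ∈ gs g t δ) (hB : B ∈ gs g t γ) : ⁅A, Bᴴ⁆ = 0 := by
  have h1 := gs_lie hs hA (gs_star hs hB)
  by_contra h0
  have h2 : δ + -γ ∈ roots g t := mem_roots_of (fun h => hne (by
    rwa [← sub_eq_add_neg, sub_eq_zero] at h)) h1 h0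
  rcases (isRootSys_roots hs).pos_or_neg hreg h2 with h | h
  · exact (mem_simple.1 hδ).2 _ (simple_pos hγ) _ h (by abel)
  · exact (mem_simple.1 hγ).2 _ (simple_pos hδ) _ h (by abel)

/-- Pairs of matrices acting on `ℂⁿ × ℂⁿ`. -/
def pr (A B : Mat n) : (Fin n → ℂ) × (Fin n → ℂ) →ₗ[ℂ] (Fin n → ℂ) × (Fin n → ℂ) :=
  LinearMap.prodMap A.mulVecLin B.mulVecLin

lemma pr_apply (A B : Mat n) (p : (Fin n → ℂ) × (Fin n → ℂ)) :
    pr A B p = (A *ᵥ p.1, B *ᵥ p.2) := rfl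

lemma pr_comm (A B A' B' : Mat n) (p : (Fin n → ℂ) × (Fin n → ℂ)) :
    pr A B (pr A' B' p) = pr A' B' (pr A B p) + pr ⁅A, A'⁆ ⁅B, B'⁆ p := by
  simp only [pr_apply, br_def, Matrix.sub_mulVec, ← Matrix.mulVec_mulVec, Prod.mk_add_mk]
  ext <;> simp

lemma pr_smul (c : ℂ) (A B : Mat n) (p : (Fin n → ℂ) × (Fin n → ℂ)) :
    pr (c • A) (c • B) p = c • pr A B p := by
  simp only [pr_apply, Matrix.smul_mulVec, Prod.smul_mk]

/-- The subspace of `ℂⁿ × ℂⁿ` generated by the diagonal highest weight vector. -/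
def cyc (Δ : Finset (Euc n)) (e f : Euc n → Mat n) (a0 : Fin n) :
    Submodule ℂ ((Fin n → ℂ) × (Fin n → ℂ)) :=
  sInf {N | ((Pi.single a0 1, Pi.single a0 1) : (Fin n → ℂ) × (Fin n → ℂ)) ∈ N ∧
    ∀ γ ∈ Δ, ∀ p ∈ N, pr (e γ)ᴴ (f γ)ᴴ p ∈ N}

section
variable {Δ : Finset (Euc n)} {e f : Euc n → Mat n} {a0 : Fin n}

lemma cyc_le {N : Submodule ℂ ((Fin n → ℂ) × (Fin n → ℂ))}
    (h1 : ((Pi.single a0 1, Pi.single a0 1) : (Fin n → ℂ) × (Fin n → ℂ)) ∈ N)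
    (h2 : ∀ γ ∈ Δ, ∀ p ∈ N, pr (e γ)ᴴ (f γ)ᴴ p ∈ N) : cyc Δ e f a0 ≤ N :=
  sInf_le ⟨h1, h2⟩

lemma mem_cyc : ((Pi.single a0 1, Pi.single a0 1) : (Fin n → ℂ) × (Fin n → ℂ))
    ∈ cyc Δ e f a0 := by
  rw [cyc, Submodule.mem_sInf]
  exact fun N hN => hN.1

lemma cyc_lower {γ : Euc n} (hγ : γ ∈ Δ) {p : (Fin n → ℂ) × (Fin n → ℂ)}
    (hp : p ∈ cyc Δ e f a0) : pr (e γ)ᴴ (f γ)ᴴ p ∈ cyc Δ e f a0 := by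
  rw [cyc, Submodule.mem_sInf] at hp ⊢
  exact fun N hN => hN.2 γ hγ p (hp N hN)

end

lemma pr_highest {A B : Mat n} {a0 : Fin n} (hA : ∀ b, A b a0 = 0) (hB : ∀ b, B b a0 = 0) :
    pr A B (Pi.single a0 1, Pi.single a0 1) = 0 := by
  rw [pr_apply, Matrix.mulVec_single_one, Matrix.mulVec_single_one]
  ext b
  · exact hA b
  · exact hB b

/-- Two irreducible Lie algebras with the same torus and the same simple roots are unitarily
conjugate. -/
theorem conj_of_simple_eq [NeZero n] (hs : Std g t) (hs' : Std g' t) {v : Euc n}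
    (hreg : Regular (roots g t) v) (hreg' : Regular (roots g' t) v)
    (hΔ : simple (roots g t) v = simple (roots g' t) v) :
    ∃ U : Mat n, Uᴴ * U = 1 ∧ cj U g = g' := by
  classical
  obtain ⟨a0, ha0⟩ := exists_highest hs hreg
  obtain ⟨a1, ha1⟩ := exists_highest hs' hreg'
  obtain rfl : a0 = a1 := by
    by_contra h
    have h1 := ((ha0 a1).resolve_left (Ne.symm h)).2
    have h2 := ((ha1 a0).resolve_left h).2
    linarith
  have hch : ∀ γ, ∃ A, γ ∈ simple (roots g t) v → A ∈ gs g t γ ∧ nsq A = 1 := by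
    intro γ
    by_cases h : γ ∈ simple (roots g t) v
    · obtain ⟨A, h1, h2⟩ := exists_unit (simple_mem h)
      exact ⟨A, fun _ => ⟨h1, h2⟩⟩
    · exact ⟨0, fun h' => absurd h' h⟩
  have hch' : ∀ γ, ∃ A, γ ∈ simple (roots g' t) v → A ∈ gs g' t γ ∧ nsq A = 1 := by
    intro γ
    by_cases h : γ ∈ simple (roots g' t) v
    · obtain ⟨A, h1, h2⟩ := exists_unit (simple_mem h)
      exact ⟨A, fun _ => ⟨h1, h2⟩⟩
    · exact ⟨0, fun h' => absurd h' h⟩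
  choose e he using hch
  choose f hf using hch'
  rw [← hΔ] at hf
  obtain ⟨Δ, hΔ0⟩ : ∃ Δ, Δ = simple (roots g t) v := ⟨_, rfl⟩
  rw [← hΔ0] at he hf
  have hΔ1 : ∀ γ ∈ Δ, γ ∈ simple (roots g t) v := fun γ h => hΔ0 ▸ h
  have hΔ2 : ∀ γ ∈ Δ, γ ∈ simple (roots g' t) v := fun γ h => hΔ ▸ hΔ0 ▸ h
  have hΔp : ∀ γ ∈ Δ, 0 < ⟪v, γ⟫_ℝ := fun γ h => (mem_pos.1 (simple_pos (hΔ1 γ h))).2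
  have hΔt : ∀ γ ∈ Δ, γ ∈ t := fun γ h => roots_sub (simple_mem (hΔ1 γ h))
  set M := cyc Δ e f a0 with hM
  have ez : ∀ γ ∈ Δ, ∀ b, e γ b a0 = 0 := fun γ h => highest_apply ha0 (hΔp γ h) (he γ h).1
  have fz : ∀ γ ∈ Δ, ∀ b, f γ b a0 = 0 := fun γ h => highest_apply ha1 (hΔp γ h) (hf γ h).1
  have hMeq : ∀ p ∈ M, p.1 a0 = p.2 a0 := by
    let N : Submodule ℂ ((Fin n → ℂ) × (Fin n → ℂ)) :=
      { carrier := {p | p.1 a0 = p.2 a0}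
        add_mem' := fun {p q} h1 h2 => by
          change p.1 a0 + q.1 a0 = p.2 a0 + q.2 a0
          rw [h1, h2]
        zero_mem' := rfl
        smul_mem' := fun c p h => by
          change c * p.1 a0 = c * p.2 a0
          rw [h] }
    have : M ≤ N := by
      refine cyc_le rfl fun γ hγ p _ => ?_
      change ((e γ)ᴴ *ᵥ p.1) a0 = ((f γ)ᴴ *ᵥ p.2) a0
      simp [Matrix.mulVec, dotProduct, ez γ hγ, fz γ hγ]
    exact fun p hp => this hp
  have hMt : ∀ x ∈ t, ∀ p ∈ M, pr (dg x) (dg x) p ∈ M := by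
    intro x hx
    have : M ≤ M ⊓ M.comap (pr (dg x) (dg x)) := by
      refine cyc_le ⟨mem_cyc, ?_⟩ ?_
      · rw [SetLike.mem_coe, Submodule.mem_comap]
        have : pr (dg x) (dg x) (Pi.single a0 1, Pi.single a0 1) = (x a0 : ℂ) •
            ((Pi.single a0 1, Pi.single a0 1) : (Fin n → ℂ) × (Fin n → ℂ)) := by
          rw [pr_apply, dg, Matrix.diagonal_mulVec_single, mul_one, Prod.smul_mk,
            ← Pi.single_smul, smul_eq_mul, mul_one]
        rw [this]
        exact M.smul_mem _ mem_cyc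
      · rintro γ hγ p ⟨hp, hp'⟩
        refine ⟨cyc_lower hγ hp, ?_⟩
        rw [SetLike.mem_coe, Submodule.mem_comap] at hp' ⊢
        rw [pr_comm, lie_dg_gs (gs_star hs (he γ hγ).1) hx,
          lie_dg_gs (gs_star hs' (hf γ hγ).1) hx, pr_smul]
        exact M.add_mem (cyc_lower hγ hp') (M.smul_mem _ (cyc_lower hγ hp))
    exact fun p hp => (this hp).2
  have hMe : ∀ δ ∈ Δ, ∀ p ∈ M, pr (e δ) (f δ) p ∈ M := by
    intro δ hδ
    have : M ≤ M ⊓ M.comap (pr (e δ) (f δ)) := by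
      refine cyc_le ⟨mem_cyc, ?_⟩ ?_
      · rw [SetLike.mem_coe, Submodule.mem_comap, pr_highest (ez δ hδ) (fz δ hδ)]
        exact M.zero_mem
      · rintro γ hγ p ⟨hp, hp'⟩
        refine ⟨cyc_lower hγ hp, ?_⟩
        rw [SetLike.mem_coe, Submodule.mem_comap] at hp' ⊢
        rw [pr_comm]
        refine M.add_mem (cyc_lower hγ hp') ?_
        by_cases hne : δ = γ
        · subst hne
          rw [lie_star_self hs (he δ hδ).1, lie_star_self hs' (hf δ hδ).1, (he δ hδ).2,
            (hf δ hδ).2, pr_smul]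
          exact M.smul_mem _ (hMt δ (hΔt δ hδ) p hp)
        · rw [lie_simple hs hreg (hΔ1 γ hγ) (hΔ1 δ hδ) hne (he δ hδ).1 (he γ hγ).1,
            lie_simple hs' hreg' (hΔ2 γ hγ) (hΔ2 δ hδ) hne (hf δ hδ).1 (hf γ hγ).1]
          simp only [pr_apply, Matrix.zero_mulVec]
          exact M.zero_mem
    exact fun p hp => (this hp).2
  have hz : (Pi.single a0 1 : Fin n → ℂ) ≠ 0 := fun h => by simpa using congrFun h a0
  have he' : ∀ γ ∈ simple (roots g t) v, e γ ∈ gs g t γ ∧ nsq (e γ) = 1 := by rwa [← hΔ0]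
  have hf' : ∀ γ ∈ simple (roots g' t) v, f γ ∈ gs g' t γ ∧ nsq (f γ) = 1 := by
    rwa [← hΔ, ← hΔ0]
  have hfst : M.map (LinearMap.fst ℂ _ _) = ⊤ := by
    refine (bot_or_top_of_gen hs hreg he' ?_ ?_ ?_).resolve_left ?_
    · rintro x hx _ ⟨p, hp, rfl⟩; exact ⟨_, hMt x hx p hp, rfl⟩
    · rintro γ hγ _ ⟨p, hp, rfl⟩; exact ⟨_, hMe γ (hΔ0 ▸ hγ) p hp, rfl⟩
    · rintro γ hγ _ ⟨p, hp, rfl⟩; exact ⟨_, cyc_lower (hΔ0 ▸ hγ) hp, rfl⟩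
    · intro h
      have h1 : (Pi.single a0 1 : Fin n → ℂ) ∈ M.map (LinearMap.fst ℂ _ _) := ⟨_, mem_cyc, rfl⟩
      rw [h, Submodule.mem_bot] at h1
      exact hz h1
  have hk1 : ∀ x, ((x, 0) : (Fin n → ℂ) × (Fin n → ℂ)) ∈ M → x = 0 := by
    have : M.comap (LinearMap.inl ℂ _ _) = ⊥ := by
      refine (bot_or_top_of_gen hs hreg he' ?_ ?_ ?_).resolve_right ?_
      · intro x hx p hp
        have := hMt x hx _ hp
        rw [pr_apply, LinearMap.inl_apply, Matrix.mulVec_zero] at this; exact this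
      · intro γ hγ p hp
        have := hMe γ (hΔ0 ▸ hγ) _ hp
        rw [pr_apply, LinearMap.inl_apply, Matrix.mulVec_zero] at this; exact this
      · intro γ hγ p hp
        have := cyc_lower (hΔ0 ▸ hγ : γ ∈ Δ) hp
        rw [pr_apply, LinearMap.inl_apply, Matrix.mulVec_zero] at this; exact this
      · intro h
        have h1 : (Pi.single a0 1 : Fin n → ℂ) ∈ M.comap (LinearMap.inl ℂ _ _) := by
          rw [h]; trivial
        simpa using hMeq _ h1
    intro x hx
    have h1 : x ∈ M.comap (LinearMap.inl ℂ _ _) := hx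
    rwa [this, Submodule.mem_bot] at h1
  have hk2 : ∀ y, ((0, y) : (Fin n → ℂ) × (Fin n → ℂ)) ∈ M → y = 0 := by
    have : M.comap (LinearMap.inr ℂ _ _) = ⊥ := by
      refine (bot_or_top_of_gen hs' hreg' hf' ?_ ?_ ?_).resolve_right ?_
      · intro x hx p hp
        have := hMt x hx _ hp
        rw [pr_apply, LinearMap.inr_apply, Matrix.mulVec_zero] at this; exact this
      · intro γ hγ p hp
        have := hMe γ (hΔ0 ▸ hΔ ▸ hγ) _ hp
        rw [pr_apply, LinearMap.inr_apply, Matrix.mulVec_zero] at this; exact this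
      · intro γ hγ p hp
        have := cyc_lower (hΔ0 ▸ hΔ ▸ hγ : γ ∈ Δ) hp
        rw [pr_apply, LinearMap.inr_apply, Matrix.mulVec_zero] at this; exact this
      · intro h
        have h1 : (Pi.single a0 1 : Fin n → ℂ) ∈ M.comap (LinearMap.inr ℂ _ _) := by
          rw [h]; trivial
        simpa using hMeq _ h1
    intro x hx
    have h1 : x ∈ M.comap (LinearMap.inr ℂ _ _) := hx
    rwa [this, Submodule.mem_bot] at h1
  -- `M` is the graph of a linear isomorphism `T`
  have hex : ∀ b : Fin n, ∃ y, ((Pi.single b 1, y) : (Fin n → ℂ) × (Fin n → ℂ)) ∈ M := by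
    intro b
    have h1 : (Pi.single b 1 : Fin n → ℂ) ∈ M.map (LinearMap.fst ℂ _ _) := by
      rw [hfst]; trivial
    obtain ⟨⟨x, y⟩, hp, h⟩ := h1
    exact ⟨y, by rw [← h]; exact hp⟩
  choose Y hY using hex
  let T : Mat n := Matrix.of fun a b => Y b a
  have hTM : ∀ x, ((x, T *ᵥ x) : (Fin n → ℂ) × (Fin n → ℂ)) ∈ M := by
    intro x
    have : ((x, T *ᵥ x) : (Fin n → ℂ) × (Fin n → ℂ)) = ∑ b, x b • (Pi.single b 1, Y b) := by
      ext a
      · simp [Prod.fst_sum, Pi.single_apply]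
      · simp [Prod.snd_sum, Matrix.mulVec, dotProduct, T, mul_comm]
    rw [this]
    exact M.sum_mem fun b _ => M.smul_mem _ (hY b)
  have hTu : ∀ x y, ((x, y) : (Fin n → ℂ) × (Fin n → ℂ)) ∈ M → y = T *ᵥ x := by
    intro x y h
    have := M.sub_mem h (hTM x)
    rw [Prod.mk_sub_mk, sub_self] at this
    exact sub_eq_zero.1 (hk2 _ this)
  have hinter : ∀ A B : Mat n, (∀ p ∈ M, pr A B p ∈ M) → B * T = T * A := by
    intro A B h
    ext a b
    have h1 : B *ᵥ (T *ᵥ Pi.single b 1) = T *ᵥ (A *ᵥ Pi.single b 1) :=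
      hTu _ _ (h _ (hTM (Pi.single b 1)))
    rw [Matrix.mulVec_mulVec, Matrix.mulVec_mulVec] at h1
    have := congrFun h1 a
    rwa [Matrix.mulVec_single_one, Matrix.mulVec_single_one] at this
  have hT0 : T ≠ 0 := by
    intro h0
    have := hTM (Pi.single a0 1)
    rw [h0, Matrix.zero_mulVec] at this
    exact hz (hk1 _ this)
  have i1 : ∀ x ∈ t, dg x * T = T * dg x := fun x hx => hinter _ _ (hMt x hx)
  have i2 : ∀ γ ∈ Δ, f γ * T = T * e γ := fun γ hγ => hinter _ _ (hMe γ hγ)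
  have i3 : ∀ γ ∈ Δ, (f γ)ᴴ * T = T * (e γ)ᴴ := fun γ hγ => hinter _ _ fun p hp => cyc_lower hγ hp
  have hcomm : ∀ A B : Mat n, B * T = T * A → Bᴴ * T = T * Aᴴ →
      A * (Tᴴ * T) = Tᴴ * T * A := by
    intro A B h1 h2
    have h3 := congrArg Matrix.conjTranspose h2
    rw [Matrix.conjTranspose_mul, Matrix.conjTranspose_mul, Matrix.conjTranspose_conjTranspose,
      Matrix.conjTranspose_conjTranspose] at h3
    rw [mul_assoc, ← h1, ← mul_assoc, ← mul_assoc, h3]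
  obtain ⟨c, hc⟩ : ∃ c : ℂ, Tᴴ * T = c • (1 : Mat n) := by
    refine schur hs.toPre (X := Tᴴ * T) ?_
    let S : Submodule ℂ (Mat n) :=
      { carrier := {A | A * (Tᴴ * T) = Tᴴ * T * A}
        add_mem' := fun {A B} h1 h2 => by
          change (A + B) * (Tᴴ * T) = Tᴴ * T * (A + B)
          rw [add_mul, mul_add, h1, h2]
        zero_mem' := by
          change 0 * (Tᴴ * T) = Tᴴ * T * 0
          simp
        smul_mem' := fun c A h => by
          change (c • A) * (Tᴴ * T) = Tᴴ * T * (c • A)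
          rw [smul_mul_assoc, mul_smul_comm, h] }
    have hS : g ≤ S := by
      refine generation hs hreg he' ?_ ?_ ?_ ?_
      · intro A hA B hB
        change (A * B - B * A) * (Tᴴ * T) = Tᴴ * T * (A * B - B * A)
        change A * (Tᴴ * T) = Tᴴ * T * A at hA
        change B * (Tᴴ * T) = Tᴴ * T * B at hB
        rw [sub_mul, mul_sub, mul_assoc A B, hB, ← mul_assoc A, hA, mul_assoc B A, hA,
          ← mul_assoc B, hB, mul_assoc _ A B, mul_assoc _ B A]
      · intro x hx
        exact hcomm _ _ (i1 x hx) (by rw [dg_star]; exact i1 x hx)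
      · intro γ hγ
        exact hcomm _ _ (i2 γ (hΔ0 ▸ hγ)) (i3 γ (hΔ0 ▸ hγ))
      · intro γ hγ
        refine hcomm _ _ (i3 γ (hΔ0 ▸ hγ)) ?_
        rw [Matrix.conjTranspose_conjTranspose, Matrix.conjTranspose_conjTranspose]
        exact i2 γ (hΔ0 ▸ hγ)
    exact fun A hA => hS hA
  obtain ⟨r, hr, rfl⟩ : ∃ r : ℝ, 0 < r ∧ c = (r : ℂ) := by
    have h1 := congrArg Matrix.trace hc
    rw [trace_star_mul_self, Matrix.trace_smul, Matrix.trace_one, Fintype.card_fin,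
      smul_eq_mul] at h1
    have hn : (n : ℂ) ≠ 0 := Nat.cast_ne_zero.2 (NeZero.ne n)
    have hn' : (0 : ℝ) < n := Nat.cast_pos.2 (Nat.pos_of_ne_zero (NeZero.ne n))
    refine ⟨nsq T / n, div_pos (nsq_pos hT0) hn', ?_⟩
    push_cast
    rw [h1, mul_div_cancel_right₀ _ hn]
  let U : Mat n := ((Real.sqrt r)⁻¹ : ℂ) • T
  have hU : Uᴴ * U = 1 := by
    change (((Real.sqrt r)⁻¹ : ℂ) • T)ᴴ * (((Real.sqrt r)⁻¹ : ℂ) • T) = 1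
    rw [Matrix.conjTranspose_smul, smul_mul_smul_comm, hc, smul_smul]
    have : star ((Real.sqrt r)⁻¹ : ℂ) * ((Real.sqrt r)⁻¹ : ℂ) * (r : ℂ) = 1 := by
      rw [star_inv₀, Complex.star_def, Complex.conj_ofReal]
      have h1 : ((Real.sqrt r : ℝ) : ℂ) * (Real.sqrt r : ℝ) = (r : ℂ) := by
        exact_mod_cast Real.mul_self_sqrt hr.le
      have h2 : ((Real.sqrt r : ℝ) : ℂ) ≠ 0 := by
        exact_mod_cast (Real.sqrt_pos.2 hr).ne'
      rw [← h1]
      field_simp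
    rw [this, one_smul]
  have hU' : U * Uᴴ = 1 := mul_eq_one_comm.1 hU
  have hUc : ∀ A B : Mat n, B * T = T * A → U * A * Uᴴ = B := by
    intro A B h
    have : U * A = B * U := by
      change ((Real.sqrt r)⁻¹ : ℂ) • T * A = B * (((Real.sqrt r)⁻¹ : ℂ) • T)
      rw [smul_mul_assoc, mul_smul_comm, h]
    rw [this, mul_assoc, hU', mul_one]
  have hUs := unitary_star hU
  have l1 : g ≤ cj Uᴴ g' := by
    refine generation hs hreg he' (hs'.toPre.cj hUs).lie ?_ ?_ ?_
    · intro x hx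
      rw [mem_cj_iff hUs, Matrix.conjTranspose_conjTranspose, hUc _ _ (i1 x hx)]
      exact (hs'.mem_t x).1 hx
    · intro γ hγ
      rw [mem_cj_iff hUs, Matrix.conjTranspose_conjTranspose, hUc _ _ (i2 γ (hΔ0 ▸ hγ))]
      exact gs_le _ (hf γ (hΔ0 ▸ hγ)).1
    · intro γ hγ
      rw [mem_cj_iff hUs, Matrix.conjTranspose_conjTranspose, hUc _ _ (i3 γ (hΔ0 ▸ hγ))]
      exact hs'.star _ (gs_le _ (hf γ (hΔ0 ▸ hγ)).1)
  have l2 : g' ≤ cj U g := by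
    refine generation hs' hreg' hf' (hs.toPre.cj hU).lie ?_ ?_ ?_
    · intro x hx
      rw [← hUc _ _ (i1 x hx)]
      exact mem_cj_of ((hs.mem_t x).1 hx)
    · intro γ hγ
      have hγ : γ ∈ Δ := hΔ0 ▸ hΔ ▸ hγ
      rw [← hUc _ _ (i2 γ hγ)]
      exact mem_cj_of (gs_le _ (he γ hγ).1)
    · intro γ hγ
      have hγ : γ ∈ Δ := hΔ0 ▸ hΔ ▸ hγ
      rw [← hUc _ _ (i3 γ hγ)]
      exact mem_cj_of (hs.star _ (gs_le _ (he γ hγ).1))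
  refine ⟨U, hU, le_antisymm ?_ l2⟩
  intro A hA
  rw [mem_cj_iff hU] at hA
  have := l1 hA
  rw [mem_cj_iff hUs, Matrix.conjTranspose_conjTranspose] at this
  have e1 : U * (Uᴴ * A * U) * Uᴴ = (U * Uᴴ) * A * (U * Uᴴ) := by noncomm_ring
  rwa [e1, hU', one_mul, mul_one] at this

/-- Irreducible Lie algebras with the same torus and the same sum of positive roots are
unitarily conjugate. -/
theorem conj_of_sum_eq [NeZero n] (hs : Std g t) (hs' : Std g' t) {v : Euc n}
    (hreg : Regular (roots g t) v) (hsum : v = ∑ α ∈ pos (roots g t) v, α)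
    (hreg' : Regular (roots g' t) v) (hsum' : v = ∑ α ∈ pos (roots g' t) v, α) :
    ∃ U : Mat n, Uᴴ * U = 1 ∧ cj U g = g' := by
  obtain ⟨σ, h1, h2, h3⟩ := exists_perm_simple hs hs' hreg hsum hreg' hsum'
  obtain ⟨U, hU, hUg⟩ := conj_of_simple_eq hs h1 hreg h2 h3
  refine ⟨pmat σ⁻¹ * U, unitary_mul hU (pmat_unitary _), ?_⟩
  rw [← cj_cj, hUg, cj_pmat_inv]

end Iso
end DimDatum

/-! ### Casimir operators -/

namespace DimDatum
section Casimir
open scoped InnerProductSpace Matrix Matrix.Norms.Operator ComplexOrder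
open Finset

variable {n : ℕ} {t : Submodule ℝ (Euc n)} {g : Submodule ℂ (Mat n)}

/-- A tight frame of `g` for the Hilbert–Schmidt inner product. -/
def IsFrame {L : Type*} [Fintype L] (g : Submodule ℂ (Mat n)) (X : L → Mat n) : Prop :=
  (∀ l, X l ∈ g) ∧ ∀ A ∈ g, A = ∑ l, ((X l)ᴴ * A).trace • X l

lemma trace_gs_gs {α β : Euc n} (h : α ≠ β) {A B : Mat n} (hA : A ∈ gs g t α)
    (hB : B ∈ gs g t β) : (Aᴴ * B).trace = 0 := by
  rw [trace_eq_sum]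
  refine Finset.sum_eq_zero fun b _ => Finset.sum_eq_zero fun a _ => ?_
  by_cases h1 : A a b = 0
  · simp [h1]
  by_cases h2 : B a b = 0
  · simp [h2]
  exact absurd ((gs_apply hA h1).symm.trans (gs_apply hB h2)) h

lemma dg_mem_gs (hs : Std g t) {x : Euc n} (hx : x ∈ t) : dg x ∈ gs g t 0 := by
  refine ⟨(hs.mem_t x).1 hx, fun a b hab => ?_⟩
  rw [dg_apply] at hab
  have : a = b := by by_contra h; simp [h] at hab
  simp [this]

/-- The weight vectors of the coordinates together with unit root vectors form a tight frame. -/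
lemma isFrame (hs : Std g t) (e : {α // α ∈ roots g t} → Mat n) (he : ∀ α, e α ∈ gs g t α.1)
    (h1 : ∀ α, nsq (e α) = 1) :
    IsFrame g (Sum.elim (fun a => dg (wt t a)) e) := by
  refine ⟨?_, ?_⟩
  · rintro (a | α)
    · exact (hs.mem_t _).1 (wt_mem a)
    · exact (he α).1
  suffices H : ∀ α, ∀ A ∈ gs g t α, A = ∑ l, ((Sum.elim (fun a => dg (wt t a)) e l)ᴴ * A).trace •
      Sum.elim (fun a => dg (wt t a)) e l by
    intro A hA
    have e1 := (sum_comp (t := t) A)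
    refine e1.symm.trans ((Finset.sum_congr rfl fun α _ => H α _ (comp_mem hs α hA)).trans ?_)
    rw [Finset.sum_comm]
    refine Finset.sum_congr rfl fun l _ => ?_
    rw [← Finset.sum_smul, ← Matrix.trace_sum, ← Finset.mul_sum, e1]
  intro α A hA
  rw [Fintype.sum_sum_type]
  simp only [Sum.elim_inl, Sum.elim_inr]
  by_cases h0 : α = 0
  · subst h0
    have h2 : ∑ β, ((e β)ᴴ * A).trace • e β = 0 := by
      refine Finset.sum_eq_zero fun β _ => ?_
      rw [trace_gs_gs (mem_roots.1 β.2).1 (he β) hA, zero_smul]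
    rw [h2, add_zero]
    obtain ⟨x, hx, y, hy, rfl⟩ := gs_zero_eq hs hA
    have key : ∀ x ∈ t, dg x = ∑ a, ((dg (wt t a))ᴴ * dg x).trace • dg (wt t a) := by
      intro x hx
      conv_lhs => rw [← parseval hx]
      have : ∀ S : Finset (Fin n), dg (∑ a ∈ S, x a • wt t a) = ∑ a ∈ S, dg (x a • wt t a) := by
        intro S
        classical
        induction S using Finset.induction_on with
        | empty => ext; simp [dg_apply]
        | insert a S ha ih => rw [Finset.sum_insert ha, Finset.sum_insert ha, dg_add, ih]
      rw [this]
      refine Finset.sum_congr rfl fun a _ => ?_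
      rw [dg_star, trace_dg_mul, inner_wt hx, dg_smul]
    conv_lhs => rw [key x hx, key y hy]
    rw [Finset.smul_sum, ← Finset.sum_add_distrib]
    refine Finset.sum_congr rfl fun a _ => ?_
    rw [Matrix.mul_add, Matrix.mul_smul, Matrix.trace_add, Matrix.trace_smul, add_smul, smul_assoc]
  · have h2 : ∑ a, ((dg (wt t a))ᴴ * A).trace • dg (wt t a) = 0 := by
      refine Finset.sum_eq_zero fun a _ => ?_
      rw [trace_gs_gs (Ne.symm h0) (dg_mem_gs hs (wt_mem a)) hA, zero_smul]
    rw [h2, zero_add]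
    by_cases hr : α ∈ roots g t
    · rw [Finset.sum_eq_single (⟨α, hr⟩ : {α // α ∈ roots g t})]
      · have := gs_eq_smul hs h0 (he ⟨α, hr⟩) (ne_zero_of_nsq (h1 _)) hA
        rw [h1] at this
        simpa using this
      · intro β _ hβ
        rw [trace_gs_gs (fun h => hβ (Subtype.ext h)) (he β) hA, zero_smul]
      · intro h; exact absurd (Finset.mem_univ _) h
    · have hA0 : A = 0 := by
        by_contra h
        exact hr (mem_roots.2 ⟨h0, A, hA, h⟩)
      simp [hA0]

variable {ι : Type*} [Fintype ι] [DecidableEq ι]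

/-- A finite-dimensional `*`-representation of the matrix Lie algebra in which real diagonal
matrices act diagonally, through the weights `wgt`. -/
structure Rep (n : ℕ) (ι : Type*) [Fintype ι] [DecidableEq ι] where
  /-- the action -/
  rho : Mat n →ₗ[ℂ] Matrix ι ι ℂ
  /-- the weights -/
  wgt : ι → Euc n
  lie : ∀ A B, rho ⁅A, B⁆ = rho A * rho B - rho B * rho A
  star : ∀ A, rho Aᴴ = (rho A)ᴴ
  diag : ∀ x, rho (dg x) = Matrix.diagonal fun f => ((⟪wgt f, x⟫_ℝ : ℝ) : ℂ)

namespace Rep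

variable (R : Rep n ι)

/-- The Casimir operator of a frame. -/
noncomputable def cas {L : Type*} [Fintype L] (X : L → Mat n) : Matrix ι ι ℂ :=
  ∑ l, (R.rho (X l))ᴴ * R.rho (X l)

lemma cas_comm (hlie : ∀ A ∈ g, ∀ B ∈ g, ⁅A, B⁆ ∈ g) (hstar : ∀ A ∈ g, Aᴴ ∈ g)
    {L : Type*} [Fintype L] {X : L → Mat n} (hX : IsFrame g X) {A : Mat n}
    (hA : A ∈ g) : R.rho A * R.cas X = R.cas X * R.rho A := by
  rw [← sub_eq_zero]
  have e1 : R.rho A * R.cas X - R.cas X * R.rho A =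
      ∑ l, (R.rho ⁅A, (X l)ᴴ⁆ * R.rho (X l) + R.rho (X l)ᴴ * R.rho ⁅A, X l⁆) := by
    rw [cas, Finset.mul_sum, Finset.sum_mul, ← Finset.sum_sub_distrib]
    refine Finset.sum_congr rfl fun l _ => ?_
    rw [R.lie, R.lie, R.star]
    noncomm_ring
  have e2 : ∀ B ∈ g, B = ∑ m, (B * X m).trace • (X m)ᴴ := by
    intro B hB
    have := congrArg Matrix.conjTranspose (hX.2 _ (hstar B hB))
    rw [Matrix.conjTranspose_conjTranspose, Matrix.conjTranspose_sum] at this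
    conv_lhs => rw [this]
    refine Finset.sum_congr rfl fun m _ => ?_
    rw [Matrix.conjTranspose_smul, ← Matrix.trace_conjTranspose, Matrix.conjTranspose_mul,
      Matrix.conjTranspose_conjTranspose, Matrix.conjTranspose_conjTranspose]
  rw [e1, Finset.sum_add_distrib]
  have f1 : ∑ l, R.rho ⁅A, (X l)ᴴ⁆ * R.rho (X l) =
      ∑ l, ∑ m, (⁅A, (X l)ᴴ⁆ * X m).trace • (R.rho (X m)ᴴ * R.rho (X l)) := by
    refine Finset.sum_congr rfl fun l _ => ?_
    conv_lhs => rw [e2 _ (hlie A hA _ (hstar _ (hX.1 l))), map_sum, Finset.sum_mul]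
    refine Finset.sum_congr rfl fun m _ => ?_
    rw [map_smul, smul_mul_assoc]
  have f2 : ∑ l, R.rho (X l)ᴴ * R.rho ⁅A, X l⁆ =
      ∑ l, ∑ m, ((X l)ᴴ * ⁅A, X m⁆).trace • (R.rho (X m)ᴴ * R.rho (X l)) := by
    rw [Finset.sum_comm]
    refine Finset.sum_congr rfl fun l _ => ?_
    conv_lhs => rw [hX.2 _ (hlie A hA _ (hX.1 l)), map_sum, Finset.mul_sum]
    refine Finset.sum_congr rfl fun m _ => ?_
    rw [map_smul, mul_smul_comm]
  rw [f1, f2, ← Finset.sum_add_distrib]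
  refine Finset.sum_eq_zero fun l _ => ?_
  rw [← Finset.sum_add_distrib]
  refine Finset.sum_eq_zero fun m _ => ?_
  rw [← add_smul]
  have : (⁅A, (X l)ᴴ⁆ * X m).trace + ((X l)ᴴ * ⁅A, X m⁆).trace = 0 := by
    rw [← Matrix.trace_add, br_def, br_def]
    have : (A * (X l)ᴴ - (X l)ᴴ * A) * X m + (X l)ᴴ * (A * X m - X m * A) =
      A * ((X l)ᴴ * X m) - ((X l)ᴴ * X m) * A := by noncomm_ring
    rw [this, Matrix.trace_sub, Matrix.trace_mul_comm, sub_self]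
  rw [this, zero_smul]

lemma cas_herm {L : Type*} [Fintype L] (X : L → Mat n) : (R.cas X).IsHermitian := by
  rw [Matrix.IsHermitian, cas, Matrix.conjTranspose_sum]
  refine Finset.sum_congr rfl fun l _ => ?_
  rw [Matrix.conjTranspose_mul, Matrix.conjTranspose_conjTranspose]

/-- Vectors killed by the Casimir operator are killed by `g`, by positivity. -/
lemma cas_ker {L : Type*} [Fintype L] {X : L → Mat n} (hX : IsFrame g X) {m : ι → ℂ}
    (hm : R.cas X *ᵥ m = 0) {A : Mat n} (hA : A ∈ g) : R.rho A *ᵥ m = 0 := by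
  have h1 : ∑ l, (Star.star (R.rho (X l) *ᵥ m)) ⬝ᵥ (R.rho (X l) *ᵥ m) = 0 := by
    have : Star.star m ⬝ᵥ (R.cas X *ᵥ m) = 0 := by rw [hm, dotProduct_zero]
    rw [← this, cas, Matrix.sum_mulVec, dotProduct_sum]
    refine Finset.sum_congr rfl fun l _ => ?_
    rw [← Matrix.mulVec_mulVec, Matrix.dotProduct_mulVec (Star.star m), ← Matrix.star_mulVec]
  have h2 : ∀ l, R.rho (X l) *ᵥ m = 0 := by
    intro l
    have h3 := (Finset.sum_eq_zero_iff_of_nonneg (fun l _ =>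
      dotProduct_star_self_nonneg (R.rho (X l) *ᵥ m))).1
      h1 l (Finset.mem_univ _)
    exact dotProduct_star_self_eq_zero.1 h3
  rw [hX.2 A hA, map_sum, Matrix.sum_mulVec]
  refine Finset.sum_eq_zero fun l _ => ?_
  rw [map_smul, Matrix.smul_mulVec, h2, smul_zero]

end Rep

/-- Unitary diagonalization of a Hermitian matrix `C`; functions of `C` commute with the commutant
of `C`. -/
lemma exists_diagonalization {C : Matrix ι ι ℂ} (hC : C.IsHermitian) :
    ∃ (U : Matrix ι ι ℂ) (d : ι → ℂ), Uᴴ * U = 1 ∧ C = U * Matrix.diagonal d * Uᴴ ∧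
      ∀ B, B * C = C * B → ∀ f : ℂ → ℂ,
        B * (U * Matrix.diagonal (fun i => f (d i)) * Uᴴ) =
          (U * Matrix.diagonal (fun i => f (d i)) * Uᴴ) * B := by
  set U : Matrix ι ι ℂ := hC.eigenvectorUnitary.1 with hU
  set d : ι → ℂ := fun i => (hC.eigenvalues i : ℂ) with hd
  have u1 : Uᴴ * U = 1 := by
    have := (Matrix.mem_unitaryGroup_iff').1 hC.eigenvectorUnitary.2
    simpa [Matrix.star_eq_conjTranspose] using this
  have u2 : U * Uᴴ = 1 := mul_eq_one_comm.1 u1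
  have hspec : C = U * Matrix.diagonal d * Uᴴ := by
    have := hC.spectral_theorem
    rw [Unitary.conjStarAlgAut_apply] at this
    exact this
  refine ⟨U, d, u1, hspec, ?_⟩
  intro B hB f
  set B' := Uᴴ * B * U with hB'
  have hBB : B = U * B' * Uᴴ := by
    calc B = (U * Uᴴ) * B * (U * Uᴴ) := by rw [u2]; simp
      _ = _ := by rw [hB']; noncomm_ring
  have h1 : B' * Matrix.diagonal d = Matrix.diagonal d * B' := by
    calc B' * Matrix.diagonal d = Uᴴ * (B * C) * U := by
          rw [hspec, hB']
          calc _ = Uᴴ * B * U * Matrix.diagonal d * 1 := by simp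
            _ = _ := by rw [← u1]; noncomm_ring
      _ = Uᴴ * (C * B) * U := by rw [hB]
      _ = _ := by
          rw [hspec, hB']
          calc _ = (Uᴴ * U) * Matrix.diagonal d * (Uᴴ * B * U) := by noncomm_ring
            _ = _ := by rw [u1]; simp
  have h2 : B' * Matrix.diagonal (fun i => f (d i)) = Matrix.diagonal (fun i => f (d i)) * B' := by
    ext i j
    have h3 := congrFun (congrFun h1 i) j
    rw [Matrix.mul_diagonal, Matrix.diagonal_mul] at h3 ⊢
    by_cases h4 : B' i j = 0
    · simp [h4]
    · have : d j = d i := by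
        apply mul_left_cancel₀ h4
        rw [h3, mul_comm]
      rw [this, mul_comm]
  rw [hBB]
  calc _ = U * B' * (Uᴴ * U) * Matrix.diagonal (fun i => f (d i)) * Uᴴ := by noncomm_ring
    _ = U * (B' * Matrix.diagonal (fun i => f (d i))) * Uᴴ := by rw [u1]; noncomm_ring
    _ = U * Matrix.diagonal (fun i => f (d i)) * 1 * B' * Uᴴ := by rw [h2]; noncomm_ring
    _ = _ := by rw [← u1]; noncomm_ring

/-- A Hermitian matrix `C` has a kernel projection `Q` and a generalized inverse `K`, both
commuting with the commutant of `C`. -/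
lemma exists_kernel_proj {C : Matrix ι ι ℂ} (hC : C.IsHermitian) :
    ∃ Q K : Matrix ι ι ℂ, C * Q = 0 ∧ C * K = 1 - Q ∧ Q * Q = Q ∧
      (∀ B, B * C = C * B → B * Q = Q * B ∧ B * K = K * B) := by
  obtain ⟨U, d, u1, hspec, hcomm⟩ := exists_diagonalization hC
  have u2 : U * Uᴴ = 1 := mul_eq_one_comm.1 u1
  have hm : ∀ a b : ι → ℂ, (U * Matrix.diagonal a * Uᴴ) * (U * Matrix.diagonal b * Uᴴ) =
      U * Matrix.diagonal (fun i => a i * b i) * Uᴴ := by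
    intro a b
    calc _ = U * Matrix.diagonal a * (Uᴴ * U) * Matrix.diagonal b * Uᴴ := by noncomm_ring
      _ = _ := by
        rw [u1, Matrix.mul_one, Matrix.mul_assoc U, Matrix.diagonal_mul_diagonal]
  classical
  set q : ι → ℂ := fun i => if d i = 0 then 1 else 0
  set k : ι → ℂ := fun i => (d i)⁻¹
  refine ⟨U * Matrix.diagonal q * Uᴴ, U * Matrix.diagonal k * Uᴴ, ?_, ?_, ?_, fun B hB => ⟨?_, ?_⟩⟩
  · have : (fun i => d i * q i) = fun _ => 0 := by
      funext i; by_cases h : d i = 0 <;> simp [q, h]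
    rw [hspec, hm, this]; simp
  · have : (fun i => d i * k i) = fun i => 1 - q i := by
      funext i; by_cases h : d i = 0 <;> simp [q, k, h]
    rw [hspec, hm, this]
    have : Matrix.diagonal (fun i => 1 - q i) = 1 - Matrix.diagonal q := by
      rw [← Matrix.diagonal_one, Matrix.diagonal_sub]
    rw [this, Matrix.mul_sub, Matrix.sub_mul, Matrix.mul_one, u2]
  · have : (fun i => q i * q i) = q := by
      funext i; by_cases h : d i = 0 <;> simp [q, h]
    rw [hm, this]
  · exact hcomm B hB fun z => if z = 0 then 1 else 0
  · exact hcomm B hB fun z => z⁻¹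

end Casimir
end DimDatum

/-! ### The weighted trace formula -/

namespace DimDatum
section TraceFormula
open scoped InnerProductSpace Matrix Matrix.Norms.Operator
open Finset

variable {n : ℕ} {t : Submodule ℝ (Euc n)} {g : Submodule ℂ (Mat n)}
variable {ι : Type*} [Fintype ι] [DecidableEq ι] (R : Rep n ι)

namespace Rep

/-- The weight of the basis vector `f` restricted to the torus `t`. -/
noncomputable def rwt (t : Submodule ℝ (Euc n)) (f : ι) : Euc n := t.starProjection (R.wgt f)

lemma rwt_mem (f : ι) : R.rwt t f ∈ t := Submodule.starProjection_apply_mem _ _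

lemma inner_rwt (f : ι) {x : Euc n} (hx : x ∈ t) : ⟪R.rwt t f, x⟫_ℝ = ⟪R.wgt f, x⟫_ℝ := by
  rw [rwt, Submodule.inner_starProjection_left_eq_right,
    Submodule.starProjection_eq_self_iff.2 hx]

lemma rho_dg {x : Euc n} (hx : x ∈ t) :
    R.rho (dg x) = Matrix.diagonal fun f => ((⟪R.rwt t f, x⟫_ℝ : ℝ) : ℂ) := by
  rw [R.diag]
  congr 1
  funext f
  rw [R.inner_rwt f hx]

lemma rho_gs {α : Euc n} {e : Mat n} (he : e ∈ gs g t α) {f f' : ι} (h : R.rho e f f' ≠ 0) :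
    R.rwt t f = R.rwt t f' + α := by
  have e0 : e ≠ 0 := by rintro rfl; simp at h
  have hα := mem_t_of_gs he e0
  refine eq_of_inner (R.rwt_mem f) (t.add_mem (R.rwt_mem f') hα) fun x hx => ?_
  have h1 := congrFun (congrFun (R.lie (dg x) e) f) f'
  rw [lie_dg_gs he hx, map_smul, R.rho_dg hx, Matrix.sub_apply, Matrix.diagonal_mul,
    Matrix.mul_diagonal, Matrix.smul_apply, smul_eq_mul] at h1
  have h2 : (((⟪α, x⟫_ℝ : ℝ) : ℂ)) = (⟪R.rwt t f, x⟫_ℝ : ℝ) - (⟪R.rwt t f', x⟫_ℝ : ℝ) := by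
    apply mul_right_cancel₀ h
    rw [h1]; ring
  rw [inner_add_left]
  have h3 : (⟪α, x⟫_ℝ : ℝ) = ⟪R.rwt t f, x⟫_ℝ - ⟪R.rwt t f', x⟫_ℝ := by exact_mod_cast h2
  linarith

open Classical in
/-- The contribution of a single root to the weighted trace of the Casimir operator. -/
lemma theta_root (hs : Std g t) {α : Euc n} (hα : α ∈ roots g t) {e : Mat n} (he : e ∈ gs g t α)
    (h1 : nsq e = 1) {B : Matrix ι ι ℂ} (hB : ∀ A ∈ g, R.rho A * B = B * R.rho A) :
    ∑ f, ((R.rho e)ᴴ * R.rho e * B) f f * (dcoef (roots g t) (-R.rwt t f) : ℂ) =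
      ∑ f, B f f * (-(⟪R.rwt t f, α⟫_ℝ : ℝ) *
        (dcoef ((roots g t).erase α) (-R.rwt t f) : ℂ)) := by
  set E := R.rho e
  set p : ι → ℂ := fun f => (dcoef ((roots g t).erase α) (-R.rwt t f) : ℂ)
  set p' : ι → ℂ := fun f => (dcoef ((roots g t).erase α) (-(R.rwt t f + α)) : ℂ)
  have hD : ∀ f, (dcoef (roots g t) (-R.rwt t f) : ℂ) = p f - p' f := by
    intro f
    rw [dcoef_erase hα]
    simp only [p, p']
    rw [neg_add, ← sub_eq_add_neg]
    push_cast
    congr!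
  have hE : E * Matrix.diagonal p' = Matrix.diagonal p * E := by
    ext f f'
    rw [Matrix.mul_diagonal, Matrix.diagonal_mul]
    by_cases h : E f f' = 0
    · simp [h]
    · simp only [p, p', R.rho_gs he h]
      ring
  have tr : ∀ (M : Matrix ι ι ℂ) (q : ι → ℂ), ∑ f, M f f * q f = (M * Matrix.diagonal q).trace := by
    intro M q
    simp [Matrix.trace, Matrix.mul_diagonal]
  have hEB : E * B = B * E := hB e he.1
  have hcomm : Eᴴ * E - E * Eᴴ = - R.rho (dg α) := by
    have := R.lie e eᴴ
    rw [lie_star_self hs he, h1, R.star] at this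
    simp only [Complex.ofReal_one, one_smul] at this
    rw [this]; simp only [E]; abel
  calc _ = (Eᴴ * E * B * Matrix.diagonal p).trace - (Eᴴ * E * B * Matrix.diagonal p').trace := by
        rw [← tr, ← tr, ← Finset.sum_sub_distrib]
        refine Finset.sum_congr rfl fun f _ => ?_
        rw [hD]; ring
    _ = (Eᴴ * E * B * Matrix.diagonal p).trace - (E * Eᴴ * B * Matrix.diagonal p).trace := by
        congr 1
        calc _ = (Eᴴ * B * (E * Matrix.diagonal p')).trace := by
              rw [Matrix.mul_assoc Eᴴ E B, hEB]; simp only [Matrix.mul_assoc]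
          _ = ((Eᴴ * B * Matrix.diagonal p) * E).trace := by
              rw [hE]; simp only [Matrix.mul_assoc]
          _ = _ := by rw [Matrix.trace_mul_comm]; simp only [Matrix.mul_assoc]
    _ = ((- R.rho (dg α)) * B * Matrix.diagonal p).trace := by
        rw [← hcomm, ← Matrix.trace_sub]; noncomm_ring
    _ = _ := by
        rw [← tr, R.rho_dg (roots_sub hα)]
        refine Finset.sum_congr rfl fun f _ => ?_
        rw [Matrix.neg_mul, Matrix.neg_apply, Matrix.diagonal_mul]
        ring

/-- The weighted trace annihilates the image of the Casimir operator; this is `dcoef_laplace` summed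
over the weights of the representation. -/
lemma theta_cas (hs : Std g t) (e : {α // α ∈ roots g t} → Mat n) (he : ∀ α, e α ∈ gs g t α.1)
    (h1 : ∀ α, nsq (e α) = 1) {B : Matrix ι ι ℂ} (hB : ∀ A ∈ g, R.rho A * B = B * R.rho A) :
    ∑ f, (R.cas (Sum.elim (fun a => dg (wt t a)) e) * B) f f *
      (dcoef (roots g t) (-R.rwt t f) : ℂ) = 0 := by
  classical
  have e1 : ∀ f, (R.cas (Sum.elim (fun a => dg (wt t a)) e) * B) f f =
      ((⟪R.rwt t f, R.rwt t f⟫_ℝ : ℝ) : ℂ) * B f f +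
        ∑ α, ((R.rho (e α))ᴴ * R.rho (e α) * B) f f := by
    intro f
    rw [cas, Finset.sum_mul, Matrix.sum_apply, Fintype.sum_sum_type]
    simp only [Sum.elim_inl, Sum.elim_inr]
    congr 1
    have : ∀ a, ((R.rho (dg (wt t a)))ᴴ * R.rho (dg (wt t a)) * B) f f =
        (((R.rwt t f) a * (R.rwt t f) a : ℝ) : ℂ) * B f f := by
      intro a
      rw [← R.star, dg_star, R.rho_dg (wt_mem a), Matrix.diagonal_mul_diagonal,
        Matrix.diagonal_mul, inner_wt' (R.rwt_mem f)]
      push_cast; rfl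
    rw [Finset.sum_congr rfl fun a _ => this a, ← Finset.sum_mul, ← Complex.ofReal_sum]
    congr 2
  simp only [e1, add_mul, Finset.sum_add_distrib, Finset.sum_mul]
  rw [Finset.sum_comm (s := univ) (t := univ)]
  rw [Finset.sum_congr rfl fun α _ => R.theta_root hs α.2 (he α) (h1 α) hB]
  rw [Finset.sum_comm, ← Finset.sum_add_distrib]
  refine Finset.sum_eq_zero fun f _ => ?_
  have h2 := dcoef_laplace (isRootSys_roots hs) (-R.rwt t f)
  rw [← Finset.mul_sum]
  have h3 : ∑ α : {α // α ∈ roots g t}, (-(⟪R.rwt t f, α.1⟫_ℝ : ℝ) *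
        (dcoef ((roots g t).erase α.1) (-R.rwt t f) : ℂ)) =
      ((∑ α ∈ roots g t, ⟪α, -R.rwt t f⟫_ℝ *
        (dcoef ((roots g t).erase α) (-R.rwt t f) : ℝ) : ℝ) : ℂ) := by
    rw [← Finset.sum_coe_sort (roots g t)]
    push_cast
    refine Finset.sum_congr rfl fun α _ => ?_
    rw [inner_neg_right, real_inner_comm]
    push_cast; ring
  have h4 : ∑ α ∈ roots g t, ⟪α, -R.rwt t f⟫_ℝ *
        (dcoef ((roots g t).erase α) (-R.rwt t f) : ℝ) =
      -(⟪R.rwt t f, R.rwt t f⟫_ℝ * (dcoef (roots g t) (-R.rwt t f) : ℝ)) := by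
    rw [inner_neg_neg] at h2
    rw [← eq_neg_of_add_eq_zero_right h2]
    congr!
  rw [h3, h4]
  push_cast
  ring

/-- The vectors killed by the Lie algebra and fixed by `p`. -/
def inv (g : Submodule ℂ (Mat n)) (p : Matrix ι ι ℂ) : Submodule ℂ (ι → ℂ) where
  carrier := {m | (∀ A ∈ g, R.rho A *ᵥ m = 0) ∧ p *ᵥ m = m}
  add_mem' := by
    rintro a b ⟨h1, h2⟩ ⟨h3, h4⟩
    exact ⟨fun A hA => by rw [Matrix.mulVec_add, h1 A hA, h3 A hA, add_zero],
      by rw [Matrix.mulVec_add, h2, h4]⟩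
  zero_mem' := ⟨fun A _ => Matrix.mulVec_zero _, Matrix.mulVec_zero _⟩
  smul_mem' := by
    rintro c a ⟨h1, h2⟩
    exact ⟨fun A hA => by rw [Matrix.mulVec_smul, h1 A hA, smul_zero],
      by rw [Matrix.mulVec_smul, h2]⟩

/-- The weighted trace formula: weighting the diagonal of an equivariant idempotent by the
coefficients of the Weyl denominator of `g` computes the multiplicity of the trivial
representation in its image. -/
theorem trace_formula (hs : Std g t) {p : Matrix ι ι ℂ} (hp : p * p = p)
    (hcomm : ∀ A ∈ g, R.rho A * p = p * R.rho A) :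
    ∑ f, p f f * (dcoef (roots g t) (-R.rwt t f) : ℂ) =
      (dcoef (roots g t) 0 : ℂ) * (Module.finrank ℂ (R.inv g p) : ℂ) := by
  classical
  choose e he h1 using fun α : {α // α ∈ roots g t} => exists_unit α.2
  set X := Sum.elim (fun a => dg (wt t a)) e with hXdef
  have hX : IsFrame g X := isFrame hs e he h1
  obtain ⟨Q, K, hCQ, hCK, hQQ, hQK⟩ := exists_kernel_proj (R.cas_herm X)
  have hQg : ∀ A ∈ g, R.rho A * Q = 0 := by
    intro A hA
    ext i j
    have h2 : R.cas X *ᵥ (Q.col j) = 0 := by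
      funext i
      have := congrFun (congrFun hCQ i) j
      rw [Matrix.mul_apply] at this
      simpa [Matrix.mulVec, dotProduct] using this
    have := congrFun (R.cas_ker hX h2 hA) i
    rw [Matrix.mul_apply]
    simpa [Matrix.mulVec, dotProduct] using this
  have hcc : ∀ A ∈ g, R.rho A * R.cas X = R.cas X * R.rho A := fun A hA =>
    R.cas_comm hs.lie hs.star hX hA
  have hgQ : ∀ A ∈ g, Q * R.rho A = 0 := fun A hA => by
    rw [← (hQK _ (hcc A hA)).1, hQg A hA]
  have hpC : p * R.cas X = R.cas X * p := by
    rw [cas, Finset.mul_sum, Finset.sum_mul]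
    refine Finset.sum_congr rfl fun l _ => ?_
    rw [← R.star, ← Matrix.mul_assoc, ← hcomm _ (hs.star _ (hX.1 l)), Matrix.mul_assoc,
      ← hcomm _ (hX.1 l), Matrix.mul_assoc]
  obtain ⟨hpQ, hpK⟩ := hQK p hpC
  have hsplit : p = Q * p + R.cas X * (K * p) := by
    rw [← Matrix.mul_assoc, hCK]; noncomm_ring
  have hzero : ∑ f, (R.cas X * (K * p)) f f * (dcoef (roots g t) (-R.rwt t f) : ℂ) = 0 := by
    refine R.theta_cas hs e he h1 fun A hA => ?_
    rw [← Matrix.mul_assoc, (hQK _ (hcc A hA)).2, Matrix.mul_assoc, hcomm A hA, Matrix.mul_assoc]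
  have hQ0 : ∀ f f', Q f f' ≠ 0 → R.rwt t f = 0 := by
    intro f f' h
    refine eq_of_inner (R.rwt_mem f) t.zero_mem fun x hx => ?_
    have := congrFun (congrFun (hQg _ ((hs.mem_t x).1 hx)) f) f'
    rw [R.rho_dg hx, Matrix.diagonal_mul] at this
    have := (mul_eq_zero.1 this).resolve_right h
    rw [inner_zero_left]
    exact_mod_cast this
  have htr : ∑ f, (Q * p) f f * (dcoef (roots g t) (-R.rwt t f) : ℂ) =
      (dcoef (roots g t) 0 : ℂ) * (Q * p).trace := by
    rw [Matrix.trace, Finset.mul_sum]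
    refine Finset.sum_congr rfl fun f _ => ?_
    rw [Matrix.diag_apply]
    by_cases h : R.rwt t f = 0
    · rw [h, neg_zero, mul_comm]
    · have : (Q * p) f f = 0 := by
        rw [Matrix.mul_apply]
        refine Finset.sum_eq_zero fun f' _ => ?_
        have : Q f f' = 0 := by by_contra h'; exact h (hQ0 f f' h')
        rw [this, zero_mul]
      rw [this]; ring
  have hproj : LinearMap.IsProj (R.inv g p) (Matrix.toLin' (Q * p)) := by
    refine ⟨fun m => ⟨fun A hA => ?_, ?_⟩, fun m hm => ?_⟩
    · rw [Matrix.toLin'_apply, Matrix.mulVec_mulVec, ← Matrix.mul_assoc, hQg A hA]; simp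
    · rw [Matrix.toLin'_apply, Matrix.mulVec_mulVec, ← Matrix.mul_assoc, hpQ, Matrix.mul_assoc, hp]
    · rw [Matrix.toLin'_apply, ← Matrix.mulVec_mulVec, hm.2]
      have h2 : R.cas X *ᵥ m = 0 := by
        rw [cas, Matrix.sum_mulVec]
        refine Finset.sum_eq_zero fun l _ => ?_
        rw [← Matrix.mulVec_mulVec, hm.1 _ (hX.1 l), Matrix.mulVec_zero]
      have h3 : Q = 1 - K * R.cas X := by
        rw [← (hQK (R.cas X) rfl).2, hCK]; abel
      rw [h3, Matrix.sub_mulVec, ← Matrix.mulVec_mulVec, h2, Matrix.mulVec_zero, sub_zero,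
        Matrix.one_mulVec]
  have htrace : (Q * p).trace = (Module.finrank ℂ (R.inv g p) : ℂ) := by
    rw [← hproj.trace, Matrix.trace_toLin'_eq]
  rw [← htrace, ← htr]
  have : ∀ f, p f f = (Q * p) f f + (R.cas X * (K * p)) f f := fun f => by
    conv_lhs => rw [hsplit]
    rfl
  simp only [this, add_mul, Finset.sum_add_distrib]
  rw [hzero, add_zero]

end Rep
end TraceFormula
end DimDatum

/-! ### Idempotents on tensor powers -/

namespace DimDatum
section TensorComb
set_option linter.unusedSectionVars false
open scoped InnerProductSpace Matrix Matrix.Norms.Operator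
open Finset

variable {n : ℕ}
variable {ι : Type*} [Fintype ι] [DecidableEq ι]

/-- Spectral decomposition of a Hermitian matrix into idempotents commuting with its commutant. -/
lemma exists_idempotents {C : Matrix ι ι ℂ} (hC : C.IsHermitian) :
    ∃ (S : Finset ℂ) (Q : ℂ → Matrix ι ι ℂ), C = ∑ l ∈ S, l • Q l ∧
      (∀ l, Q l * Q l = Q l) ∧ (∀ B, B * C = C * B → ∀ l, B * Q l = Q l * B) := by
  classical
  obtain ⟨U, d, u1, hspec, hcomm⟩ := exists_diagonalization hC
  refine ⟨univ.image d, fun l => U * Matrix.diagonal (fun i => if d i = l then 1 else 0) * Uᴴ,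
    ?_, fun l => ?_, fun B hB l => hcomm B hB fun z => if z = l then 1 else 0⟩
  · have e1 : ∀ (l : ℂ) (D : Matrix ι ι ℂ), l • (U * D * Uᴴ) = U * (l • D) * Uᴴ := by
      intro l D
      rw [Matrix.mul_smul, Matrix.smul_mul]
    simp only [e1]
    rw [← Finset.sum_mul, ← Finset.mul_sum]
    refine hspec.trans ?_
    congr 2
    ext i j
    rw [Matrix.sum_apply]
    by_cases h : i = j
    · subst h
      simp
    · simp [h]
  · calc _ = U * Matrix.diagonal (fun i => if d i = l then 1 else 0) * (Uᴴ * U) *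
          Matrix.diagonal (fun i => if d i = l then 1 else 0) * Uᴴ := by noncomm_ring
      _ = _ := by
        rw [u1, Matrix.mul_one, Matrix.mul_assoc U, Matrix.diagonal_mul_diagonal]
        simp only [mul_ite, mul_one, mul_zero]
        congr 3
        funext i
        split_ifs <;> rfl

/-- The operator on a tensor power of `ℂⁿ`, with factors indexed by `K`, given by a matrix on each
factor. -/
def tens {K : Type} [Fintype K] (G : K → Mat n) : Matrix (K → Fin n) (K → Fin n) ℂ :=
  Matrix.of fun f h => ∏ κ, G κ (f κ) (h κ)

/-- The weight of a tensor product of basis vectors, twisted by the `k`-th power of the inverse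
determinant. -/
noncomputable def twt {K : Type} [Fintype K] (k : ℕ) (f : K → Fin n) : Euc n :=
  WithLp.toLp 2 fun a => (∑ κ, if f κ = a then (1 : ℝ) else 0) - k

variable {K : Type} [Fintype K] [DecidableEq K]

lemma tens_mul (G G' : K → Mat n) : tens G * tens G' = tens fun κ => G κ * G' κ := by
  ext f f'
  simp only [tens, Matrix.mul_apply, Matrix.of_apply]
  rw [Finset.prod_univ_sum, Fintype.piFinset_univ]
  simp only [Finset.prod_mul_distrib]

lemma tens_one : tens (fun _ : K => (1 : Mat n)) = 1 := by
  ext f f'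
  simp only [tens, Matrix.of_apply, Matrix.one_apply]
  rw [Finset.prod_ite_zero]
  simp [funext_iff]

/-- The Hermitian part of the permutation of the tensor factors. -/
def permOp (y : Equiv.Perm K) : Matrix (K → Fin n) (K → Fin n) ℂ :=
  Matrix.of fun f f' => (if f' = f ∘ y then 1 else 0) + (if f = f' ∘ y then 1 else 0)

lemma permOp_herm (y : Equiv.Perm K) : (permOp (n := n) y).IsHermitian := by
  ext f f'
  simp only [permOp, Matrix.conjTranspose_apply, Matrix.of_apply]
  rw [star_add, add_comm]
  congr 1 <;> split_ifs <;> simp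

lemma comp_eq_iff (y : Equiv.Perm K) (f f' : K → Fin n) : f = f' ∘ y ↔ f' = f ∘ y.symm := by
  constructor
  · rintro rfl; ext; simp
  · rintro rfl; ext; simp

lemma permOp_comm (y : Equiv.Perm K) (A : Mat n) :
    tens (fun _ : K => A) * permOp y = permOp y * tens (fun _ : K => A) := by
  have key : ∀ (z : Equiv.Perm K) (f f' : K → Fin n),
      tens (fun _ => A) (f ∘ z) (f' ∘ z) = tens (fun _ => A) f f' := by
    intro z f f'
    simp only [tens, Matrix.of_apply, Function.comp]
    exact Equiv.prod_comp z fun κ => A (f κ) (f' κ)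
  ext f f'
  simp only [Matrix.mul_apply]
  have h1 : ∀ f'' : K → Fin n, permOp y f f'' =
      (if f'' = f ∘ y then 1 else 0) + (if f'' = f ∘ y.symm then 1 else 0) := by
    intro f''
    simp only [permOp, Matrix.of_apply, comp_eq_iff y f f'']
  have h2 : ∀ f'' : K → Fin n, permOp y f'' f' =
      (if f'' = f' ∘ y.symm then 1 else 0) + (if f'' = f' ∘ y then 1 else 0) := by
    intro f''
    simp only [permOp, Matrix.of_apply, comp_eq_iff y f' f'']
  simp only [h1, h2, mul_add, add_mul, Finset.sum_add_distrib, mul_ite, mul_one, mul_zero,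
    ite_mul, one_mul, zero_mul, Finset.sum_ite_eq', Finset.mem_univ, if_true]
  congr 1
  · rw [← key y f]
    congr 1
    ext; simp
  · rw [← key y.symm f]
    congr 1
    ext; simp

/-- Idempotents suffice to detect the Hermitian permutation operators. -/
lemma sum_fixed_eq_zero {ℓ : (K → Fin n) → ℂ}
    (hℓ : ∀ p : Matrix (K → Fin n) (K → Fin n) ℂ, p * p = p →
      (∀ A : Mat n, tens (fun _ => A) * p = p * tens (fun _ => A)) → ∑ f, p f f * ℓ f = 0)
    (y : Equiv.Perm K) : ∑ f : K → Fin n, (if f ∘ y = f then ℓ f else 0) = 0 := by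
  obtain ⟨S, Q, h1, h2, h3⟩ := exists_idempotents (permOp_herm (n := n) y)
  have h4 : ∑ f, permOp y f f * ℓ f = 0 := by
    rw [h1]
    simp only [Matrix.sum_apply, Finset.sum_mul, Matrix.smul_apply, smul_eq_mul, mul_assoc]
    rw [Finset.sum_comm]
    refine Finset.sum_eq_zero fun l _ => ?_
    rw [← Finset.mul_sum, hℓ _ (h2 l) fun A => h3 _ (permOp_comm y A) l, mul_zero]
  have h5 : ∀ f : K → Fin n, permOp y f f * ℓ f = 2 * (if f ∘ y = f then ℓ f else 0) := by
    intro f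
    simp only [permOp, Matrix.of_apply, eq_comm (a := f)]
    split_ifs <;> ring
  simp only [h5, ← Finset.mul_sum] at h4
  simpa using h4

/-- A permutation of `∐ᵢ {0, …, aᵢ}` with one cycle over each cycle of `π`. -/
noncomputable def glue (a : Fin n → ℕ) (π : Equiv.Perm (Fin n)) :
    Equiv.Perm ((i : Fin n) × Fin (a i + 1)) :=
  (Equiv.sigmaCongrRight fun i => finRotate (a i + 1)).trans
    (π.viaFintypeEmbedding ⟨fun i => ⟨i, 0⟩, fun i j h => by simpa using congrArg Sigma.fst h⟩)

lemma glue_succ (a : Fin n → ℕ) (π : Equiv.Perm (Fin n)) (i : Fin n) (r : Fin (a i)) :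
    glue a π ⟨i, r.castSucc⟩ = ⟨i, r.succ⟩ := by
  simp only [glue, Equiv.trans_apply, Equiv.sigmaCongrRight_apply]
  have h0 : finRotate (a i + 1) r.castSucc = r.succ := by
    rw [finRotate_apply]; simp
  rw [h0]
  apply Equiv.Perm.viaFintypeEmbedding_apply_notMem_range
  rintro ⟨j, hj⟩
  change (⟨j, 0⟩ : (i : Fin n) × Fin (a i + 1)) = ⟨i, r.succ⟩ at hj
  obtain rfl : j = i := congrArg Sigma.fst hj
  exact (Fin.succ_ne_zero r) (eq_of_heq (Sigma.mk.inj hj).2).symm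

lemma glue_last (a : Fin n → ℕ) (π : Equiv.Perm (Fin n)) (i : Fin n) :
    glue a π ⟨i, Fin.last _⟩ = ⟨π i, 0⟩ := by
  simp only [glue, Equiv.trans_apply, Equiv.sigmaCongrRight_apply]
  have h0 : finRotate (a i + 1) (Fin.last _) = 0 := finRotate_last
  rw [h0]
  exact Equiv.Perm.viaFintypeEmbedding_apply_image π
    ⟨fun i => (⟨i, 0⟩ : (i : Fin n) × Fin (a i + 1)), _⟩ i

lemma comp_glue (a : Fin n → ℕ) (π : Equiv.Perm (Fin n)) (f : (i : Fin n) × Fin (a i + 1) → Fin n) :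
    f ∘ glue a π = f ↔ ∃ h : Fin n → Fin n, h ∘ π = h ∧ f = fun x => h x.1 := by
  constructor
  · intro H
    have h1 : ∀ i r, f ⟨i, r⟩ = f ⟨i, 0⟩ := by
      intro i r
      induction r using Fin.induction with
      | zero => rfl
      | succ r ih => rw [← glue_succ a π, ← ih]; exact congrFun H _
    refine ⟨fun i => f ⟨i, 0⟩, ?_, ?_⟩
    · funext i
      simp only [Function.comp]
      rw [← glue_last a π i, ← h1 i (Fin.last _)]
      exact congrFun H _
    · funext ⟨i, r⟩; exact h1 i r
  · rintro ⟨h, hh, rfl⟩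
    funext ⟨i, r⟩
    simp only [Function.comp]
    induction r using Fin.lastCases with
    | last => rw [glue_last]; exact congrFun hh i
    | cast r => rw [glue_succ]

lemma twt_sigma (a : Fin n → ℕ) (k : ℕ) (h : Fin n → Fin n) (b : Fin n) :
    twt (K := (i : Fin n) × Fin (a i + 1)) k (fun x => h x.1) b =
      (∑ i, if h i = b then ((a i + 1 : ℕ) : ℝ) else 0) - k := by
  simp only [twt]
  congr 1
  rw [Fintype.sum_sigma]
  refine Finset.sum_congr rfl fun i _ => ?_
  split_ifs <;> simp

/-- The signs cancel unless `h` is injective: a coincidence `h i = h j` pairs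
`π` with `swap i j * π`. -/
lemma sum_sign (h : Fin n → Fin n) :
    ∑ π : Equiv.Perm (Fin n), (if h ∘ π = h then ((Equiv.Perm.sign π : ℤ) : ℂ) else 0) =
      if Function.Injective h then 1 else 0 := by
  by_cases hi : Function.Injective h
  · rw [if_pos hi, Finset.sum_eq_single 1]
    · simp
    · intro π _ hπ
      rw [if_neg]
      intro h1
      apply hπ
      ext i
      exact congrArg Fin.val (hi (congrFun h1 i))
    · simp
  · rw [if_neg hi]
    obtain ⟨i, j, hij, hne⟩ := Function.not_injective_iff.1 hi
    have hsw : h ∘ Equiv.swap i j = h := by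
      funext x
      simp only [Function.comp, Equiv.swap_apply_def]
      split_ifs with h1 h2
      · rw [h1, hij]
      · rw [h2, hij]
      · rfl
    refine Finset.sum_involution (fun π _ => Equiv.swap i j * π) ?_ ?_ ?_ ?_
    · intro π _
      have : h ∘ (Equiv.swap i j * π : Equiv.Perm (Fin n)) = h ∘ π := by
        rw [Equiv.Perm.coe_mul, ← Function.comp_assoc, hsw]
      rw [this, Equiv.Perm.sign_mul, Equiv.Perm.sign_swap hne]
      split_ifs <;> simp
    · intro π _ _ h2
      have := mul_eq_right.1 h2
      exact hne (Equiv.swap_eq_one_iff.1 this)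
    · simp
    · intro π _
      rw [← mul_assoc, Equiv.swap_mul_self, one_mul]

/-- A function on weights whose weighted traces on all tensor idempotents vanish has vanishing
sums over the orbits, under permutation of coordinates, of integral vectors. -/
theorem sum_perm_eq_zero {ℓ : Euc n → ℂ}
    (hℓ : ∀ (K : Type) [Fintype K] [DecidableEq K] (k : ℕ)
      (p : Matrix (K → Fin n) (K → Fin n) ℂ), p * p = p →
      (∀ A : Mat n, tens (fun _ => A) * p = p * tens (fun _ => A)) →
        ∑ f, p f f * ℓ (twt k f) = 0)
    (m : Fin n → ℤ) :
    ∑ σ : Equiv.Perm (Fin n), ℓ (pm σ (WithLp.toLp 2 fun a => (m a : ℝ))) = 0 := by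
  classical
  set k : ℕ := ∑ i, (m i).natAbs + 1 with hk
  have hpos : ∀ i, 0 ≤ m i + k - 1 := by
    intro i
    have h1 : (m i).natAbs ≤ ∑ i, (m i).natAbs :=
      Finset.single_le_sum (f := fun i => (m i).natAbs) (fun _ _ => Nat.zero_le _)
        (Finset.mem_univ i)
    omega
  set a : Fin n → ℕ := fun i => (m i + k - 1).toNat with ha
  have ha' : ∀ i, ((a i + 1 : ℕ) : ℝ) = m i + k := by
    intro i
    have : ((a i + 1 : ℕ) : ℤ) = m i + k := by
      simp only [ha]; push_cast; rw [Int.toNat_of_nonneg (hpos i)]; ring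
    exact_mod_cast this
  set w : (Fin n → Fin n) → Euc n := fun h =>
    twt (K := (i : Fin n) × Fin (a i + 1)) k (fun x => h x.1) with hw
  have h1 : ∀ π : Equiv.Perm (Fin n),
      ∑ h : Fin n → Fin n, (if h ∘ π = h then ℓ (w h) else 0) = 0 := by
    intro π
    have h2 := sum_fixed_eq_zero (n := n) (K := (i : Fin n) × Fin (a i + 1))
      (ℓ := fun f => ℓ (twt k f)) (hℓ _ k) (glue a π)
    refine Eq.trans ?_ h2
    rw [← Finset.sum_filter, ← Finset.sum_filter]
    refine Finset.sum_bij (fun h _ => fun x => h x.1) ?_ ?_ ?_ ?_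
    · intro h hh
      simp only [Finset.mem_filter, Finset.mem_univ, true_and] at hh ⊢
      exact (comp_glue a π _).2 ⟨h, hh, rfl⟩
    · intro h _ h' _ e
      funext i
      exact congrFun e ⟨i, 0⟩
    · intro f hf
      simp only [Finset.mem_filter, Finset.mem_univ, true_and] at hf
      obtain ⟨h, hh, rfl⟩ := (comp_glue a π _).1 hf
      exact ⟨h, by simpa using hh, rfl⟩
    · intro h _; rfl
  have h3 : ∑ h : Fin n → Fin n, (if Function.Injective h then ℓ (w h) else 0) = 0 := by
    have : ∀ h : Fin n → Fin n, (if Function.Injective h then ℓ (w h) else 0) =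
        ∑ π : Equiv.Perm (Fin n), ((Equiv.Perm.sign π : ℤ) : ℂ) *
          (if h ∘ π = h then ℓ (w h) else 0) := by
      intro h
      have h4 := congrArg (· * ℓ (w h)) (sum_sign h)
      simp only [Finset.sum_mul, ite_mul, zero_mul, one_mul] at h4
      rw [← h4]
      refine Finset.sum_congr rfl fun π _ => ?_
      split_ifs <;> simp
    rw [Finset.sum_congr rfl fun h _ => this h, Finset.sum_comm]
    refine Finset.sum_eq_zero fun π _ => ?_
    rw [← Finset.mul_sum, h1, mul_zero]
  refine Eq.trans ?_ h3
  rw [← Finset.sum_filter]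
  refine Finset.sum_bij (fun σ _ => (σ : Fin n → Fin n)) ?_ ?_ ?_ ?_
  · intro σ _; simpa using σ.injective
  · intro σ _ τ _ h; exact Equiv.coe_fn_injective h
  · intro h hh
    simp only [Finset.mem_filter, Finset.mem_univ, true_and] at hh
    exact ⟨Equiv.ofBijective h (Finite.injective_iff_bijective.1 hh), Finset.mem_univ _, rfl⟩
  · intro σ _
    congr 1
    ext b
    rw [hw]
    simp only
    rw [twt_sigma, pm_apply]
    simp only [ha']
    rw [Finset.sum_eq_single (σ.symm b)]
    · simp
    · intro i _ hi
      rw [if_neg]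
      rintro rfl
      simp at hi
    · simp

end TensorComb
end DimDatum

/-! ### Tensor representations -/

namespace DimDatum
section TensorRep
set_option linter.unusedSectionVars false
open scoped InnerProductSpace Matrix Matrix.Norms.Operator
open Finset

variable {n : ℕ} {K : Type} [Fintype K] [DecidableEq K]

/-- The matrix `A` acting on the tensor factor `κ`. -/
def slot (κ : K) (A : Mat n) : Matrix (K → Fin n) (K → Fin n) ℂ :=
  tens (Function.update (fun _ => 1) κ A)

lemma slot_apply (κ : K) (A : Mat n) (f f' : K → Fin n) :
    slot κ A f f' = A (f κ) (f' κ) * ∏ l ∈ univ.erase κ, (1 : Mat n) (f l) (f' l) := by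
  simp only [slot, tens, Matrix.of_apply]
  rw [← Finset.mul_prod_erase univ _ (Finset.mem_univ κ)]
  rw [Function.update_self]
  congr 1
  refine Finset.prod_congr rfl fun l hl => ?_
  rw [Function.update_of_ne (Finset.ne_of_mem_erase hl)]

/-- `slot κ` as a linear map. -/
def slotLin (κ : K) : Mat n →ₗ[ℂ] Matrix (K → Fin n) (K → Fin n) ℂ where
  toFun := slot κ
  map_add' A B := by ext f f'; simp only [slot_apply, Matrix.add_apply]; ring
  map_smul' c A := by
    ext f f'; simp only [slot_apply, Matrix.smul_apply, smul_eq_mul, RingHom.id_apply]; ring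

lemma slotLin_apply (κ : K) (A : Mat n) : slotLin κ A = slot κ A := rfl

lemma slot_mul_same (κ : K) (A B : Mat n) : slot κ A * slot κ B = slot κ (A * B) := by
  rw [slot, slot, tens_mul, slot]
  congr 1
  funext l
  by_cases h : l = κ
  · subst h; simp
  · simp [Function.update_of_ne h]

lemma slot_comm {κ l : K} (h : κ ≠ l) (A B : Mat n) : slot κ A * slot l B = slot l B * slot κ A := by
  rw [slot, slot, tens_mul, tens_mul]
  congr 1
  funext j
  by_cases h1 : j = κ
  · subst h1; simp [Function.update_of_ne h]
  · simp [Function.update_of_ne h1]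

lemma slot_star (κ : K) (A : Mat n) : slot κ Aᴴ = (slot κ A)ᴴ := by
  ext f f'
  rw [Matrix.conjTranspose_apply, slot_apply, slot_apply, star_mul', star_prod,
    Matrix.conjTranspose_apply]
  congr 1
  refine Finset.prod_congr rfl fun l _ => ?_
  rw [← Matrix.conjTranspose_apply, Matrix.conjTranspose_one]

lemma slot_diagonal (κ : K) (d : Fin n → ℂ) :
    slot κ (Matrix.diagonal d) = Matrix.diagonal fun f : K → Fin n => d (f κ) := by
  ext f f'
  rw [slot_apply, Matrix.diagonal_apply, Matrix.diagonal_apply]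
  by_cases h : f = f'
  · subst h; simp
  · rw [if_neg h]
    obtain ⟨l, hl⟩ := Function.ne_iff.1 h
    by_cases h1 : l = κ
    · subst h1; simp [hl]
    · have h2 : ∏ l ∈ univ.erase κ, (1 : Mat n) (f l) (f' l) = 0 :=
        Finset.prod_eq_zero (i := l) (Finset.mem_erase.2 ⟨h1, Finset.mem_univ l⟩)
          (by rw [Matrix.one_apply, if_neg hl])
      rw [h2, mul_zero]

/-- The Lie algebra action on the tensor power, twisted by the trace. -/
noncomputable def tRep (n : ℕ) (K : Type) [Fintype K] [DecidableEq K] (k : ℕ) :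
    Rep n (K → Fin n) where
  rho := ∑ κ, slotLin κ - (k : ℂ) • (Matrix.traceLinearMap (Fin n) ℂ ℂ).smulRight 1
  wgt := twt k
  lie A B := by
    have h0 : (⁅A, B⁆ : Mat n).trace = 0 := by
      rw [br_def, Matrix.trace_sub, Matrix.trace_mul_comm, sub_self]
    have h1 : ∀ c d : ℂ, ∀ P Q : Matrix (K → Fin n) (K → Fin n) ℂ,
        (P - c • 1) * (Q - d • 1) - (Q - d • 1) * (P - c • 1) = P * Q - Q * P := by
      intro c d P Q
      simp only [Matrix.sub_mul, Matrix.mul_sub, Matrix.smul_mul, Matrix.mul_smul,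
        Matrix.mul_one, Matrix.one_mul, smul_sub, smul_smul, mul_comm d c]
      abel
    simp only [LinearMap.sub_apply, LinearMap.smul_apply, LinearMap.smulRight_apply,
      Matrix.traceLinearMap_apply, h0, zero_smul, smul_zero, sub_zero, ← smul_assoc]
    rw [h1]
    simp only [LinearMap.sum_apply, slotLin_apply]
    rw [Finset.sum_mul_sum, Finset.sum_mul_sum, Finset.sum_comm (f := fun i j => slot i B * slot j A),
      ← Finset.sum_sub_distrib]
    refine Finset.sum_congr rfl fun κ _ => ?_
    rw [← Finset.sum_sub_distrib, Finset.sum_eq_single κ]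
    · rw [slot_mul_same, slot_mul_same, br_def, ← slotLin_apply, map_sub]; rfl
    · intro l _ hl
      rw [slot_comm hl.symm, sub_self]
    · intro h; exact absurd (Finset.mem_univ _) h
  star A := by
    simp only [LinearMap.sub_apply, LinearMap.smul_apply, LinearMap.smulRight_apply,
      Matrix.traceLinearMap_apply, LinearMap.sum_apply, slotLin_apply]
    rw [Matrix.conjTranspose_sub, Matrix.conjTranspose_sum]
    congr 1
    · exact Finset.sum_congr rfl fun κ _ => slot_star κ A
    · rw [Matrix.conjTranspose_smul, Matrix.conjTranspose_smul, Matrix.conjTranspose_one,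
        Matrix.trace_conjTranspose, star_natCast]
  diag x := by
    simp only [LinearMap.sub_apply, LinearMap.smul_apply, LinearMap.smulRight_apply,
      Matrix.traceLinearMap_apply, LinearMap.sum_apply, slotLin_apply]
    ext f f'
    simp only [dg, slot_diagonal, Matrix.sub_apply, Matrix.sum_apply, Matrix.smul_apply,
      Matrix.one_apply, Matrix.diagonal_apply, Matrix.trace_diagonal, smul_eq_mul]
    split_ifs with h
    · have : (⟪twt k f, x⟫_ℝ : ℝ) = ∑ κ, x (f κ) - k * ∑ a, x a := by
        rw [PiLp.inner_apply]
        simp only [twt, RCLike.inner_apply, conj_trivial, mul_sub, Finset.sum_sub_distrib,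
          Finset.mul_sum, mul_ite, mul_one, mul_zero]
        rw [Finset.sum_comm]
        congr 1
        · refine Finset.sum_congr rfl fun κ _ => ?_
          rw [Finset.sum_ite_eq]; simp
        · exact Finset.sum_congr rfl fun a _ => mul_comm _ _
      rw [this]
      push_cast
      ring
    · simp

/-- The action of the unitary group on the tensor power, twisted by the determinant. -/
noncomputable def tAct (n : ℕ) (K : Type) [Fintype K] [DecidableEq K] (k : ℕ) :
    Matrix.unitaryGroup (Fin n) ℂ →* Matrix (K → Fin n) (K → Fin n) ℂ where
  toFun h := (star h.1.det) ^ k • tens (fun _ : K => h.1)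
  map_one' := by simp [tens_one]
  map_mul' g h := by
    rw [Matrix.smul_mul, Matrix.mul_smul, tens_mul, smul_smul]
    congr 1
    rw [← mul_pow]
    congr 1
    change star (g.1 * h.1).det = _
    rw [Matrix.det_mul, star_mul']

lemma tAct_apply (k : ℕ) (h : Matrix.unitaryGroup (Fin n) ℂ) (f f' : K → Fin n) :
    tAct n K k h f f' = (star h.1.det) ^ k * ∏ κ, h.1 (f κ) (f' κ) := rfl

lemma continuous_tAct (k : ℕ) : Continuous (tAct n K k) := by
  have h0 : Continuous fun h : Matrix.unitaryGroup (Fin n) ℂ => h.1 := continuous_subtype_val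
  refine continuous_matrix fun f f' => ?_
  simp only [tAct_apply]
  refine Continuous.mul ?_ ?_
  · exact (continuous_star.comp h0.matrix_det).pow k
  · exact continuous_finsetProd _ fun κ _ => h0.matrix_elem _ _

/-- Vectors fixed by a differentiable one-parameter group are those killed by its generator. -/
lemma one_param {ι : Type*} [Fintype ι] [DecidableEq ι] {F : ℝ → Matrix ι ι ℂ} {D : Matrix ι ι ℂ}
    (h0 : F 0 = 1) (hadd : ∀ s r, F (s + r) = F s * F r)
    (hD : ∀ i j, HasDerivAt (fun s => F s i j) (D i j) 0) (v : ι → ℂ) :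
    (∀ s, F s *ᵥ v = v) ↔ D *ᵥ v = 0 := by
  have hd : ∀ i, HasDerivAt (fun s => (F s *ᵥ v) i) ((D *ᵥ v) i) 0 := by
    intro i
    simp only [Matrix.mulVec, dotProduct]
    exact HasDerivAt.fun_sum fun j _ => (hD i j).mul_const _
  constructor
  · intro h
    funext i
    have h1 := hd i
    simp only [h] at h1
    exact h1.unique (hasDerivAt_const _ _)
  · intro h
    have h1 : ∀ i s, HasDerivAt (fun s => (F s *ᵥ v) i) 0 s := by
      intro i s
      have h2 : HasDerivAt (fun r => ∑ j, F s i j * (F r *ᵥ v) j) 0 0 := by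
        have := HasDerivAt.fun_sum (u := univ) fun j _ => (hd j).const_mul (F s i j)
        refine this.congr_deriv ?_
        simp [h]
      have h3 : HasDerivAt (fun r => ∑ j, F s i j * (F r *ᵥ v) j) 0 (s - s) := by
        rw [sub_self]; exact h2
      have h4 := h3.comp_sub_const s s
      refine h4.congr_of_eventuallyEq (Filter.Eventually.of_forall fun r => ?_)
      simp only
      have : F r = F s * F (r - s) := by rw [← hadd]; congr 1; ring
      rw [this, ← Matrix.mulVec_mulVec]
      rfl
    intro s
    funext i
    have := is_const_of_deriv_eq_zero (fun s => (h1 i s).differentiableAt)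
      (fun s => (h1 i s).deriv) s 0
    rw [this, h0, Matrix.one_mulVec]

lemma exp_entry_deriv (X : Mat n) (a b : Fin n) :
    HasDerivAt (fun s : ℝ => NormedSpace.exp (s • X) a b) (X a b) 0 := by
  have h1 := hasDerivAt_exp_smul_const (𝕂 := ℝ) X 0
  rw [zero_smul, NormedSpace.exp_zero, one_mul] at h1
  exact ((LinearMap.toContinuousLinearMap (Matrix.entryLinearMap ℝ ℂ a b)).hasFDerivAt).comp_hasDerivAt
    0 h1

lemma det_exp_skew {X : Mat n} (hX : Xᴴ = -X) : (NormedSpace.exp X).det = Complex.exp X.trace := by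
  have hC : (Complex.I • X).IsHermitian := by
    rw [Matrix.IsHermitian, Matrix.conjTranspose_smul, hX]
    simp
  obtain ⟨U, d, u1, hspec, -⟩ := exists_diagonalization hC
  have hXe : X = U * Matrix.diagonal (fun i => -Complex.I * d i) * Uᴴ := by
    calc X = (-Complex.I) • (Complex.I • X) := by rw [smul_smul]; simp
      _ = _ := by
        rw [hspec, ← Matrix.smul_mul, ← Matrix.mul_smul, ← Matrix.diagonal_smul]
        rfl
  have hdet : U.det * (Uᴴ).det = 1 := by
    rw [mul_comm, ← Matrix.det_mul, u1, Matrix.det_one]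
  rw [hXe, conj_exp u1, Matrix.det_mul, Matrix.det_mul, mul_right_comm, hdet, one_mul,
    Matrix.exp_diagonal, Matrix.det_diagonal, Matrix.mul_assoc, Matrix.trace_mul_comm,
    Matrix.mul_assoc, u1, Matrix.mul_one, Matrix.trace_diagonal, Complex.exp_sum]
  refine Finset.prod_congr rfl fun i _ => ?_
  rw [Pi.coe_exp, Complex.exp_eq_exp_ℂ]

lemma skew_smul {X : Mat n} (hX : Xᴴ = -X) (s : ℝ) : (s • X)ᴴ = -(s • X) := by
  rw [Matrix.conjTranspose_smul, hX]; simp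

/-- The exponential of a skew-Hermitian matrix, as a unitary matrix. -/
noncomputable def uexp (X : Mat n) (hX : Xᴴ = -X) : Matrix.unitaryGroup (Fin n) ℂ :=
  ⟨NormedSpace.exp X, by
    rw [Matrix.mem_unitaryGroup_iff', Matrix.star_eq_conjTranspose, ← Matrix.exp_conjTranspose, hX,
      ← Matrix.exp_add_of_commute (-X) X (Commute.neg_left (Commute.refl X)), neg_add_cancel,
      NormedSpace.exp_zero]⟩

lemma uexp_val (X : Mat n) (hX : Xᴴ = -X) : (uexp X hX).1 = NormedSpace.exp X := rfl

lemma tAct_fixed (k : ℕ) {X : Mat n} (hX : Xᴴ = -X) (v : (K → Fin n) → ℂ) :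
    (∀ s : ℝ, tAct n K k (uexp (s • X) (skew_smul hX s)) *ᵥ v = v) ↔
      (tRep n K k).rho X *ᵥ v = 0 := by
  refine one_param (F := fun s : ℝ => tAct n K k (uexp (s • X) (skew_smul hX s))) ?_ ?_ ?_ v
  · have : uexp ((0 : ℝ) • X) (skew_smul hX 0) = 1 := by
      apply Subtype.ext
      rw [uexp_val, zero_smul, NormedSpace.exp_zero]; rfl
    simp only [this, map_one]
  · intro s r
    simp only [← map_mul]
    congr 1
    apply Subtype.ext
    change NormedSpace.exp ((s + r) • X) = NormedSpace.exp (s • X) * NormedSpace.exp (r • X)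
    rw [← Matrix.exp_add_of_commute, add_smul]
    exact ((Commute.refl X).smul_left s).smul_right r
  · intro f f'
    have hdet : ∀ s : ℝ, star (NormedSpace.exp (s • X)).det = Complex.exp (s * (-X.trace)) := by
      intro s
      rw [det_exp_skew (skew_smul hX s), Complex.star_def, ← Complex.exp_conj, ← Complex.star_def,
        ← Matrix.trace_conjTranspose, skew_smul hX, Matrix.trace_neg, Matrix.trace_smul]
      congr 1
      rw [Complex.real_smul]; ring
    have e1 : (fun s : ℝ => tAct n K k (uexp (s • X) (skew_smul hX s)) f f') = fun s : ℝ =>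
        Complex.exp (s * (-X.trace)) ^ k *
          ∏ κ, NormedSpace.exp (s • X) (f κ) (f' κ) := by
      funext s
      rw [tAct_apply, uexp_val, hdet]
    rw [e1]
    have d1 : HasDerivAt (fun s : ℝ => Complex.exp (s * (-X.trace)) ^ k)
        (-(k * X.trace)) 0 := by
      have h1 : HasDerivAt (fun s : ℝ => Complex.exp (k * (s * (-X.trace))))
          (Complex.exp (k * (((0 : ℝ) : ℂ) * (-X.trace))) * (k * (1 * (-X.trace)))) 0 :=
        (((Complex.ofRealCLM.hasDerivAt (x := (0 : ℝ))).mul_const _).const_mul _).cexp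
      have h2 : (fun s : ℝ => Complex.exp (s * (-X.trace)) ^ k) =
          fun s : ℝ => Complex.exp (k * (s * (-X.trace))) := by
        funext s; rw [← Complex.exp_nat_mul]
      rw [h2]
      refine h1.congr_deriv ?_
      simp
    have d2 := HasDerivAt.fun_finsetProd (u := univ)
      fun κ (_ : κ ∈ univ) => exp_entry_deriv X (f κ) (f' κ)
    refine (d1.mul d2).congr_deriv ?_
    have i0 : NormedSpace.exp ((0 : ℝ) • X) = 1 := by rw [zero_smul, NormedSpace.exp_zero]
    have i1 : (∏ κ, (1 : Mat n) (f κ) (f' κ)) = (1 : Matrix (K → Fin n) (K → Fin n) ℂ) f f' :=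
      congrFun (congrFun tens_one f) f'
    simp only [i0, i1, tRep, LinearMap.sub_apply, LinearMap.smul_apply,
      LinearMap.smulRight_apply, Matrix.traceLinearMap_apply, LinearMap.sum_apply, slotLin_apply,
      Matrix.sub_apply, Matrix.sum_apply, Matrix.smul_apply, smul_eq_mul, slot_apply]
    simp only [Complex.ofReal_zero, zero_mul, Complex.exp_zero, one_pow, one_mul]
    rw [neg_mul, add_comm, ← sub_eq_add_neg, mul_assoc]
    congr 1
    exact Finset.sum_congr rfl fun κ _ => mul_comm _ _

end TensorRep
end DimDatum

/-! ### Relations between dimension data -/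

namespace DimDatum
section Invariants
open scoped InnerProductSpace Matrix Matrix.Norms.Operator
open Finset

variable {n : ℕ} {K : Type} [Fintype K] [DecidableEq K]
variable {ι : Type*} [Fintype ι] [DecidableEq ι]

/-- `H` is the group generated by the exponentials of the skew-Hermitian elements of the
Lie algebra `g`. -/
def Gen (H : Subgroup (Matrix.unitaryGroup (Fin n) ℂ)) (g : Submodule ℂ (Mat n)) : Prop :=
  H = Subgroup.closure {u | ∃ X ∈ g, Xᴴ = -X ∧ u.1 = NormedSpace.exp X}

lemma exists_skew {g : Submodule ℂ (Mat n)} (hg : ∀ A ∈ g, Aᴴ ∈ g) {A : Mat n} (hA : A ∈ g) :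
    ∃ X ∈ g, ∃ Y ∈ g, Xᴴ = -X ∧ Yᴴ = -Y ∧ A = X + Complex.I • Y := by
  refine ⟨(1 / 2 : ℂ) • (A - Aᴴ), g.smul_mem _ (g.sub_mem hA (hg A hA)),
    (-Complex.I / 2) • (A + Aᴴ), g.smul_mem _ (g.add_mem hA (hg A hA)), ?_, ?_, ?_⟩
  · rw [Matrix.conjTranspose_smul, Matrix.conjTranspose_sub, Matrix.conjTranspose_conjTranspose,
      ← smul_neg, neg_sub]
    congr 1
    simp
  · rw [Matrix.conjTranspose_smul, Matrix.conjTranspose_add, Matrix.conjTranspose_conjTranspose,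
      ← neg_smul, add_comm]
    congr 1
    simp [neg_div]
  · rw [smul_smul]
    have : Complex.I * (-Complex.I / 2) = 1 / 2 := by
      rw [← mul_div_assoc, mul_neg, Complex.I_mul_I, neg_neg]
    rw [this, ← smul_add]
    have : A - Aᴴ + (A + Aᴴ) = (2 : ℂ) • A := by rw [two_smul]; abel
    rw [this, smul_smul]
    norm_num

lemma fixed_iff {H : Subgroup (Matrix.unitaryGroup (Fin n) ℂ)} {g : Submodule ℂ (Mat n)}
    (hg : Pre g) (hG : Gen H g) (k : ℕ) (v : (K → Fin n) → ℂ) :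
    (∀ h ∈ H, tAct n K k h *ᵥ v = v) ↔ ∀ A ∈ g, (tRep n K k).rho A *ᵥ v = 0 := by
  constructor
  · intro h A hA
    obtain ⟨X, hX, Y, hY, sX, sY, rfl⟩ := exists_skew hg.star hA
    have key : ∀ Z ∈ g, Zᴴ = -Z → (tRep n K k).rho Z *ᵥ v = 0 := by
      intro Z hZ sZ
      refine (tAct_fixed k sZ v).1 fun s => h _ ?_
      rw [hG]
      refine Subgroup.subset_closure ⟨s • Z, ?_, skew_smul sZ s, rfl⟩
      rw [← Complex.coe_smul]
      exact g.smul_mem _ hZ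
    rw [map_add, map_smul, Matrix.add_mulVec, Matrix.smul_mulVec, key X hX sX, key Y hY sY]
    simp
  · intro h u hu
    rw [hG] at hu
    induction hu using Subgroup.closure_induction with
    | mem u hu =>
      obtain ⟨X, hX, sX, hu⟩ := hu
      have := (tAct_fixed k sX v).2 (h X hX) 1
      convert this
      apply Subtype.ext
      rw [hu, uexp_val, one_smul]
    | one => rw [map_one, Matrix.one_mulVec]
    | mul a b _ _ ha hb => rw [map_mul, ← Matrix.mulVec_mulVec, hb, ha]
    | inv a _ ha =>
      nth_rewrite 1 [← ha]
      rw [Matrix.mulVec_mulVec, ← map_mul, inv_mul_cancel, map_one, Matrix.one_mulVec]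

/-- The vectors fixed by `H` under a matrix representation `F`. -/
def fixedSub (H : Subgroup (Matrix.unitaryGroup (Fin n) ℂ))
    (F : Matrix.unitaryGroup (Fin n) ℂ →* Matrix ι ι ℂ) : Submodule ℂ (ι → ℂ) where
  carrier := {v | ∀ h ∈ H, F h *ᵥ v = v}
  add_mem' ha hb h hh := by rw [Matrix.mulVec_add, ha h hh, hb h hh]
  zero_mem' h _ := by rw [Matrix.mulVec_zero]
  smul_mem' c v hv h hh := by rw [Matrix.mulVec_smul, hv h hh]

lemma mem_fixedSub {H : Subgroup (Matrix.unitaryGroup (Fin n) ℂ)}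
    {F : Matrix.unitaryGroup (Fin n) ℂ →* Matrix ι ι ℂ} {v : ι → ℂ} :
    v ∈ fixedSub H F ↔ ∀ h ∈ H, F h *ᵥ v = v := Iff.rfl

/-- The linear relation between the dimension data of the `H i` with coefficients `c i`. -/
def Rel {s : ℕ} (H : Fin s → Subgroup (Matrix.unitaryGroup (Fin n) ℂ)) (c : Fin s → ℝ) : Prop :=
  ∀ (m : ℕ) (ρ : Matrix.unitaryGroup (Fin n) ℂ →* Matrix.GeneralLinearGroup (Fin m) ℂ),
      Continuous ρ → ∑ i, c i * (Module.finrank ℂ (invariantSubspace (H i) ρ) : ℝ) = 0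

variable {s : ℕ} {H : Fin s → Subgroup (Matrix.unitaryGroup (Fin n) ℂ)} {c : Fin s → ℝ}

lemma Rel.fixedSub (hc : Rel H c) {F : Matrix.unitaryGroup (Fin n) ℂ →* Matrix ι ι ℂ}
    (hF : Continuous F) : ∑ i, c i * (Module.finrank ℂ (fixedSub (H i) F) : ℝ) = 0 := by
  let e := Fintype.equivFin ι
  let F' : Matrix.unitaryGroup (Fin n) ℂ →*
      Matrix (Fin (Fintype.card ι)) (Fin (Fintype.card ι)) ℂ :=
    (Matrix.reindexAlgEquiv ℂ ℂ e : _ →* _).comp F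
  have hF' : ∀ u, F' u = (F u).submatrix e.symm e.symm := fun u => rfl
  have hcF : Continuous F' := by
    have : (F' : _ → _) = fun u => (F u).submatrix e.symm e.symm := funext hF'
    rw [this]
    exact hF.matrix_submatrix _ _
  have hcont : Continuous F'.toHomUnits := by
    rw [Units.continuous_iff]
    refine ⟨hcF, ?_⟩
    have : (fun u => ((F'.toHomUnits u)⁻¹ : Matrix.GeneralLinearGroup _ ℂ).1) =
        fun u => F' u⁻¹ := by
      funext u
      rw [← map_inv]; rfl
    exact this ▸ hcF.comp continuous_inv
  rw [← hc _ _ hcont]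
  refine Finset.sum_congr rfl fun i _ => ?_
  congr 2
  have : invariantSubspace (H i) F'.toHomUnits =
      (DimDatum.fixedSub (H i) F).map (LinearEquiv.funCongrLeft ℂ ℂ e.symm).toLinearMap := by
    ext v
    have hv : v = (fun a => v (e a)) ∘ e.symm := by funext a; simp
    rw [Submodule.mem_map_equiv]
    change (∀ h ∈ H i, F' h *ᵥ v = v) ↔ ∀ h ∈ H i, F h *ᵥ (v ∘ e) = v ∘ e
    refine forall₂_congr fun h _ => ?_
    rw [hF', Matrix.submatrix_mulVec_equiv]
    simp only [Equiv.symm_symm]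
    constructor
    · intro h1
      funext a
      have := congrFun h1 (e a)
      simpa using this
    · intro h1
      funext a
      have := congrFun h1 (e.symm a)
      simpa using this
  rw [this, LinearEquiv.finrank_map_eq]

lemma slot_comm_of_tens {p : Matrix (K → Fin n) (K → Fin n) ℂ}
    (hp : ∀ A : Mat n, tens (fun _ => A) * p = p * tens (fun _ => A)) (A : Mat n) :
    (∑ κ : K, slot κ A) * p = p * ∑ κ : K, slot κ A := by
  have hd : ∀ f f', HasDerivAt (fun s : ℝ => tens (fun _ : K => NormedSpace.exp (s • A)) f f')
      ((∑ κ : K, slot κ A) f f') 0 := by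
    intro f f'
    have d2 := HasDerivAt.fun_finsetProd (u := univ)
      fun κ (_ : κ ∈ univ) => exp_entry_deriv A (f κ) (f' κ)
    refine d2.congr_deriv ?_
    have i0 : NormedSpace.exp ((0 : ℝ) • A) = 1 := by rw [zero_smul, NormedSpace.exp_zero]
    simp only [i0, Matrix.sum_apply, slot_apply, smul_eq_mul]
    exact Finset.sum_congr rfl fun κ _ => mul_comm _ _
  ext f f'
  have h1 : HasDerivAt (fun s : ℝ => (tens (fun _ : K => NormedSpace.exp (s • A)) * p) f f')
      (((∑ κ : K, slot κ A) * p) f f') 0 := by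
    simp only [Matrix.mul_apply]
    exact HasDerivAt.fun_sum fun j _ => (hd f j).mul_const _
  have h2 : HasDerivAt (fun s : ℝ => (p * tens (fun _ : K => NormedSpace.exp (s • A))) f f')
      ((p * (∑ κ : K, slot κ A)) f f') 0 := by
    simp only [Matrix.mul_apply]
    exact HasDerivAt.fun_sum fun j _ => (hd j f').const_mul _
  simp only [hp] at h1
  exact h1.unique h2

lemma rho_comm_of_tens {p : Matrix (K → Fin n) (K → Fin n) ℂ}
    (hp : ∀ A : Mat n, tens (fun _ => A) * p = p * tens (fun _ => A)) (k : ℕ) (A : Mat n) :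
    (tRep n K k).rho A * p = p * (tRep n K k).rho A := by
  simp only [tRep, LinearMap.sub_apply, LinearMap.smul_apply, LinearMap.smulRight_apply,
    LinearMap.sum_apply, slotLin_apply]
  rw [Matrix.sub_mul, Matrix.mul_sub, slot_comm_of_tens hp]
  simp only [Matrix.smul_mul, Matrix.mul_smul, Matrix.one_mul, Matrix.mul_one]

lemma Rel.sum_eq_zero (hc : Rel H c) : ∑ i, c i = 0 := by
  have := hc.fixedSub (ι := Unit) (F := 1) continuous_const
  rw [← this]
  refine Finset.sum_congr rfl fun i _ => ?_
  have : DimDatum.fixedSub (H i) (1 : _ →* Matrix Unit Unit ℂ) = ⊤ := by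
    rw [eq_top_iff]
    intro v _ h _
    simp
  rw [this, finrank_top]
  simp

/-- The relation restricted to the image of an equivariant idempotent of a tensor
representation. -/
lemma Rel.sum_inv (hc : Rel H c) {g : Fin s → Submodule ℂ (Mat n)} (hg : ∀ i, Pre (g i))
    (hG : ∀ i, Gen (H i) (g i)) (k : ℕ) {p : Matrix (K → Fin n) (K → Fin n) ℂ} (hpp : p * p = p)
    (hp : ∀ A : Mat n, tens (fun _ => A) * p = p * tens (fun _ => A)) :
    ∑ i, c i * (Module.finrank ℂ ((tRep n K k).inv (g i) p) : ℝ) = 0 := by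
  have hT : ∀ u, tAct n K k u * p = p * tAct n K k u := by
    intro u
    change (star u.1.det ^ k • tens (fun _ : K => u.1)) * p =
      p * (star u.1.det ^ k • tens (fun _ : K => u.1))
    rw [Matrix.smul_mul, Matrix.mul_smul, hp]
  let F : Matrix.unitaryGroup (Fin n) ℂ →* Matrix (K → Fin n) (K → Fin n) ℂ :=
    { toFun := fun u => tAct n K k u * p + (1 - p)
      map_one' := by rw [map_one, Matrix.one_mul]; abel
      map_mul' := by
        intro u v
        rw [map_mul]
        have h1 : p * (1 - p) = 0 := by rw [Matrix.mul_sub, Matrix.mul_one, hpp, sub_self]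
        have h2 : (1 - p) * p = 0 := by rw [Matrix.sub_mul, Matrix.one_mul, hpp, sub_self]
        have h3 : (1 - p) * (1 - p) = 1 - p := by
          rw [Matrix.mul_sub, Matrix.mul_one, h2, sub_zero]
        have e1 : tAct n K k u * p * (tAct n K k v * p) = tAct n K k u * tAct n K k v * p := by
          calc _ = tAct n K k u * (p * tAct n K k v) * p := by simp only [Matrix.mul_assoc]
            _ = tAct n K k u * tAct n K k v * (p * p) := by
              rw [← hT]; simp only [Matrix.mul_assoc]
            _ = _ := by rw [hpp]
        rw [Matrix.add_mul, Matrix.mul_add, Matrix.mul_add, e1, h3, Matrix.mul_assoc _ p (1 - p), h1,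
          hT v, ← Matrix.mul_assoc (1 - p) p, h2]
        simp }
  have hFa : ∀ u v, F u *ᵥ v = v ↔ tAct n K k u *ᵥ (p *ᵥ v) = p *ᵥ v := by
    intro u v
    change (tAct n K k u * p + (1 - p)) *ᵥ v = v ↔ _
    rw [Matrix.add_mulVec, Matrix.sub_mulVec, Matrix.one_mulVec, ← Matrix.mulVec_mulVec,
      add_sub_left_comm, add_eq_left, sub_eq_zero]
  have hFc : Continuous F := by
    change Continuous fun u => tAct n K k u * p + (1 - p)
    exact ((continuous_tAct k).matrix_mul continuous_const).add continuous_const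
  have h0 := hc.fixedSub hFc
  have hdim : ∀ i, Module.finrank ℂ (DimDatum.fixedSub (H i) F) =
      Module.finrank ℂ ((tRep n K k).inv (g i) p) + Module.finrank ℂ p.mulVecLin.ker := by
    intro i
    have hppv : ∀ v, p *ᵥ (p *ᵥ v) = p *ᵥ v := fun v => by rw [Matrix.mulVec_mulVec, hpp]
    have e1 : DimDatum.fixedSub (H i) F = (tRep n K k).inv (g i) p ⊔ p.mulVecLin.ker := by
      ext v
      rw [mem_fixedSub]
      simp only [hFa]
      rw [fixed_iff (hg i) (hG i), Submodule.mem_sup]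
      constructor
      · intro h
        refine ⟨p *ᵥ v, ⟨h, hppv v⟩, v - p *ᵥ v, ?_, by abel⟩
        rw [LinearMap.mem_ker, Matrix.mulVecLin_apply, Matrix.mulVec_sub, hppv, sub_self]
      · rintro ⟨y, hy, z, hz, rfl⟩
        rw [LinearMap.mem_ker, Matrix.mulVecLin_apply] at hz
        rw [Matrix.mulVec_add, hz, add_zero, hy.2]
        exact hy.1
    have e2 : (tRep n K k).inv (g i) p ⊓ p.mulVecLin.ker = ⊥ := by
      rw [eq_bot_iff]
      rintro v ⟨hv, hz⟩
      rw [SetLike.mem_coe, LinearMap.mem_ker, Matrix.mulVecLin_apply] at hz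
      rw [Submodule.mem_bot, ← hv.2, hz]
    have := Submodule.finrank_sup_add_finrank_inf_eq ((tRep n K k).inv (g i) p) p.mulVecLin.ker
    rw [e2, finrank_bot, add_zero] at this
    rw [e1, this]
  simp only [hdim, Nat.cast_add, mul_add, Finset.sum_add_distrib, ← Finset.sum_mul,
    hc.sum_eq_zero, zero_mul, add_zero] at h0
  exact h0

/-- The relation between dimension data expressed through Weyl denominators, averaged over
permutations of the coordinates. -/
theorem Rel.sum_perm (hc : Rel H c) {g : Fin s → Submodule ℂ (Mat n)}
    {t : Fin s → Submodule ℝ (Euc n)} (hs : ∀ i, Std (g i) (t i))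
    (hG : ∀ i, Gen (H i) (g i)) (m : Fin n → ℤ) :
    ∑ σ : Equiv.Perm (Fin n), ∑ i, c i / (dcoef (roots (g i) (t i)) 0 : ℝ) *
      (dcoef (roots (g i) (t i))
        (-(t i).starProjection (pm σ (WithLp.toLp 2 fun a => (m a : ℝ)))) : ℝ) = 0 := by
  have hpos : ∀ i, (dcoef (roots (g i) (t i)) 0 : ℂ) ≠ 0 := fun i => by
    exact_mod_cast (dcoef_zero_pos (isRootSys_roots (hs i))).ne'
  have := sum_perm_eq_zero (n := n) (ℓ := fun μ => ∑ i, (c i : ℂ) /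
    (dcoef (roots (g i) (t i)) 0 : ℂ) *
      (dcoef (roots (g i) (t i)) (-(t i).starProjection μ) : ℂ)) ?_ m
  · exact_mod_cast this
  · intro K _ _ k p hpp hp
    have h1 : ∀ i, ∑ f, p f f * ((c i : ℂ) / (dcoef (roots (g i) (t i)) 0 : ℂ) *
        (dcoef (roots (g i) (t i)) (-(t i).starProjection (twt k f)) : ℂ)) =
        (c i : ℂ) * (Module.finrank ℂ ((tRep n K k).inv (g i) p) : ℂ) := by
      intro i
      have := (tRep n K k).trace_formula (hs i) hpp fun A _ => rho_comm_of_tens hp k A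
      calc _ = (c i : ℂ) / (dcoef (roots (g i) (t i)) 0 : ℂ) *
          ∑ f, p f f * (dcoef (roots (g i) (t i)) (-(tRep n K k).rwt (t i) f) : ℂ) := by
            rw [Finset.mul_sum]
            refine Finset.sum_congr rfl fun f _ => ?_
            rw [mul_left_comm]; rfl
        _ = _ := by
            rw [this, ← mul_assoc, div_mul_cancel₀ _ (hpos i)]
    simp only [Finset.mul_sum]
    rw [Finset.sum_comm]
    simp only [h1]
    exact_mod_cast hc.sum_inv (fun i => (hs i).toPre) hG k hpp hp

end Invariants
end DimDatum

/-! ### Closed subgroups and one-parameter groups -/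

namespace DimDatum
section ClosedSubgroup
open scoped InnerProductSpace Matrix Matrix.Norms.Operator
open Finset Filter Topology

variable {n : ℕ} {H : Subgroup (Matrix.unitaryGroup (Fin n) ℂ)}

/-- The matrices belonging to the subgroup `H`. -/
def mats (H : Subgroup (Matrix.unitaryGroup (Fin n) ℂ)) : Set (Mat n) := {A | ∃ u ∈ H, u.1 = A}

lemma mats_one : (1 : Mat n) ∈ mats H := ⟨1, H.one_mem, rfl⟩

lemma mats_mul {A B : Mat n} (hA : A ∈ mats H) (hB : B ∈ mats H) : A * B ∈ mats H := by
  obtain ⟨u, hu, rfl⟩ := hA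
  obtain ⟨v, hv, rfl⟩ := hB
  exact ⟨u * v, H.mul_mem hu hv, rfl⟩

lemma mats_star {A : Mat n} (hA : A ∈ mats H) : Aᴴ ∈ mats H := by
  obtain ⟨u, hu, rfl⟩ := hA
  exact ⟨u⁻¹, H.inv_mem hu, rfl⟩

lemma mats_unitary {A : Mat n} (hA : A ∈ mats H) : Aᴴ * A = 1 := by
  obtain ⟨u, hu, rfl⟩ := hA
  have := Matrix.mem_unitaryGroup_iff'.1 u.2
  rwa [Matrix.star_eq_conjTranspose] at this

lemma isClosed_mats (hH : IsClosed (H : Set (Matrix.unitaryGroup (Fin n) ℂ))) :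
    IsClosed (mats H) := by
  have h1 : IsClosed ((Matrix.unitaryGroup (Fin n) ℂ : Submonoid (Mat n)) : Set (Mat n)) :=
    isClosed_unitary
  have h2 := h1.isClosedEmbedding_subtypeVal.isClosedMap _ hH
  have h3 : mats H = Subtype.val '' (H : Set (Matrix.unitaryGroup (Fin n) ℂ)) := rfl
  rw [h3]
  exact h2

lemma exp_smul_add (X : Mat n) (s r : ℝ) :
    NormedSpace.exp ((s + r) • X) = NormedSpace.exp (s • X) * NormedSpace.exp (r • X) := by
  rw [← Matrix.exp_add_of_commute, add_smul]
  exact ((Commute.refl X).smul_left s).smul_right r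

lemma exp_mul_exp_neg (X : Mat n) : NormedSpace.exp X * NormedSpace.exp (-X) = 1 := by
  rw [← Matrix.exp_add_of_commute _ _ (Commute.neg_right (Commute.refl X)), add_neg_cancel,
    NormedSpace.exp_zero]

lemma mats_exp_neg {X : Mat n} (hX : NormedSpace.exp X ∈ mats H) :
    NormedSpace.exp (-X) ∈ mats H := by
  have h1 := mats_unitary hX
  have : NormedSpace.exp (-X) = (NormedSpace.exp X)ᴴ := by
    calc _ = (NormedSpace.exp X)ᴴ * NormedSpace.exp X * NormedSpace.exp (-X) := by
          rw [h1, Matrix.one_mul]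
      _ = _ := by rw [Matrix.mul_assoc, exp_mul_exp_neg, Matrix.mul_one]
  rw [this]
  exact mats_star hX

lemma mats_exp_int {X : Mat n} (hX : NormedSpace.exp X ∈ mats H) (z : ℤ) :
    NormedSpace.exp ((z : ℝ) • X) ∈ mats H := by
  have hnat : ∀ {Y : Mat n}, NormedSpace.exp Y ∈ mats H → ∀ k : ℕ,
      NormedSpace.exp ((k : ℝ) • Y) ∈ mats H := by
    intro Y hY k
    induction k with
    | zero =>
      rw [Nat.cast_zero, zero_smul, NormedSpace.exp_zero]
      exact mats_one
    | succ k ih =>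
      rw [Nat.cast_succ, exp_smul_add, one_smul]
      exact mats_mul ih hY
  obtain ⟨k, rfl | rfl⟩ := z.eq_nat_or_neg
  · exact_mod_cast hnat hX k
  · have := hnat (mats_exp_neg hX) k
    rw [smul_neg, ← neg_smul] at this
    exact_mod_cast this

/-- The set of `X` whose one-parameter group lies in `H`. -/
def lieSet (H : Subgroup (Matrix.unitaryGroup (Fin n) ℂ)) : Set (Mat n) :=
  {X | ∀ s : ℝ, NormedSpace.exp (s • X) ∈ mats H}

/-- A limit of rescaled small logarithms of elements of a closed `H` generates a one-parameter
group in `H`: integer parts of the scaling factors give powers of the group elements. -/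
lemma mem_lieSet_of_tendsto (hH : IsClosed (H : Set (Matrix.unitaryGroup (Fin n) ℂ)))
    {Z : ℕ → Mat n} {r : ℕ → ℝ} {X : Mat n} (h0 : Tendsto Z atTop (𝓝 0))
    (hZ : ∀ᶠ k in atTop, NormedSpace.exp (Z k) ∈ mats H)
    (hr : Tendsto (fun k => r k • Z k) atTop (𝓝 X)) : X ∈ lieSet H := by
  intro s
  have h1 : Tendsto (fun k => ((⌊s * r k⌋ : ℤ) : ℝ) • Z k) atTop (𝓝 (s • X)) := by
    have h2 : Tendsto (fun k => Int.fract (s * r k) • Z k) atTop (𝓝 0) := by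
      refine squeeze_zero_norm (fun k => ?_) (tendsto_zero_iff_norm_tendsto_zero.1 h0)
      rw [norm_smul, Real.norm_eq_abs, abs_of_nonneg (Int.fract_nonneg _)]
      exact mul_le_of_le_one_left (norm_nonneg _) (Int.fract_lt_one _).le
    have h3 := (hr.const_smul s).sub h2
    rw [sub_zero] at h3
    refine h3.congr fun k => ?_
    rw [smul_smul, ← sub_smul, Int.self_sub_fract]
  have h4 := (NormedSpace.exp_continuous (𝔸 := Mat n)).continuousAt.tendsto.comp h1
  refine (isClosed_mats hH).mem_of_tendsto h4 ?_
  filter_upwards [hZ] with k hk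
  exact mats_exp_int hk _

lemma hasStrict_exp : HasStrictFDerivAt (NormedSpace.exp : Mat n → Mat n)
    ((ContinuousLinearEquiv.refl ℝ (Mat n) : Mat n ≃L[ℝ] Mat n) : Mat n →L[ℝ] Mat n) 0 :=
  hasStrictFDerivAt_exp_zero

/-- The velocity at the identity of a curve in a closed `H` generates a one-parameter group
in `H`. -/
lemma mem_lieSet_of_curve (hH : IsClosed (H : Set (Matrix.unitaryGroup (Fin n) ℂ)))
    {γ : ℝ → Mat n} {X : Mat n} (h0 : γ 0 = 1) (hγ : HasDerivAt γ X 0) (hm : ∀ s, γ s ∈ mats H) :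
    X ∈ lieSet H := by
  set L := hasStrict_exp (n := n).localInverse with hL
  have hL1 : L 1 = 0 := by
    have := hasStrict_exp (n := n).localInverse_apply_image
    rwa [NormedSpace.exp_zero] at this
  have hLd : HasFDerivAt L (ContinuousLinearMap.id ℝ (Mat n)) (γ 0) := by
    have := hasStrict_exp (n := n).to_localInverse.hasFDerivAt
    rw [h0]
    rw [NormedSpace.exp_zero] at this
    exact this
  have hcomp : HasDerivAt (fun s => L (γ s)) X 0 := hLd.comp_hasDerivAt 0 hγ
  have hinv : ∀ᶠ s in 𝓝 (0 : ℝ), NormedSpace.exp (L (γ s)) = γ s := by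
    have h1 := hasStrict_exp (n := n).eventually_right_inverse
    rw [NormedSpace.exp_zero, ← h0] at h1
    exact hγ.continuousAt.tendsto.eventually h1
  have hk : Tendsto (fun k : ℕ => ((k : ℝ) + 1)⁻¹) atTop (𝓝[≠] 0) := by
    rw [tendsto_nhdsWithin_iff]
    constructor
    · have := tendsto_one_div_add_atTop_nhds_zero_nat (𝕜 := ℝ)
      simpa using this
    · exact Eventually.of_forall fun k => inv_ne_zero (by positivity)
  refine mem_lieSet_of_tendsto hH (Z := fun k => L (γ ((k : ℝ) + 1)⁻¹))
    (r := fun k => (k : ℝ) + 1) ?_ ?_ ?_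
  · have h1 := hcomp.continuousAt.tendsto
    rw [h0, hL1] at h1
    exact h1.comp (hk.mono_right nhdsWithin_le_nhds)
  · filter_upwards [(hk.mono_right nhdsWithin_le_nhds).eventually hinv] with k h1
    rw [h1]
    exact hm _
  · have h1 := (hasDerivAt_iff_tendsto_slope_zero.1 hcomp).comp hk
    refine h1.congr fun k => ?_
    simp [h0, hL1]

lemma hasDerivAt_exp_smul_zero (X : Mat n) :
    HasDerivAt (fun s : ℝ => NormedSpace.exp (s • X)) X 0 := by
  have h1 := hasDerivAt_exp_smul_const (𝕂 := ℝ) X 0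
  rwa [zero_smul, NormedSpace.exp_zero, one_mul] at h1

/-- The Lie algebra of a closed subgroup. -/
def lieSub (hH : IsClosed (H : Set (Matrix.unitaryGroup (Fin n) ℂ))) : Submodule ℝ (Mat n) where
  carrier := lieSet H
  zero_mem' s := by rw [smul_zero, NormedSpace.exp_zero]; exact mats_one
  smul_mem' r X hX s := by rw [smul_smul]; exact hX _
  add_mem' := by
    intro X Y hX hY
    refine mem_lieSet_of_curve hH (γ := fun s => NormedSpace.exp (s • X) * NormedSpace.exp (s • Y))
      (by simp [NormedSpace.exp_zero]) ?_ fun s => mats_mul (hX s) (hY s)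
    have := (hasDerivAt_exp_smul_zero X).mul (hasDerivAt_exp_smul_zero Y)
    refine this.congr_deriv ?_
    simp [NormedSpace.exp_zero]

variable (hH : IsClosed (H : Set (Matrix.unitaryGroup (Fin n) ℂ)))

lemma mem_lieSub {X : Mat n} : X ∈ lieSub hH ↔ ∀ s : ℝ, NormedSpace.exp (s • X) ∈ mats H := Iff.rfl

lemma lieSub_exp {X : Mat n} (hX : X ∈ lieSub hH) : NormedSpace.exp X ∈ mats H := by
  have := hX 1
  rwa [one_smul] at this

lemma lieSub_skew {X : Mat n} (hX : X ∈ lieSub hH) : Xᴴ = -X := by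
  have h1 : HasDerivAt (fun s : ℝ => NormedSpace.exp (s • Xᴴ) * NormedSpace.exp (s • X))
      (Xᴴ + X) 0 := by
    refine ((hasDerivAt_exp_smul_zero Xᴴ).mul (hasDerivAt_exp_smul_zero X)).congr_deriv ?_
    simp [NormedSpace.exp_zero]
  have h2 : (fun s : ℝ => NormedSpace.exp (s • Xᴴ) * NormedSpace.exp (s • X)) = fun _ => 1 := by
    funext s
    have : (s • X)ᴴ = s • Xᴴ := by rw [Matrix.conjTranspose_smul]; simp
    rw [← this, Matrix.exp_conjTranspose]
    exact mats_unitary (hX s)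
  rw [h2] at h1
  have := h1.unique (hasDerivAt_const _ _)
  exact eq_neg_of_add_eq_zero_left this

lemma lieSub_conj {A X : Mat n} (hA : A ∈ mats H) (hX : X ∈ lieSub hH) :
    A * X * Aᴴ ∈ lieSub hH := by
  intro s
  have : s • (A * X * Aᴴ) = A * (s • X) * Aᴴ := by
    rw [Matrix.mul_smul, Matrix.smul_mul]
  rw [this, conj_exp (mats_unitary hA)]
  exact mats_mul (mats_mul hA (hX s)) (mats_star hA)

lemma lieSub_exp_conj {A X : Mat n} (hA : A ∈ lieSub hH) (hX : X ∈ lieSub hH) :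
    NormedSpace.exp A * X * NormedSpace.exp (-A) ∈ lieSub hH := by
  rw [← lieSub_skew hH hA, Matrix.exp_conjTranspose]
  exact lieSub_conj hH (lieSub_exp hH hA) hX

lemma lieSub_lie {X Y : Mat n} (hX : X ∈ lieSub hH) (hY : Y ∈ lieSub hH) :
    ⁅X, Y⁆ ∈ lieSub hH := by
  have h1 : HasDerivAt (fun s : ℝ => NormedSpace.exp (s • X) * Y * NormedSpace.exp (s • -X))
      ⁅X, Y⁆ 0 := by
    refine (((hasDerivAt_exp_smul_zero X).mul_const Y).mul
      (hasDerivAt_exp_smul_zero (-X))).congr_deriv ?_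
    simp [NormedSpace.exp_zero, br_def, sub_eq_add_neg]
  have h2 := hasDerivAt_iff_tendsto_slope_zero.1 h1
  refine (Submodule.closed_of_finiteDimensional (lieSub hH)).mem_of_tendsto h2 ?_
  refine Eventually.of_forall fun s => ?_
  refine (lieSub hH).smul_mem _ ((lieSub hH).sub_mem ?_ ?_)
  · rw [smul_neg]
    exact lieSub_exp_conj hH ((lieSub hH).smul_mem _ hX) hY
  · simpa [NormedSpace.exp_zero] using hY

/-- Elements of a closed subgroup near the identity are exponentials of its Lie algebra. -/
lemma exists_nhds_exp : ∀ᶠ A in 𝓝 (1 : Mat n), A ∈ mats H →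
    ∃ X ∈ lieSub hH, A = NormedSpace.exp X := by
  obtain ⟨π, hπ⟩ := LinearMap.exists_extend (LinearMap.id : lieSub hH →ₗ[ℝ] lieSub hH)
  have hπ' : ∀ X (hX : X ∈ lieSub hH), (π X : Mat n) = X := by
    intro X hX
    exact congrArg Subtype.val (LinearMap.congr_fun hπ ⟨X, hX⟩)
  let P : Mat n →L[ℝ] Mat n := LinearMap.toContinuousLinearMap ((lieSub hH).subtype ∘ₗ π)
  have hPm : ∀ X, P X ∈ lieSub hH := fun X => (π X).2
  have hPs : ∀ X ∈ lieSub hH, P X = X := hπ'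
  let Ψ : Mat n → Mat n := fun Z => NormedSpace.exp (P Z) * NormedSpace.exp (Z - P Z)
  have hΨ0 : Ψ 0 = 1 := by simp [Ψ, NormedSpace.exp_zero]
  have hΨ : HasStrictFDerivAt Ψ
      ((ContinuousLinearEquiv.refl ℝ (Mat n) : Mat n ≃L[ℝ] Mat n) : Mat n →L[ℝ] Mat n) 0 := by
    have e1 : HasStrictFDerivAt (fun Z => NormedSpace.exp (P Z)) P 0 := by
      have : HasStrictFDerivAt (NormedSpace.exp : Mat n → Mat n) (1 : Mat n →L[ℝ] Mat n) (P 0) := by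
        rw [map_zero]; exact hasStrictFDerivAt_exp_zero
      exact this.comp 0 P.hasStrictFDerivAt
    have e2 : HasStrictFDerivAt (fun Z => NormedSpace.exp (Z - P Z))
        (ContinuousLinearMap.id ℝ (Mat n) - P) 0 := by
      have : HasStrictFDerivAt (NormedSpace.exp : Mat n → Mat n) (1 : Mat n →L[ℝ] Mat n)
          ((ContinuousLinearMap.id ℝ (Mat n) - P) 0) := by
        rw [map_zero]; exact hasStrictFDerivAt_exp_zero
      exact this.comp 0 (ContinuousLinearMap.id ℝ (Mat n) - P).hasStrictFDerivAt
    refine (e1.mul' e2).congr_fderiv ?_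
    ext1 Z
    change NormedSpace.exp (P 0) * (Z - P Z) + P Z * NormedSpace.exp (0 - P 0) = Z
    simp [NormedSpace.exp_zero]
  by_contra hcon
  have hcg : (𝓝 (1 : Mat n)).IsCountablyGenerated :=
    (inferInstance : FirstCountableTopology (Fin n → Fin n → ℂ)).nhds_generated_countable _
  obtain ⟨u, hu1, hu2⟩ := exists_seq_forall_of_frequently (not_eventually.1 hcon)
  push Not at hu2
  set L := hΨ.localInverse with hL
  have hL1 : L 1 = 0 := by
    have := hΨ.localInverse_apply_image
    rwa [hΨ0] at this
  have hZ0 : Tendsto (fun k => L (u k)) atTop (𝓝 0) := by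
    have := hΨ.localInverse_continuousAt.tendsto
    rw [hΨ0] at this
    rw [← hL1]
    exact this.comp hu1
  have hinv : ∀ᶠ k in atTop, Ψ (L (u k)) = u k := by
    have := hΨ.eventually_right_inverse
    rw [hΨ0] at this
    exact hu1.eventually this
  set Y : ℕ → Mat n := fun k => L (u k) - P (L (u k)) with hY
  have hY0 : Tendsto Y atTop (𝓝 0) := by
    have := hZ0.sub ((P.continuous.tendsto 0).comp hZ0)
    rwa [map_zero, sub_zero] at this
  have hPY : ∀ k, P (Y k) = 0 := by
    intro k
    rw [hY]
    simp only
    rw [map_sub, hPs _ (hPm _), sub_self]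
  have hYm : ∀ᶠ k in atTop, NormedSpace.exp (Y k) ∈ mats H := by
    filter_upwards [hinv] with k hk
    have h1 : NormedSpace.exp (P (L (u k))) * NormedSpace.exp (Y k) = u k := hk
    have h2 : NormedSpace.exp (Y k) = NormedSpace.exp (-P (L (u k))) * u k := by
      have h3 := exp_mul_exp_neg (-P (L (u k)))
      rw [neg_neg] at h3
      calc _ = NormedSpace.exp (-P (L (u k))) *
            (NormedSpace.exp (P (L (u k))) * NormedSpace.exp (Y k)) := by
            rw [← Matrix.mul_assoc, h3, Matrix.one_mul]
        _ = _ := by rw [h1]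
    rw [h2]
    exact mats_mul (lieSub_exp hH ((lieSub hH).neg_mem (hPm _))) (hu2 k).1
  have hYne : ∀ᶠ k in atTop, Y k ≠ 0 := by
    filter_upwards [hinv] with k hk h0
    refine (hu2 k).2 _ (hPm (L (u k))) ?_
    have h1 : NormedSpace.exp (P (L (u k))) * NormedSpace.exp (Y k) = u k := hk
    rw [h0, NormedSpace.exp_zero, Matrix.mul_one] at h1
    exact h1.symm
  obtain ⟨X, -, φ, hφ, hlim⟩ := tendsto_subseq_of_bounded
    (Metric.isBounded_closedBall (x := (0 : Mat n)) (r := 1))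
    (x := fun k => ‖Y k‖⁻¹ • Y k) fun k => by
      rw [mem_closedBall_zero_iff, norm_smul, norm_inv, norm_norm]
      exact inv_mul_le_one
  have hXm : X ∈ lieSub hH := mem_lieSet_of_tendsto hH (hY0.comp hφ.tendsto_atTop)
    (hφ.tendsto_atTop.eventually hYm) (r := fun k => ‖Y (φ k)‖⁻¹) hlim
  have hX1 : ‖X‖ = 1 := by
    refine tendsto_nhds_unique hlim.norm (tendsto_const_nhds.congr' ?_)
    filter_upwards [hφ.tendsto_atTop.eventually hYne] with k hk
    simp only [Function.comp]
    rw [norm_smul, norm_inv, norm_norm, inv_mul_cancel₀ (norm_ne_zero_iff.2 hk)]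
  have hPX : P X = 0 := by
    refine tendsto_nhds_unique ((P.continuous.tendsto X).comp hlim) (tendsto_const_nhds.congr ?_)
    intro k
    simp [hPY]
  rw [hPs X hXm] at hPX
  rw [hPX, norm_zero] at hX1
  exact zero_ne_one hX1

end ClosedSubgroup
end DimDatum

/-! ### The complexified Lie algebra -/

namespace DimDatum
section Complexification
open scoped InnerProductSpace Matrix Matrix.Norms.Operator
open Finset Filter Topology

variable {n : ℕ} {H : Subgroup (Matrix.unitaryGroup (Fin n) ℂ)}

/-- The complexified Lie algebra of a closed subgroup. -/
def lieC (hH : IsClosed (H : Set (Matrix.unitaryGroup (Fin n) ℂ))) : Submodule ℂ (Mat n) where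
  carrier := {A | ∃ X ∈ lieSub hH, ∃ Y ∈ lieSub hH, A = X + Complex.I • Y}
  zero_mem' := ⟨0, zero_mem _, 0, zero_mem _, by simp⟩
  add_mem' := by
    rintro _ _ ⟨X, hX, Y, hY, rfl⟩ ⟨X', hX', Y', hY', rfl⟩
    refine ⟨X + X', add_mem hX hX', Y + Y', add_mem hY hY', ?_⟩
    rw [smul_add]; abel
  smul_mem' := by
    rintro z _ ⟨X, hX, Y, hY, rfl⟩
    refine ⟨z.re • X - z.im • Y, sub_mem (Submodule.smul_mem _ _ hX) (Submodule.smul_mem _ _ hY),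
      z.im • X + z.re • Y, add_mem (Submodule.smul_mem _ _ hX) (Submodule.smul_mem _ _ hY), ?_⟩
    ext a b
    simp only [Matrix.smul_apply, Matrix.add_apply, Matrix.sub_apply, smul_eq_mul,
      Complex.real_smul]
    conv_lhs => rw [← Complex.re_add_im z]
    linear_combination (z.im * Y a b) * Complex.I_mul_I

variable (hH : IsClosed (H : Set (Matrix.unitaryGroup (Fin n) ℂ)))

lemma lieC_of {X : Mat n} (hX : X ∈ lieSub hH) : X ∈ lieC hH :=
  ⟨X, hX, 0, zero_mem _, by simp⟩

lemma lieC_skew {A : Mat n} (hA : A ∈ lieC hH) (hs : Aᴴ = -A) : A ∈ lieSub hH := by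
  obtain ⟨X, hX, Y, hY, rfl⟩ := hA
  rw [Matrix.conjTranspose_add, Matrix.conjTranspose_smul, lieSub_skew hH hX, lieSub_skew hH hY]
    at hs
  have h1 : (2 * Complex.I) • Y = 0 := by
    have : (star Complex.I • -Y : Mat n) = Complex.I • Y := by simp
    rw [this] at hs
    rw [mul_smul, two_smul]
    have h2 := congrArg (fun Z => Z + (X + Complex.I • Y)) hs
    simp only [neg_add_cancel] at h2
    rw [← h2]; abel
  have h2 : Y = 0 := by
    rcases smul_eq_zero.1 h1 with h | h
    · exfalso; simp at h
    · exact h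
  rw [h2, smul_zero, add_zero]
  exact hX

lemma lieC_gen (hc : IsConnected (H : Set (Matrix.unitaryGroup (Fin n) ℂ))) : Gen H (lieC hH) := by
  rw [Gen]
  set H0 := Subgroup.closure {u : Matrix.unitaryGroup (Fin n) ℂ |
    ∃ X ∈ lieC hH, Xᴴ = -X ∧ u.1 = NormedSpace.exp X} with hH0
  have hle : H0 ≤ H := by
    rw [hH0, Subgroup.closure_le]
    rintro u ⟨X, hX, sX, hu⟩
    obtain ⟨v, hv, hvu⟩ := lieSub_exp hH (lieC_skew hH hX sX)
    have : u = v := Subtype.ext (hu.trans hvu.symm)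
    rw [this]; exact hv
  have : ConnectedSpace H := isConnected_iff_connectedSpace.1 hc
  have hopen : IsOpen ((H0.subgroupOf H : Subgroup H) : Set H) := by
    refine Subgroup.isOpen_of_mem_nhds _ (g := 1) ?_
    have h1 : Tendsto (fun u : H => u.1.1) (𝓝 1) (𝓝 (1 : Mat n)) :=
      (continuous_subtype_val.comp continuous_subtype_val).tendsto' _ _ rfl
    filter_upwards [h1.eventually (exists_nhds_exp hH)] with u hu
    obtain ⟨X, hX, huX⟩ := hu ⟨u.1, u.2, rfl⟩
    exact Subgroup.subset_closure ⟨X, lieC_of hH hX, lieSub_skew hH hX, huX⟩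
  have huniv : ((H0.subgroupOf H : Subgroup H) : Set H) = Set.univ :=
    IsClopen.eq_univ ⟨Subgroup.isClosed_of_isOpen _ hopen, hopen⟩ ⟨1, one_mem _⟩
  refine le_antisymm (fun u hu => ?_) hle
  have : (⟨u, hu⟩ : H) ∈ ((H0.subgroupOf H : Subgroup H) : Set H) := by rw [huniv]; trivial
  exact this

/-- The algebra of matrices preserving a subspace. -/
def stab (W : Submodule ℂ (Fin n → ℂ)) : Subalgebra ℂ (Mat n) where
  carrier := {A | ∀ v ∈ W, A *ᵥ v ∈ W}
  mul_mem' ha hb v hv := by rw [← Matrix.mulVec_mulVec]; exact ha _ (hb v hv)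
  add_mem' ha hb v hv := by rw [Matrix.add_mulVec]; exact add_mem (ha v hv) (hb v hv)
  algebraMap_mem' c v hv := by
    rw [Algebra.algebraMap_eq_smul_one, Matrix.smul_mulVec, Matrix.one_mulVec]
    exact W.smul_mem _ hv

lemma exp_mem_stab {W : Submodule ℂ (Fin n → ℂ)} {A : Mat n} (hA : A ∈ stab W) :
    NormedSpace.exp A ∈ stab W := by
  have hcl : IsClosed ((stab W : Subalgebra ℂ (Mat n)) : Set (Mat n)) :=
    Submodule.closed_of_finiteDimensional (Subalgebra.toSubmodule (stab W))
  have : HasSum (fun k : ℕ => ((k.factorial : ℂ)⁻¹) • A ^ k) (NormedSpace.exp A) :=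
    NormedSpace.exp_series_hasSum_exp' A
  exact hcl.mem_of_tendsto this (Eventually.of_forall fun s =>
    Subalgebra.sum_mem _ fun i _ => Subalgebra.smul_mem _ (Subalgebra.pow_mem _ hA _) _)

lemma lieC_pre (hc : IsConnected (H : Set (Matrix.unitaryGroup (Fin n) ℂ)))
    (hirr : ∀ W : Submodule ℂ (Fin n → ℂ), (∀ g ∈ H, ∀ v ∈ W, g.1 *ᵥ v ∈ W) → W = ⊥ ∨ W = ⊤) :
    Pre (lieC hH) where
  lie := by
    rintro _ ⟨X, hX, Y, hY, rfl⟩ _ ⟨X', hX', Y', hY', rfl⟩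
    refine ⟨⁅X, X'⁆ - ⁅Y, Y'⁆, sub_mem (lieSub_lie hH hX hX') (lieSub_lie hH hY hY'),
      ⁅X, Y'⁆ + ⁅Y, X'⁆, add_mem (lieSub_lie hH hX hY') (lieSub_lie hH hY hX'), ?_⟩
    simp only [br_def, Matrix.add_mul, Matrix.mul_add, Matrix.smul_mul, Matrix.mul_smul, smul_add,
      smul_sub, smul_smul, Complex.I_mul_I, neg_smul, one_smul]
    abel
  star := by
    rintro _ ⟨X, hX, Y, hY, rfl⟩
    refine ⟨-X, neg_mem hX, Y, hY, ?_⟩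
    rw [Matrix.conjTranspose_add, Matrix.conjTranspose_smul, lieSub_skew hH hX, lieSub_skew hH hY]
    simp
  irr W hW := by
    refine hirr W ?_
    have key : ∀ u ∈ H, (∀ v ∈ W, u.1 *ᵥ v ∈ W) ∧ (∀ v ∈ W, u⁻¹.1 *ᵥ v ∈ W) := by
      intro u hu
      rw [lieC_gen hH hc] at hu
      induction hu using Subgroup.closure_induction with
      | mem u hu =>
        obtain ⟨X, hX, sX, hu⟩ := hu
        have h1 : u⁻¹.1 = NormedSpace.exp (-X) := by
          change (u.1)ᴴ = _
          rw [hu, ← Matrix.exp_conjTranspose, sX]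
        rw [hu, h1]
        exact ⟨exp_mem_stab (W := W) (hW X hX),
          exp_mem_stab (W := W) (hW (-X) (neg_mem hX))⟩
      | one =>
        rw [inv_one]
        have : ∀ v ∈ W, (1 : Mat n) *ᵥ v ∈ W := fun v hv => by rwa [Matrix.one_mulVec]
        exact ⟨this, this⟩
      | mul a b _ _ ha hb =>
        constructor
        · intro v hv
          change (a.1 * b.1) *ᵥ v ∈ W
          rw [← Matrix.mulVec_mulVec]
          exact ha.1 _ (hb.1 v hv)
        · intro v hv
          rw [mul_inv_rev]
          change (b⁻¹.1 * a⁻¹.1) *ᵥ v ∈ W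
          rw [← Matrix.mulVec_mulVec]
          exact hb.2 _ (ha.2 v hv)
      | inv a _ ha =>
        rw [inv_inv]
        exact ⟨ha.2, ha.1⟩
    exact fun u hu => (key u hu).1
  exp_conj := by
    rintro A hA sA _ ⟨X, hX, Y, hY, rfl⟩
    have hA' := lieC_skew hH hA sA
    refine ⟨_, lieSub_exp_conj hH hA' hX, _, lieSub_exp_conj hH hA' hY, ?_⟩
    rw [Matrix.mul_add, Matrix.add_mul, Matrix.mul_smul, Matrix.smul_mul]

/-- The unitary group element with a given matrix. -/
def toU (U : Mat n) (hU : Uᴴ * U = 1) : Matrix.unitaryGroup (Fin n) ℂ :=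
  ⟨U, Matrix.mem_unitaryGroup_iff'.2 hU⟩

lemma Gen.map {g : Submodule ℂ (Mat n)} (hG : Gen H g) {U : Mat n} (hU : Uᴴ * U = 1) :
    Gen (H.map (MulAut.conj (toU U hU)).toMonoidHom) (cj U g) := by
  have hU' : U * Uᴴ = 1 := mul_eq_one_comm.1 hU
  rw [Gen] at hG ⊢
  conv_lhs => rw [hG]
  rw [MonoidHom.map_closure]
  congr 1
  ext u
  constructor
  · rintro ⟨v, ⟨X, hX, sX, hv⟩, rfl⟩
    refine ⟨U * X * Uᴴ, mem_cj_of hX, ?_, ?_⟩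
    · simp only [Matrix.conjTranspose_mul, Matrix.conjTranspose_conjTranspose, sX, Matrix.mul_neg,
        Matrix.neg_mul, Matrix.mul_assoc]
    · rw [conj_exp hU, ← hv]; rfl
  · rintro ⟨X, hX, sX, hu⟩
    refine ⟨(toU U hU)⁻¹ * u * toU U hU, ⟨Uᴴ * X * U, (mem_cj_iff hU).1 hX, ?_, ?_⟩, ?_⟩
    · simp only [Matrix.conjTranspose_mul, Matrix.conjTranspose_conjTranspose, sX, Matrix.mul_neg,
        Matrix.neg_mul, Matrix.mul_assoc]
    · have := conj_exp (U := Uᴴ) (by rwa [Matrix.conjTranspose_conjTranspose]) X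
      rw [Matrix.conjTranspose_conjTranspose] at this
      rw [this, ← hu]; rfl
    · simp [MulAut.conj_apply, mul_assoc]

lemma Gen.unique {H' : Subgroup (Matrix.unitaryGroup (Fin n) ℂ)} {g : Submodule ℂ (Mat n)}
    (h : Gen H g) (h' : Gen H' g) : H = H' := by
  rw [Gen] at h h'
  rw [h, h']

end Complexification
end DimDatum

/-! ### Maximal tori -/

namespace DimDatum
section Torus
open scoped InnerProductSpace Matrix Matrix.Norms.Operator
open Finset

variable {n : ℕ}

/-- Commuting Hermitian matrices are simultaneously diagonalizable by a unitary matrix. -/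
lemma exists_simultaneous_diagonalization {S : Set (Mat n)} (hS : ∀ A ∈ S, Aᴴ = A)
    (hC : ∀ A ∈ S, ∀ B ∈ S, A * B = B * A) :
    ∃ U : Mat n, Uᴴ * U = 1 ∧ ∀ A ∈ S, ∃ d, Uᴴ * A * U = Matrix.diagonal d := by
  classical
  let T : S → (EuclideanSpace ℂ (Fin n) →ₗ[ℂ] EuclideanSpace ℂ (Fin n)) :=
    fun A => Matrix.toEuclideanLin A.1
  have hT : ∀ A, (T A).IsSymmetric := fun A =>
    Matrix.isSymmetric_toEuclideanLin_iff.2 (hS A.1 A.2)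
  have hcomm : Pairwise (Function.onFun Commute T) := by
    intro A B _
    change T A * T B = T B * T A
    ext1 v
    change T A (T B v) = T B (T A v)
    apply (WithLp.ofLp_injective 2)
    change A.1 *ᵥ (B.1 *ᵥ v.ofLp) = B.1 *ᵥ (A.1 *ᵥ v.ofLp)
    rw [Matrix.mulVec_mulVec, Matrix.mulVec_mulVec, hC A.1 A.2 B.1 B.2]
  have hinter := DirectSum.isInternal_ne_bot_iff.2
    (LinearMap.IsSymmetric.directSum_isInternal_of_pairwise_commute hT hcomm)
  have hort := LinearMap.IsSymmetric.orthogonalFamily_iInf_eigenspaces hT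
  have hfin : Finite {γ : S → ℂ // (⨅ j, Module.End.eigenspace (T j) (γ j)) ≠ ⊥} :=
    (WellFoundedGT.finite_ne_bot_of_iSupIndep hort.independent).to_subtype
  have := Fintype.ofFinite {γ : S → ℂ // (⨅ j, Module.End.eigenspace (T j) (γ j)) ≠ ⊥}
  have hort' := hort.comp (γ := {γ : S → ℂ // (⨅ j, Module.End.eigenspace (T j) (γ j)) ≠ ⊥})
    Subtype.val_injective
  have hn : Module.finrank ℂ (EuclideanSpace ℂ (Fin n)) = n := finrank_euclideanSpace_fin
  let b := hinter.subordinateOrthonormalBasis hn hort'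
  have hb : ∀ c (A : S), ∃ z : ℂ, T A (b c) = z • b c := by
    intro c A
    have h1 := hinter.subordinateOrthonormalBasis_subordinate hn c hort'
    rw [Submodule.mem_iInf] at h1
    exact ⟨_, Module.End.mem_eigenspace_iff.1 (h1 A)⟩
  let U : Mat n := Matrix.of fun a c => b c a
  have hU : Uᴴ * U = 1 := by
    ext c d
    have h1 := orthonormal_iff_ite.1 b.orthonormal c d
    rw [PiLp.inner_apply] at h1
    rw [Matrix.mul_apply, Matrix.one_apply, ← h1]
    refine Finset.sum_congr rfl fun a _ => ?_
    rw [RCLike.inner_apply, mul_comm]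
    rfl
  refine ⟨U, hU, fun A hA => ?_⟩
  choose z hz using fun c => hb c ⟨A, hA⟩
  refine ⟨z, ?_⟩
  have h1 : A * U = U * Matrix.diagonal z := by
    ext a c
    rw [Matrix.mul_diagonal]
    have h2 := congrArg (fun v : EuclideanSpace ℂ (Fin n) => v a) (hz c)
    simp only [PiLp.smul_apply, smul_eq_mul] at h2
    rw [mul_comm]
    exact h2
  rw [Matrix.mul_assoc, h1, ← Matrix.mul_assoc, hU, Matrix.one_mul]

/-- After conjugation by a unitary matrix, a maximal commuting space of Hermitian elements
becomes diagonal. -/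
theorem exists_std {g : Submodule ℂ (Mat n)} (hg : Pre g) :
    ∃ (U : Mat n) (t : Submodule ℝ (Euc n)), Uᴴ * U = 1 ∧ Std (cj U g) t := by
  let P : Submodule ℝ (Mat n) → Prop := fun M =>
    (∀ A ∈ M, A ∈ g ∧ Aᴴ = A) ∧ ∀ A ∈ M, ∀ B ∈ M, A * B = B * A
  obtain ⟨M, hM, hmax⟩ := WellFounded.has_min
    (wellFounded_gt (α := Submodule ℝ (Mat n))) {M | P M} ⟨⊥, by
      refine ⟨fun A hA => ?_, fun A hA B hB => ?_⟩
      · rw [(Submodule.mem_bot ℝ).1 hA]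
        exact ⟨g.zero_mem, Matrix.conjTranspose_zero⟩
      · rw [(Submodule.mem_bot ℝ).1 hA, (Submodule.mem_bot ℝ).1 hB]⟩
  -- Hermitian elements of `g` commuting with `M` lie in `M`
  have hmem : ∀ B ∈ g, Bᴴ = B → (∀ A ∈ M, A * B = B * A) → B ∈ M := by
    intro B hB sB hc
    have hP : P (M ⊔ Submodule.span ℝ {B}) := by
      refine ⟨fun A hA => ?_, fun A hA A' hA' => ?_⟩
      · obtain ⟨x, hx, y, hy, rfl⟩ := Submodule.mem_sup.1 hA
        obtain ⟨r, rfl⟩ := Submodule.mem_span_singleton.1 hy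
        refine ⟨g.add_mem (hM.1 x hx).1 ?_, ?_⟩
        · rw [← Complex.coe_smul]
          exact g.smul_mem _ hB
        · rw [Matrix.conjTranspose_add, Matrix.conjTranspose_smul, sB, (hM.1 x hx).2]
          simp
      · obtain ⟨x, hx, y, hy, rfl⟩ := Submodule.mem_sup.1 hA
        obtain ⟨r, rfl⟩ := Submodule.mem_span_singleton.1 hy
        obtain ⟨x', hx', y', hy', rfl⟩ := Submodule.mem_sup.1 hA'
        obtain ⟨r', rfl⟩ := Submodule.mem_span_singleton.1 hy'
        simp only [Matrix.add_mul, Matrix.mul_add, Matrix.smul_mul, Matrix.mul_smul,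
          hM.2 x hx x' hx', hc x hx, hc x' hx', smul_add, smul_smul, mul_comm r r']
        abel
    have h1 : ¬ M < M ⊔ Submodule.span ℝ {B} := hmax _ hP
    have h2 : M = M ⊔ Submodule.span ℝ {B} := by
      by_contra hne
      exact h1 (lt_of_le_of_ne le_sup_left hne)
    rw [h2]
    exact Submodule.mem_sup_right (Submodule.mem_span_singleton_self B)
  obtain ⟨V, hV, hdiag⟩ := exists_simultaneous_diagonalization (S := (M : Set (Mat n)))
    (fun A hA => (hM.1 A hA).2) hM.2
  have hV' : V * Vᴴ = 1 := mul_eq_one_comm.1 hV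
  have hU : (Vᴴ)ᴴ * Vᴴ = 1 := unitary_star hV
  let t : Submodule ℝ (Euc n) :=
    { carrier := {x | dg x ∈ cj Vᴴ g}
      zero_mem' := by
        have : dg (0 : Euc n) = 0 := by simp [dg]
        simp only [Set.mem_ofPred_eq, this]
        exact Submodule.zero_mem _
      add_mem' := by
        intro x y hx hy
        simp only [Set.mem_ofPred_eq, dg_add] at *
        exact Submodule.add_mem _ hx hy
      smul_mem' := by
        intro r x hx
        have : dg (r • x) = (r : ℂ) • dg x := by
          ext a b
          simp [dg, Matrix.diagonal_apply]
        simp only [Set.mem_ofPred_eq, this] at *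
        exact Submodule.smul_mem _ _ hx }
  have hmt : ∀ x, x ∈ t ↔ dg x ∈ cj Vᴴ g := fun x => Iff.rfl
  refine ⟨Vᴴ, t, hU, { toPre := hg.cj hU, mem_t := hmt, torus := ?_ }⟩
  intro A hA hcomm
  obtain ⟨B, hB, rfl⟩ := mem_cj.1 hA
  rw [Matrix.conjTranspose_conjTranspose] at hcomm ⊢
  have hBM : ∀ C ∈ M, C * B = B * C := by
    intro C hC
    obtain ⟨d, hd⟩ := hdiag C hC
    have hdr : ∀ a, star (d a) = d a := by
      intro a
      have h1 : (Matrix.diagonal d)ᴴ = Matrix.diagonal d := by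
        rw [← hd]
        simp only [Matrix.conjTranspose_mul, Matrix.conjTranspose_conjTranspose, (hM.1 C hC).2,
          Matrix.mul_assoc]
      rw [Matrix.diagonal_conjTranspose] at h1
      exact congrFun (Matrix.diagonal_injective h1) a
    have hdx : dg (WithLp.toLp 2 fun a => (d a).re : Euc n) = Matrix.diagonal d := by
      rw [dg]
      congr 1
      funext a
      exact Complex.conj_eq_iff_re.1 (hdr a)
    have hxt : (WithLp.toLp 2 fun a => (d a).re : Euc n) ∈ t := by
      rw [hmt, hdx, ← hd, mem_cj]
      exact ⟨C, (hM.1 C hC).1, by rw [Matrix.conjTranspose_conjTranspose]⟩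
    have h1 := hcomm _ hxt
    rw [hdx, ← hd, br_def, sub_eq_zero] at h1
    have h2 : Vᴴ * (C * B) * V = Vᴴ * (B * C) * V := by
      calc _ = Vᴴ * C * (V * Vᴴ) * B * V := by rw [hV', Matrix.mul_one]; simp only [Matrix.mul_assoc]
        _ = Vᴴ * C * V * (Vᴴ * B * V) := by simp only [Matrix.mul_assoc]
        _ = Vᴴ * B * V * (Vᴴ * C * V) := h1
        _ = Vᴴ * B * (V * Vᴴ) * C * V := by simp only [Matrix.mul_assoc]
        _ = _ := by rw [hV', Matrix.mul_one]; simp only [Matrix.mul_assoc]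
    have h3 : ∀ E : Mat n, V * (Vᴴ * E * V) * Vᴴ = E := by
      intro E
      calc _ = (V * Vᴴ) * E * (V * Vᴴ) := by simp only [Matrix.mul_assoc]
        _ = _ := by rw [hV', Matrix.one_mul, Matrix.mul_one]
    rw [← h3 (C * B), h2, h3]
  have hBM' : ∀ C ∈ M, C * Bᴴ = Bᴴ * C := by
    intro C hC
    have := congrArg Matrix.conjTranspose (hBM C hC)
    rw [Matrix.conjTranspose_mul, Matrix.conjTranspose_mul, (hM.1 C hC).2] at this
    exact this.symm
  have m1 : B + Bᴴ ∈ M := hmem _ (g.add_mem hB (hg.star B hB))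
    (by rw [Matrix.conjTranspose_add, Matrix.conjTranspose_conjTranspose, add_comm])
    fun C hC => by rw [Matrix.mul_add, Matrix.add_mul, hBM C hC, hBM' C hC]
  have m2 : Complex.I • (B - Bᴴ) ∈ M := hmem _ (g.smul_mem _ (g.sub_mem hB (hg.star B hB)))
    (by
      rw [Matrix.conjTranspose_smul, Matrix.conjTranspose_sub, Matrix.conjTranspose_conjTranspose,
        ← neg_sub B, smul_neg, ← neg_smul]
      simp)
    fun C hC => by
      rw [Matrix.mul_smul, Matrix.smul_mul, Matrix.mul_sub, Matrix.sub_mul, hBM C hC, hBM' C hC]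
  obtain ⟨d1, h1⟩ := hdiag _ m1
  obtain ⟨d2, h2⟩ := hdiag _ m2
  refine ⟨(1 / 2 : ℂ) • d1 + (-Complex.I / 2) • d2, ?_⟩
  have hB2 : B = (1 / 2 : ℂ) • (B + Bᴴ) + (-Complex.I / 2) • (Complex.I • (B - Bᴴ)) := by
    rw [smul_smul]
    have : -Complex.I / 2 * Complex.I = 1 / 2 := by
      rw [div_mul_eq_mul_div, neg_mul, Complex.I_mul_I, neg_neg]
    rw [this, ← smul_add]
    have : B + Bᴴ + (B - Bᴴ) = (2 : ℂ) • B := by rw [two_smul]; abel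
    rw [this, smul_smul]
    norm_num
  calc Vᴴ * B * V = (1 / 2 : ℂ) • (Vᴴ * (B + Bᴴ) * V) +
        (-Complex.I / 2) • (Vᴴ * (Complex.I • (B - Bᴴ)) * V) := by
        conv_lhs => rw [hB2]
        rw [Matrix.mul_add, Matrix.add_mul, Matrix.mul_smul, Matrix.smul_mul,
          Matrix.mul_smul _ (-Complex.I / 2), Matrix.smul_mul (-Complex.I / 2)]
    _ = _ := by
        rw [h1, h2, ← Matrix.diagonal_smul, ← Matrix.diagonal_smul, Matrix.diagonal_add]
        rfl

end Torus
end DimDatum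

/-! ### Generic integral vectors -/

namespace DimDatum
section Generic
open scoped InnerProductSpace Matrix Matrix.Norms.Operator
open Finset

variable {n : ℕ} {t : Submodule ℝ (Euc n)} {g : Submodule ℂ (Mat n)}

/-- An integral vector, viewed in Euclidean space. -/
noncomputable def ivec (m : Fin n → ℤ) : Euc n := WithLp.toLp 2 fun a => (m a : ℝ)

lemma ivec_apply (m : Fin n → ℤ) (a : Fin n) : ivec m a = m a := rfl

lemma ivec_add_mul (m ν : Fin n → ℤ) (N : ℤ) :
    ivec (fun a => m a + N * ν a) = ivec m + (N : ℝ) • ivec ν := by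
  ext a
  simp [ivec]

/-- A sum of roots is the projection of an integral vector. -/
lemma exists_ivec {A : Finset (Euc n)} (hA : A ⊆ roots g t) :
    ∃ m : Fin n → ℤ, t.starProjection (ivec m) = ∑ α ∈ A, α := by
  classical
  induction A using Finset.induction_on with
  | empty =>
    refine ⟨0, ?_⟩
    have : ivec (0 : Fin n → ℤ) = 0 := by ext a; simp [ivec]
    simp [this]
  | insert α A hα ih =>
    obtain ⟨m, hm⟩ := ih ((Finset.subset_insert _ _).trans hA)
    have h1 : α ∈ diffs t := (mem_filter.1 (hA (mem_insert_self _ _))).1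
    obtain ⟨⟨a, b⟩, -, rfl⟩ := mem_image.1 h1
    refine ⟨fun c => (Pi.single a 1 - Pi.single b 1 : Fin n → ℤ) c + m c, ?_⟩
    have : ivec (fun c => (Pi.single a 1 - Pi.single b 1 : Fin n → ℤ) c + m c) =
        EuclideanSpace.single a 1 - EuclideanSpace.single b 1 + ivec m := by
      ext c
      simp [ivec, Pi.single_apply]
    rw [this, map_add, map_sub, hm, sum_insert hα]
    rfl

/-- The orthogonal complement of a torus is spanned by integral vectors, so it contains an
integral vector on which none of finitely many linear maps vanishes unless it vanishes on the
whole complement. -/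
lemma exists_generic [NeZero n] (hs : Std g t) {K : Type*} [Finite K]
    (L : K → Euc n →ₗ[ℝ] Euc n) :
    ∃ ν : Fin n → ℤ, t.starProjection (ivec ν) = 0 ∧
      ∀ k, L k (ivec ν) = 0 → ∀ x, t.starProjection x = 0 → L k x = 0 := by
  obtain ⟨v, hv⟩ := exists_isTop (roots g t)
  have hreg := hv.regular (isRootSys_roots hs).zero_notMem
  choose q hq using inner_wt_rat hs hreg
  -- the projection of the rational vector `y` to the complement of `t`
  let f : (Fin n → ℚ) → Euc n := fun y => ∑ a, (y a : ℝ) • (EuclideanSpace.single a 1 - wt t a)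
  have fadd : ∀ y z, f (y + z) = f y + f z := fun y z => by
    simp only [f, Pi.add_apply, Rat.cast_add, add_smul, sum_add_distrib]
  have fsmul : ∀ (c : ℚ) y, f (c • y) = (c : ℝ) • f y := fun c y => by
    simp only [f, Pi.smul_apply, smul_eq_mul, Rat.cast_mul, mul_smul, smul_sum]
  have hf0 : ∀ y, t.starProjection (f y) = 0 := fun y => by
    simp only [f, map_sum, map_smul, map_sub]
    refine sum_eq_zero fun a _ => ?_
    rw [Submodule.starProjection_eq_self_iff.2 (wt_mem a), ← wt, sub_self, smul_zero]
  have hfs : ∀ a, f (Pi.single a 1) = EuclideanSpace.single a 1 - wt t a := fun a => by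
    simp only [f]
    rw [sum_eq_single a]
    · simp
    · intro b _ hb; simp [hb]
    · simp
  let p : K → Submodule ℚ (Fin n → ℚ) := fun k =>
    { carrier := {y | L k (f y) = 0}
      add_mem' := fun {a b} ha hb => by
        simp only [Set.mem_ofPred_eq] at *
        rw [fadd, map_add, ha, hb, add_zero]
      zero_mem' := by simp [f]
      smul_mem' := fun c y hy => by
        simp only [Set.mem_ofPred_eq] at *
        rw [fsmul, map_smul, hy, smul_zero] }
  have hmem : ∀ k y, y ∈ p k ↔ L k (f y) = 0 := fun k y => Iff.rfl
  have : ∃ y : Fin n → ℚ, ∀ k, p k ≠ ⊤ → y ∉ p k := by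
    by_contra hcon
    push Not at hcon
    obtain ⟨⟨k, hk⟩, h⟩ := Subspace.exists_eq_top_of_iUnion_eq_univ
      (p := fun k : {k // p k ≠ ⊤} => p k.1) (by
        ext y
        obtain ⟨k, hk, hy⟩ := hcon y
        simp only [Set.mem_iUnion, Set.mem_univ, iff_true]
        exact ⟨⟨k, hk⟩, hy⟩)
    exact hk h
  obtain ⟨y, hy⟩ := this
  have hrat : ∀ b, ∃ r : ℚ, f y b = r := fun b => by
    refine ⟨∑ a, y a * ((if b = a then 1 else 0) - q a b), ?_⟩
    simp only [f]
    rw [WithLp.ofLp_sum, Finset.sum_apply]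
    push_cast
    refine sum_congr rfl fun a _ => ?_
    rw [← hq a b, inner_wt' (wt_mem a)]
    rcases eq_or_ne b a with rfl | h <;> simp [*]
  choose r hr using hrat
  obtain ⟨⟨N, hN⟩, hNr⟩ := IsLocalization.exist_integer_multiples_of_finite (nonZeroDivisors ℤ) r
  choose ν hν using hNr
  have hN0 : (N : ℝ) ≠ 0 := by exact_mod_cast nonZeroDivisors.ne_zero hN
  have hνy : ivec ν = (N : ℝ) • f y := by
    ext a
    have h1 : (ν a : ℚ) = N * r a := by
      have := hν a
      simpa using this
    rw [ivec_apply]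
    simp only [PiLp.smul_apply, smul_eq_mul, hr]
    exact_mod_cast h1
  refine ⟨ν, by rw [hνy, map_smul, hf0, smul_zero], fun k hk x hx => ?_⟩
  rw [hνy, map_smul] at hk
  have hk' : L k (f y) = 0 := (smul_eq_zero.1 hk).resolve_left hN0
  have htop : p k = ⊤ := by
    by_contra h
    exact hy k h hk'
  have hx' : x = ∑ a, x a • (EuclideanSpace.single a (1 : ℝ) - wt t a) := by
    simp only [smul_sub, sum_sub_distrib, sum_wt, hx, sub_zero]
    ext b
    simp [Finset.sum_apply, Pi.single_apply]
  rw [hx', map_sum]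
  refine sum_eq_zero fun a _ => ?_
  have : Pi.single a 1 ∈ p k := by rw [htop]; trivial
  rw [hmem, hfs] at this
  rw [map_smul, this, smul_zero]

/-- A lift `μ` of `v` along the projection to `t`, so generic that its image under each of
finitely many maps either depends on `v` only or avoids a given finite set. -/
lemma exists_generic_lift [NeZero n] (hs : Std g t) {K : Type*} [Finite K]
    (L : K → Euc n →ₗ[ℝ] Euc n) (F : K → Set (Euc n)) (hF : ∀ k, (F k).Finite)
    {A : Finset (Euc n)} (hA : A ⊆ roots g t) :
    ∃ μ : Fin n → ℤ, t.starProjection (ivec μ) = ∑ α ∈ A, α ∧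
      ∀ k, L k (ivec μ) ∈ F k → ∀ x, t.starProjection x = 0 → L k x = 0 := by
  obtain ⟨m, hm⟩ := exists_ivec hA
  obtain ⟨ν, hν, hgen⟩ := exists_generic hs L
  have hfin : (⋃ k, {N : ℤ | L k (ivec ν) ≠ 0 ∧
      L k (ivec m) + (N : ℝ) • L k (ivec ν) ∈ F k}).Finite := by
    refine Set.finite_iUnion fun k => ?_
    by_cases h0 : L k (ivec ν) = 0
    · simp [h0]
    · refine ((hF k).preimage (f := fun N : ℤ => L k (ivec m) + (N : ℝ) • L k (ivec ν)) ?_).subset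
        fun N hN => hN.2
      intro a _ b _ hab
      have := smul_left_injective ℝ h0 (add_left_cancel hab)
      exact_mod_cast this
  obtain ⟨N, hN⟩ := hfin.exists_notMem
  refine ⟨fun a => m a + N * ν a, ?_, fun k hk => hgen k ?_⟩
  · rw [ivec_add_mul, map_add, map_smul, hν, smul_zero, add_zero, hm]
  · by_contra h0
    rw [ivec_add_mul, map_add, map_smul] at hk
    exact hN (Set.mem_iUnion.2 ⟨k, h0, hk⟩)

end Generic
end DimDatum

/-! ### Linear independence -/

namespace DimDatum
section Assembly
open scoped InnerProductSpace Matrix Matrix.Norms.Operator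
open Finset IsRootSys

variable {n : ℕ}

lemma regular_perm {t t' : Submodule ℝ (Euc n)} {g : Submodule ℂ (Mat n)}
    {σ : Equiv.Perm (Fin n)} (h : ∀ x, pm σ x ∈ t' ↔ x ∈ t) {v : Euc n}
    (hv : Regular (roots g t) v) : Regular (roots (cj (pmat σ) g) t') (pm σ v) := by
  intro α hα
  rw [← pm_apply_inv σ α] at hα ⊢
  rw [LinearIsometryEquiv.inner_map_map]
  exact hv _ ((mem_roots_perm h).1 hα)

lemma sum_pos_perm {t t' : Submodule ℝ (Euc n)} {g : Submodule ℂ (Mat n)}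
    {σ : Equiv.Perm (Fin n)} (h : ∀ x, pm σ x ∈ t' ↔ x ∈ t) {v : Euc n}
    (hv : v = ∑ α ∈ pos (roots g t) v, α) :
    pm σ v = ∑ α ∈ pos (roots (cj (pmat σ) g) t') (pm σ v), α := by
  classical
  have : pos (roots (cj (pmat σ) g) t') (pm σ v) = (pos (roots g t) v).image (pm σ) := by
    ext α
    rw [← pm_apply_inv σ α, mem_pos, mem_roots_perm h, LinearIsometryEquiv.inner_map_map,
      ← mem_pos]
    simp
  rw [this, sum_image fun a _ b _ hab => (pm σ).injective hab]
  conv_lhs => rw [hv]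
  rw [map_sum]

/-- If a permutation of coordinates maps the complement of `t` into that of `t'` and `t'` is not
smaller than `t`, it maps `t` onto `t'`. -/
lemma perm_torus {t t' : Submodule ℝ (Euc n)} {σ : Equiv.Perm (Fin n)}
    (h : ∀ x, t.starProjection x = 0 → t'.starProjection (pm σ x) = 0)
    (hd : Module.finrank ℝ t ≤ Module.finrank ℝ t') (x : Euc n) : pm σ x ∈ t' ↔ x ∈ t := by
  have hle : t' ≤ t.map (pm σ).toLinearEquiv.toLinearMap := by
    intro y hy
    refine ⟨pm σ⁻¹ y, ?_, pm_apply_inv σ y⟩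
    rw [← Submodule.orthogonal_orthogonal t, SetLike.mem_coe, Submodule.mem_orthogonal]
    intro u hu
    have h1 := h u ((Submodule.starProjection_apply_eq_zero_iff _).2 hu)
    rw [← inner_pm]
    exact Submodule.inner_left_of_mem_orthogonal hy
      ((Submodule.starProjection_apply_eq_zero_iff _).1 h1)
  have heq : t' = t.map (pm σ).toLinearEquiv.toLinearMap := by
    refine Submodule.eq_of_le_of_finrank_le hle ?_
    rwa [LinearEquiv.finrank_map_eq]
  rw [heq, Submodule.mem_map]
  constructor
  · rintro ⟨y, hy, hyx⟩
    rwa [← (pm σ).injective hyx]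
  · exact fun hx => ⟨x, hx, rfl⟩

variable {s : ℕ} {H : Fin s → Subgroup (Matrix.unitaryGroup (Fin n) ℂ)} {c : Fin s → ℝ}

/-- The theorem for groups in standard position. Among the groups with nonzero coefficient one
looks at those with torus of least dimension, and among these at one, `i`, whose greatest sum of
roots `v i` is longest. Evaluating the averaged relation at a generic integral lift of `v i`
leaves only terms coming from `i`, all of the same sign. -/
theorem Rel.eq_zero [NeZero n] (hc : Rel H c) {g : Fin s → Submodule ℂ (Mat n)}
    {t : Fin s → Submodule ℝ (Euc n)} (hs : ∀ i, Std (g i) (t i)) (hG : ∀ i, Gen (H i) (g i))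
    (hnc : ∀ i j, ∀ U : Mat n, Uᴴ * U = 1 → cj U (g i) = g j → i = j) : ∀ i, c i = 0 := by
  classical
  by_contra hcon
  push Not at hcon
  obtain ⟨i₀, hi₀⟩ := hcon
  have hR : ∀ i, IsRootSys (roots (g i) (t i)) := fun i => isRootSys_roots (hs i)
  choose v hv using fun i => exists_isTop (roots (g i) (t i))
  obtain ⟨i₁, hi₁, hmin⟩ := (univ.filter fun i => c i ≠ 0).exists_min_image
    (fun i => Module.finrank ℝ (t i)) ⟨i₀, by simpa using hi₀⟩
  obtain ⟨i, hi, hmax⟩ := (univ.filter fun i => c i ≠ 0 ∧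
    Module.finrank ℝ (t i) = Module.finrank ℝ (t i₁)).exists_max_image (fun i => ‖v i‖)
    ⟨i₁, by simpa using hi₁⟩
  simp only [mem_filter, mem_univ, true_and] at hmin hi hmax
  obtain ⟨hci, hdi⟩ := hi
  obtain ⟨A, hA, hAv⟩ := (hv i).1
  obtain ⟨μ, hμ, hgen⟩ := exists_generic_lift (hs i) (K := Fin s × Equiv.Perm (Fin n))
    (fun k => (t k.1).starProjection.toLinearMap ∘ₗ (pm k.2).toLinearEquiv.toLinearMap)
    (fun k => {y | dcoef (roots (g k.1) (t k.1)) (-y) ≠ 0})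
    (fun k => (finite_dcoef _).preimage neg_injective.injOn) hA
  rw [hAv] at hμ
  have hgen' : ∀ j σ, dcoef (roots (g j) (t j)) (-(t j).starProjection (pm σ (ivec μ))) ≠ 0 →
      ∀ x, (t i).starProjection x = 0 → (t j).starProjection (pm σ x) = 0 :=
    fun j σ h => hgen (j, σ) h
  have hsum := hc.sum_perm hs hG μ
  change ∑ σ : Equiv.Perm (Fin n), ∑ i, c i / (dcoef (roots (g i) (t i)) 0 : ℝ) *
    (dcoef (roots (g i) (t i)) (-(t i).starProjection (pm σ (ivec μ))) : ℝ) = 0 at hsum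
  have hvneg : IsTop (roots (g i) (t i)) (-v i) := (hv i).neg (hR i)
  set ε : ℤ := (-1) ^ ((roots (g i) (t i)).card / 2) with hε
  have hεε : (ε : ℝ) * ε = 1 := by
    rw [hε]; push_cast; rw [← mul_pow]; norm_num
  have htop : ∀ x, IsTop (roots (g i) (t i)) x → dcoef (roots (g i) (t i)) x = ε := by
    intro x hx
    rw [hx.dcoef_eq (hR i).zero_notMem, hε]
    have := (hR i).two_card_pos (hx.regular (hR i).zero_notMem)
    congr 1
    omega
  -- a nonvanishing term comes from `i` and has the sign `ε`
  have key : ∀ j σ, c j ≠ 0 →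
      dcoef (roots (g j) (t j)) (-(t j).starProjection (pm σ (ivec μ))) ≠ 0 →
      j = i ∧ dcoef (roots (g j) (t j)) (-(t j).starProjection (pm σ (ivec μ))) = ε := by
    intro j σ hcj hne
    have h1 := hgen' j σ hne
    have hdj : Module.finrank ℝ (t i) ≤ Module.finrank ℝ (t j) := hdi ▸ hmin j hcj
    have h2 := perm_torus h1 hdj
    have hfr : Module.finrank ℝ (t j) = Module.finrank ℝ (t i) := by
      have : t j = (t i).map (pm σ).toLinearEquiv.toLinearMap := by
        ext y
        rw [Submodule.mem_map]
        constructor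
        · intro hy
          exact ⟨pm σ⁻¹ y, (h2 _).1 (by rwa [pm_apply_inv]), pm_apply_inv σ y⟩
        · rintro ⟨x, hx, rfl⟩
          exact (h2 x).2 hx
      rw [this, LinearEquiv.finrank_map_eq]
    have hvi : v i ∈ t i := hμ ▸ Submodule.starProjection_apply_mem _ _
    have h3 : (t j).starProjection (pm σ (ivec μ)) = pm σ (v i) := by
      have : (t i).starProjection (ivec μ - v i) = 0 := by
        rw [map_sub, hμ, Submodule.starProjection_eq_self_iff.2 hvi, sub_self]
      have := h1 _ this
      rw [map_sub, map_sub, sub_eq_zero] at this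
      rw [this, Submodule.starProjection_eq_self_iff.2 ((h2 _).2 hvi)]
    rw [h3, ← map_neg] at hne ⊢
    have h4 : IsTop (roots (g j) (t j)) (pm σ (-v i)) := by
      refine ⟨exists_of_dcoef_ne_zero hne, fun B hB => ?_⟩
      rw [LinearIsometryEquiv.norm_map, norm_neg]
      exact ((hv j).2 B hB).trans (hmax j ⟨hcj, hfr.trans hdi⟩)
    have hz := (hR i).zero_notMem
    have hzj := (hR j).zero_notMem
    obtain ⟨U, hU, hUg⟩ := conj_of_sum_eq ((hs i).perm h2) (hs j)
      (regular_perm h2 (hvneg.regular hz)) (sum_pos_perm h2 (hvneg.eq_sum hz))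
      (h4.regular hzj) (h4.eq_sum hzj)
    rw [cj_cj] at hUg
    have hij := hnc i j _ (unitary_mul (pmat_unitary σ) hU) hUg
    subst hij
    exact ⟨rfl, htop _ h4⟩
  have hD : (0 : ℝ) < dcoef (roots (g i) (t i)) 0 := by exact_mod_cast dcoef_zero_pos (hR i)
  have hcc : 0 < c i / (dcoef (roots (g i) (t i)) 0 : ℝ) * ε * (c i * ε) := by
    have : c i / (dcoef (roots (g i) (t i)) 0 : ℝ) * ε * (c i * ε) =
        c i ^ 2 / (dcoef (roots (g i) (t i)) 0 : ℝ) * (ε * ε) := by ring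
    rw [this, hεε, mul_one]
    positivity
  have hterm : ∀ σ j, 0 ≤ c j / (dcoef (roots (g j) (t j)) 0 : ℝ) *
      (dcoef (roots (g j) (t j)) (-(t j).starProjection (pm σ (ivec μ))) : ℝ) * (c i * ε) := by
    intro σ j
    by_cases hcj : c j = 0
    · simp [hcj]
    by_cases hne : dcoef (roots (g j) (t j)) (-(t j).starProjection (pm σ (ivec μ))) = 0
    · simp [hne]
    obtain ⟨rfl, h⟩ := key j σ hcj hne
    rw [h]
    exact hcc.le
  have hone : 0 < c i / (dcoef (roots (g i) (t i)) 0 : ℝ) *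
      (dcoef (roots (g i) (t i)) (-(t i).starProjection (pm 1 (ivec μ))) : ℝ) * (c i * ε) := by
    have h1 : pm 1 (ivec μ) = ivec μ := by rw [pm_one]; rfl
    rw [h1, hμ, htop _ hvneg]
    exact hcc
  have hpos : 0 < ∑ σ : Equiv.Perm (Fin n), ∑ j, c j / (dcoef (roots (g j) (t j)) 0 : ℝ) *
      (dcoef (roots (g j) (t j)) (-(t j).starProjection (pm σ (ivec μ))) : ℝ) * (c i * ε) :=
    sum_pos' (fun σ _ => sum_nonneg fun j _ => hterm σ j)
      ⟨1, mem_univ _, sum_pos' (fun j _ => hterm 1 j) ⟨i, mem_univ _, hone⟩⟩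
  simp only [← Finset.sum_mul] at hpos
  rw [hsum, zero_mul] at hpos
  exact lt_irrefl _ hpos

/-- Dimension data only depend on the subgroups up to conjugacy. -/
lemma Rel.conj (hc : Rel H c) (u : Fin s → Matrix.unitaryGroup (Fin n) ℂ) :
    Rel (fun i => (H i).map (MulAut.conj (u i)).toMonoidHom) c := by
  intro m ρ hρ
  rw [← hc m ρ hρ]
  refine sum_congr rfl fun i _ => ?_
  congr 2
  let e : (Fin m → ℂ) ≃ₗ[ℂ] (Fin m → ℂ) :=
    LinearEquiv.ofLinearMap (Matrix.mulVecLin (ρ (u i) : Matrix (Fin m) (Fin m) ℂ))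
      (Matrix.mulVecLin (ρ (u i)⁻¹ : Matrix (Fin m) (Fin m) ℂ))
      (by
        rw [← Matrix.mulVecLin_mul, ← Units.val_mul, ← map_mul, mul_inv_cancel, map_one,
          Units.val_one, Matrix.mulVecLin_one])
      (by
        rw [← Matrix.mulVecLin_mul, ← Units.val_mul, ← map_mul, inv_mul_cancel, map_one,
          Units.val_one, Matrix.mulVecLin_one])
  have he : ∀ x, e x = (ρ (u i) : Matrix (Fin m) (Fin m) ℂ) *ᵥ x := fun x => rfl
  have : invariantSubspace ((H i).map (MulAut.conj (u i)).toMonoidHom) ρ =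
      (invariantSubspace (H i) ρ).map e.toLinearMap := by
    ext x
    obtain ⟨y, rfl⟩ := e.surjective x
    have h1 : e y ∈ (invariantSubspace (H i) ρ).map e.toLinearMap ↔
        y ∈ invariantSubspace (H i) ρ :=
      ⟨fun ⟨z, hz, h⟩ => e.injective h ▸ hz, fun h => ⟨y, h, rfl⟩⟩
    rw [h1]
    have h2 : ∀ h, (ρ (u i * h * (u i)⁻¹) : Matrix (Fin m) (Fin m) ℂ) *ᵥ e y =
        e ((ρ h : Matrix (Fin m) (Fin m) ℂ) *ᵥ y) := fun h => by
      rw [he, he, Matrix.mulVec_mulVec, Matrix.mulVec_mulVec, ← Units.val_mul, ← Units.val_mul,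
        ← map_mul, ← map_mul, inv_mul_cancel_right]
    constructor
    · intro h k hk
      have := h _ ⟨k, hk, rfl⟩
      exact e.injective ((h2 k).symm.trans this)
    · rintro h _ ⟨k, hk, rfl⟩
      exact (h2 k).trans (congrArg e (h k hk))
  rw [this, LinearEquiv.finrank_map_eq]

end Assembly
end DimDatum

/-- Theorem 11.6 of the paper, strengthening a theorem of Larsen and Pink:
pairwise non-conjugate closed connected subgroups of `U(n)` acting irreducibly
on `ℂⁿ` have linearly independent dimension data. -/
theorem dimension_data_linearly_independent_of_irreducible
    (n : ℕ) (hn : 1 ≤ n) (s : ℕ)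
    (H : Fin s → Subgroup (Matrix.unitaryGroup (Fin n) ℂ))
    (hclosed : ∀ i, IsClosed ((H i : Set (Matrix.unitaryGroup (Fin n) ℂ))))
    (hconn : ∀ i, IsConnected ((H i : Set (Matrix.unitaryGroup (Fin n) ℂ))))
    (hirr : ∀ i, ∀ W : Submodule ℂ (Fin n → ℂ),
      (∀ g ∈ H i, ∀ v ∈ W, Matrix.mulVec ((g : Matrix (Fin n) (Fin n) ℂ)) v ∈ W) →
      W = ⊥ ∨ W = ⊤)
    (hnonconj : ∀ i j, i ≠ j → ∀ g : Matrix.unitaryGroup (Fin n) ℂ,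
      Subgroup.map (MulAut.conj g).toMonoidHom (H i) ≠ H j)
    (c : Fin s → ℝ)
    (hc : ∀ (m : ℕ)
      (ρ : Matrix.unitaryGroup (Fin n) ℂ →* Matrix.GeneralLinearGroup (Fin m) ℂ),
      Continuous ρ →
      ∑ i, c i * (Module.finrank ℂ (invariantSubspace (H i) ρ) : ℝ) = 0) :
    ∀ i, c i = 0 := by
  have : NeZero n := ⟨by omega⟩
  have hpre := fun i => DimDatum.lieC_pre (hclosed i) (hconn i) (hirr i)
  choose U t hU hs using fun i => DimDatum.exists_std (hpre i)
  have hrel : DimDatum.Rel H c := hc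
  have hG := fun i => (DimDatum.lieC_gen (hclosed i) (hconn i)).map (hU i)
  refine (hrel.conj fun i => DimDatum.toU (U i) (hU i)).eq_zero hs hG fun i j W hW hWg => ?_
  by_contra hij
  have h1 := (hG i).map hW
  rw [hWg] at h1
  have h2 := h1.unique (hG j)
  rw [Subgroup.map_map] at h2
  refine hnonconj i j hij ((DimDatum.toU (U j) (hU j))⁻¹ *
    (DimDatum.toU W hW * DimDatum.toU (U i) (hU i))) ?_
  have h3 := congrArg
    (Subgroup.map (MulAut.conj (DimDatum.toU (U j) (hU j))⁻¹).toMonoidHom) h2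
  rw [Subgroup.map_map, Subgroup.map_map] at h3
  have h4 : ∀ a b : Matrix.unitaryGroup (Fin n) ℂ, (MulAut.conj a).toMonoidHom.comp
      (MulAut.conj b).toMonoidHom = (MulAut.conj (a * b)).toMonoidHom := fun a b => by
    ext x; simp [mul_assoc]
  rw [h4, h4, h4, inv_mul_cancel] at h3
  rw [h3, map_one]
  ext x
  simp
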